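/- arXiv:2302.05938 — 3 statements merged into one kernel-verified Lean document; each statement's English description precedes it below -/
import Mathlib

section
/- Under Assumptions (A2)(i) and (A3), let v be the classical solution to ∂_t v = (σ²/2)Δv − (σ²/4)|∇v|² + g − γv with v(0,·) = v₀. Then: (i) ∇²v(t,·) ≥ θ_t I_d, where θ solves the Riccati equation dθ_t/dt = κ̲ − γθ_t − σ²θ_t² with θ₀ = η̲; in particular v(t,·) is strictly convex uniformly in t ≥ 0; and (ii) the Hessian ∇²v(t,·) is bounded uniformly in t > 0. -/
open MeasureTheory Real Filter Set
open scoped RealInnerProductSpace Topology ENNReal NNReal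

noncomputable section

/-- Euclidean space `ℝ^d`. -/
abbrev Euc (d : ℕ) := EuclideanSpace ℝ (Fin d)
/-- `p : ℝ^d → ℝ` is a probability density. -/
def IsDensity {d : ℕ} (p : Euc d → ℝ) : Prop :=
  (∀ x, 0 ≤ p x) ∧ Integrable p ∧ (∫ x, p x) = 1

/-- The density has a finite second moment. -/
def HasSecondMoment {d : ℕ} (p : Euc d → ℝ) : Prop :=
  Integrable fun x => ‖x‖ ^ 2 * p x

/-- The square root `√p` of a density. -/
def sqrtFn {d : ℕ} (p : Euc d → ℝ) : Euc d → ℝ := fun x => Real.sqrt (p x)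

/-- Membership in `P_H`: a probability density with finite second moment whose
square root belongs to `H¹` (differentiable with square-integrable gradient). -/
def MemPH {d : ℕ} (p : Euc d → ℝ) : Prop :=
  IsDensity p ∧ HasSecondMoment p ∧ Differentiable ℝ (sqrtFn p) ∧
    Integrable fun x => ‖gradient (sqrtFn p) x‖ ^ 2

/-- Fisher information `I(p) = ∫ |∇√p|²`. -/
def FisherInfo {d : ℕ} (p : Euc d → ℝ) : ℝ :=
  ∫ x, ‖gradient (sqrtFn p) x‖ ^ 2

/-- Entropy `H(p) = ∫ p log p`. -/
def Entropy {d : ℕ} (p : Euc d → ℝ) : ℝ := ∫ x, p x * Real.log (p x)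

/-- The measure with density `p` w.r.t. Lebesgue measure. -/
def toMeas {d : ℕ} (p : Euc d → ℝ) : Measure (Euc d) :=
  volume.withDensity fun x => ENNReal.ofReal (p x)

/-- `P₂(ℝ^d)`: probability measures with finite second moment. -/
def P2 (d : ℕ) : Set (Measure (Euc d)) :=
  {μ | IsProbabilityMeasure μ ∧ Integrable (fun x => ‖x‖ ^ 2) μ}
/-- Divergence of a vector field. -/
def divg {d : ℕ} (V : Euc d → Euc d) (x : Euc d) : ℝ :=
  ∑ i, ⟪fderiv ℝ V x (EuclideanSpace.single i 1), EuclideanSpace.single i 1⟫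

/-- Laplacian of a scalar function. -/
def lap {d : ℕ} (f : Euc d → ℝ) (x : Euc d) : ℝ := divg (gradient f) x
/-- Classical solution of the HJB equation
`∂ₜ u = (σ²/2) Δu − (σ²/4)|∇u|² + f(t,·) − γ u`, with initial condition `u₀`:
jointly continuous on `[0,∞) × ℝ^d`, of class `C³` in space for positive times
and satisfying the equation pointwise. -/
def IsHJBSolution {d : ℕ} (σ γ : ℝ) (f : ℝ → Euc d → ℝ) (u0 : Euc d → ℝ)
    (u : ℝ → Euc d → ℝ) : Prop :=
  ContinuousOn (fun q : ℝ × Euc d => u q.1 q.2) (Ici 0 ×ˢ univ) ∧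
  (∀ t > (0:ℝ), ContDiff ℝ 3 (u t)) ∧
  (∀ x, u 0 x = u0 x) ∧
  (∀ x : Euc d, ∀ t > (0:ℝ), HasDerivAt (fun s => u s x)
      (σ ^ 2 / 2 * lap (u t) x - σ ^ 2 / 4 * ‖gradient (u t) x‖ ^ 2
        + f t x - γ * u t x) t)

/-- One-variable second order expansion at `0`. -/
def T2 (F : ℝ → ℝ) (a b : ℝ) : Prop :=
  ∃ F' : ℝ → ℝ, (∀ᶠ s in 𝓝 (0:ℝ), HasDerivAt F (F' s) s) ∧ F' 0 = a ∧ HasDerivAt F' b 0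

theorem T2.hasDerivAt {F : ℝ → ℝ} {a b : ℝ} (h : T2 F a b) : HasDerivAt F a 0 := by
  obtain ⟨F', h1, h2, h3⟩ := h
  rw [← h2]; exact h1.self_of_nhds

theorem T2.const (c : ℝ) : T2 (fun _ => c) 0 0 :=
  ⟨fun _ => 0, Eventually.of_forall fun s => hasDerivAt_const s c, rfl, hasDerivAt_const 0 0⟩

theorem T2.add {F G : ℝ → ℝ} {a b a' b' : ℝ} (h : T2 F a b) (h' : T2 G a' b') :
    T2 (fun s => F s + G s) (a + a') (b + b') := by
  obtain ⟨F', h1, h2, h3⟩ := h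
  obtain ⟨G', k1, k2, k3⟩ := h'
  refine ⟨fun s => F' s + G' s, ?_, by simp [h2, k2], h3.add k3⟩
  filter_upwards [h1, k1] with s u w using u.add w

theorem T2.const_mul {F : ℝ → ℝ} {a b : ℝ} (c : ℝ) (h : T2 F a b) :
    T2 (fun s => c * F s) (c * a) (c * b) := by
  obtain ⟨F', h1, h2, h3⟩ := h
  refine ⟨fun s => c * F' s, ?_, by simp [h2], h3.const_mul c⟩
  filter_upwards [h1] with s u using u.const_mul c

theorem T2.sub {F G : ℝ → ℝ} {a b a' b' : ℝ} (h : T2 F a b) (h' : T2 G a' b') :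
    T2 (fun s => F s - G s) (a - a') (b - b') := by
  have := h.add (h'.const_mul (-1))
  convert this using 1
  · funext s; ring
  · ring
  · ring

theorem T2.mul {F G : ℝ → ℝ} {a b a' b' : ℝ} (h : T2 F a b) (h' : T2 G a' b') :
    T2 (fun s => F s * G s) (a * G 0 + F 0 * a') (b * G 0 + 2 * a * a' + F 0 * b') := by
  have hF := h.hasDerivAt
  have hG := h'.hasDerivAt
  obtain ⟨F', h1, h2, h3⟩ := h
  obtain ⟨G', k1, k2, k3⟩ := h'
  refine ⟨fun s => F' s * G s + F s * G' s, ?_, by simp [h2, k2], ?_⟩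
  · filter_upwards [h1, k1] with s u w using u.mul w
  · have := (h3.mul hG).add (hF.mul k3)
    refine HasDerivAt.congr_deriv this ?_
    rw [h2, k2]; ring

theorem T2.inv {F : ℝ → ℝ} {a b : ℝ} (h : T2 F a b) (h0 : F 0 ≠ 0) :
    T2 (fun s => (F s)⁻¹) (-a * (F 0)⁻¹ ^ 2) (-b * (F 0)⁻¹ ^ 2 + 2 * a ^ 2 * (F 0)⁻¹ ^ 3) := by
  have hF := h.hasDerivAt
  obtain ⟨F', h1, h2, h3⟩ := h
  have hne : ∀ᶠ s in 𝓝 (0:ℝ), F s ≠ 0 := hF.continuousAt.eventually_ne h0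
  refine ⟨fun s => -F' s / (F s) ^ 2, ?_, ?_, ?_⟩
  · filter_upwards [h1, hne] with s u w using u.inv w
  · simp only [h2]; field_simp
  · have := (h3.neg).div (hF.pow 2) (pow_ne_zero 2 h0)
    refine HasDerivAt.congr_deriv this ?_
    simp only [h2, Pi.neg_apply, Pi.pow_apply]
    field_simp
    ring

theorem T2.scale {F : ℝ → ℝ} {a b : ℝ} (c : ℝ) (h : T2 F a b) :
    T2 (fun s => F (c * s)) (c * a) (c ^ 2 * b) := by
  obtain ⟨F', h1, h2, h3⟩ := h
  have hc : Tendsto (fun s : ℝ => c * s) (𝓝 0) (𝓝 0) := by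
    have : Continuous (fun s : ℝ => c * s) := by fun_prop
    simpa using this.tendsto 0
  have hd : ∀ s : ℝ, HasDerivAt (fun s : ℝ => c * s) c s := fun s => by
    simpa using (hasDerivAt_id s).const_mul c
  refine ⟨fun s => c * F' (c * s), ?_, by simp [h2], ?_⟩
  · filter_upwards [hc.eventually h1] with s u
    have := u.comp s (hd s)
    rw [mul_comm] ; exact this
  · have h3' : HasDerivAt F' b (c * 0) := by simpa using h3
    have := (h3'.comp (0:ℝ) (hd 0)).const_mul c
    refine HasDerivAt.congr_deriv this ?_
    ring

theorem T2.quad (a0 a1 a2 : ℝ) : T2 (fun s => a0 + a1 * s + a2 * s ^ 2) a1 (2 * a2) := by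
  refine ⟨fun s => a1 + 2 * a2 * s, Eventually.of_forall fun s => ?_, by simp, ?_⟩
  · have := (((hasDerivAt_id s).const_mul a1).const_add a0).add (((hasDerivAt_id s).pow 2).const_mul a2)
    refine HasDerivAt.congr_deriv this ?_
    simp; ring
  · simpa using ((hasDerivAt_id (0:ℝ)).const_mul (2 * a2)).const_add a1

theorem T2.localMax {F : ℝ → ℝ} {a b : ℝ} (h : T2 F a b) (hm : ∀ᶠ s in 𝓝 (0:ℝ), F s ≤ F 0) :
    a = 0 ∧ b ≤ 0 := by
  have hF := h.hasDerivAt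
  have hm' : IsLocalMax F 0 := hm
  have ha : a = 0 := hm'.hasDerivAt_eq_zero hF
  refine ⟨ha, ?_⟩
  by_contra hb
  push Not at hb
  obtain ⟨F', h1, h2, h3⟩ := h
  have hpos : ∀ᶠ s in 𝓝[>] (0:ℝ), 0 < F' s := by
    have h4 := h3.tendsto_slope_zero_right
    have h5 := h4.eventually (lt_mem_nhds hb)
    filter_upwards [h5, self_mem_nhdsWithin] with s hs hs0
    simp only [zero_add, h2, ha, sub_zero, smul_eq_mul] at hs
    have : (0:ℝ) < s := hs0
    have h6 := mul_pos this hs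
    rwa [mul_inv_cancel_left₀ this.ne'] at h6
  have hall : ∀ᶠ s in 𝓝[>] (0:ℝ), 0 < F' s ∧ HasDerivAt F (F' s) s ∧ F s ≤ F 0 := by
    filter_upwards [hpos, nhdsWithin_le_nhds h1, nhdsWithin_le_nhds hm] with s a b c using ⟨a, b, c⟩
  obtain ⟨u, hu0, hu⟩ := mem_nhdsGT_iff_exists_Ioo_subset.1 hall
  have hu0' : (0:ℝ) < u := hu0
  have hcont : ContinuousOn F (Icc 0 (u/2)) := by
    intro s hs
    rcases eq_or_lt_of_le hs.1 with h0 | h0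
    · rw [← h0]; exact hF.continuousAt.continuousWithinAt
    · exact (hu ⟨h0, by linarith [hs.2]⟩).2.1.continuousAt.continuousWithinAt
  obtain ⟨c, hc, hc'⟩ := exists_hasDerivAt_eq_slope F F' (by linarith : (0:ℝ) < u/2) hcont
    (fun s hs => (hu ⟨hs.1, by linarith [hs.2]⟩).2.1)
  have hp := (hu ⟨hc.1, by linarith [hc.2]⟩ : 0 < F' c ∧ _).1
  have hle := (hu ⟨by linarith, by linarith⟩ : 0 < F' (u/2) ∧ HasDerivAt F (F' (u/2)) (u/2) ∧ F (u/2) ≤ F 0).2.2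
  rw [hc'] at hp
  have := (div_pos_iff_of_pos_right (by linarith : (0:ℝ) < u/2 - 0)).1 hp
  linarith

theorem left_max_deriv {F : ℝ → ℝ} {a t : ℝ} (h : HasDerivAt F a t)
    (hm : ∀ᶠ s in 𝓝[<] t, F s ≤ F t) : 0 ≤ a := by
  have h1 := (hasDerivAt_iff_tendsto_slope_left_right.1 h).1
  refine ge_of_tendsto h1 ?_
  filter_upwards [hm, self_mem_nhdsWithin] with s hs hs0
  have : s < t := hs0
  rw [slope_def_field]
  exact div_nonneg_of_nonpos (by linarith) (by linarith)

theorem max_exists {E : Type*} [TopologicalSpace E] (Φ : E → ℝ) (S K : Set E) (z1 : E)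
    (hz : z1 ∈ S) (hK : IsCompact K) (hc : ContinuousOn Φ K)
    (hin : ∀ z ∈ S, Φ z1 ≤ Φ z → z ∈ K) :
    ∃ z ∈ K, Φ z1 ≤ Φ z ∧ ∀ z' ∈ S, Φ z' ≤ Φ z := by
  have hz1 : z1 ∈ K := hin z1 hz le_rfl
  obtain ⟨z, hzK, hmax⟩ := hK.exists_isMaxOn ⟨z1, hz1⟩ hc
  refine ⟨z, hzK, hmax hz1, fun z' hz' => ?_⟩
  by_cases h : Φ z1 ≤ Φ z'
  · exact hmax (hin z' hz' h)
  · push Not at h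
    exact h.le.trans (hmax hz1)

/-- coordinate vector -/
abbrev ei {d : ℕ} (i : Fin d) : Euc d := EuclideanSpace.single i (1:ℝ)

theorem norm_line {d : ℕ} (x : Euc d) (i : Fin d) (s : ℝ) :
    ‖x + s • ei i‖ ^ 2 = ‖x‖ ^ 2 + (2 * x i) * s + 1 * s ^ 2 := by
  rw [norm_add_sq_real, norm_smul, inner_smul_right, EuclideanSpace.inner_single_right]
  simp
  ring

theorem T2.normSq {d : ℕ} (x : Euc d) (i : Fin d) :
    T2 (fun s => ‖x + s • ei i‖ ^ 2) (2 * x i) 2 := by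
  have := T2.quad (‖x‖^2) (2 * x i) 1
  simp only [← norm_line] at this
  simpa using this

theorem sum_sq_coord {d : ℕ} (x : Euc d) : ∑ i, (x i) ^ 2 = ‖x‖ ^ 2 := by
  rw [EuclideanSpace.norm_sq_eq]; simp

theorem sum_mul_coord {d : ℕ} (x y : Euc d) : ∑ i, x i * y i = ⟪x, y⟫ := by
  simp [PiLp.inner_apply, mul_comm]

/-- The abstract notion of solution used throughout. -/
structure Sol {d : ℕ} (ν : ℝ) (k : ℝ → ℝ) (f : ℝ → Euc d → ℝ) (W : ℝ → Euc d → ℝ) : Prop where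
  cont : ContinuousOn (fun q : ℝ × Euc d => W q.1 q.2) (Ici 0 ×ˢ univ)
  eq : ∀ t > (0:ℝ), ∀ x, ∃ p h : Fin d → ℝ,
    (∀ i, T2 (fun s => W t (x + s • ei i)) (p i) (h i)) ∧
    HasDerivAt (fun s => W s x) (ν * ∑ i, h i - k t * ∑ i, (p i) ^ 2 + f t x) t

theorem T2.congr {F G : ℝ → ℝ} {a b a' b' : ℝ} (h : T2 F a b) (hF : ∀ s, G s = F s)
    (ha : a' = a) (hb : b' = b) : T2 G a' b' := by
  obtain rfl : G = F := funext hF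
  subst ha hb
  exact h

theorem T2.lin {d : ℕ} (P y : Euc d) (i : Fin d) :
    T2 (fun s => ⟪P, y + s • ei i⟫) (P i) 0 := by
  refine (T2.quad ⟪P, y⟫ (P i) 0).congr (fun s => ?_) rfl (by ring)
  rw [inner_add_right, inner_smul_right, EuclideanSpace.inner_single_right]
  simp; ring

theorem T2.invBall {d : ℕ} (c : ℝ) (y : Euc d) (i : Fin d) (h : 1 - c * ‖y‖ ^ 2 ≠ 0) :
    T2 (fun s => (1 - c * ‖y + s • ei i‖ ^ 2)⁻¹) (2 * c * y i * (1 - c * ‖y‖ ^ 2)⁻¹ ^ 2)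
      (2 * c * (1 - c * ‖y‖ ^ 2)⁻¹ ^ 2 + 8 * c ^ 2 * (y i) ^ 2 * (1 - c * ‖y‖ ^ 2)⁻¹ ^ 3) := by
  have h1 := ((T2.const 1).sub ((T2.normSq y i).const_mul c)).inv (by simpa using h)
  refine h1.congr (fun s => rfl) ?_ ?_
  · simp only [zero_smul, add_zero]; ring
  · simp only [zero_smul, add_zero]; ring

theorem sum_affine {d : ℕ} (A B : ℝ) (y : Euc d) :
    ∑ i, (A + B * (y i) ^ 2) = d * A + B * ‖y‖ ^ 2 := by
  rw [← sum_sq_coord, Finset.sum_add_distrib, Finset.mul_sum]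
  simp

set_option maxHeartbeats 1000000 in
theorem stepA_local {d : ℕ} {ν : ℝ} {k : ℝ → ℝ} {f W : ℝ → Euc d → ℝ} (hS : Sol ν k f W)
    (hν : 0 < ν) {T k1 k2 b K M D : ℝ} (hk1 : 0 < k1)
    (hk : ∀ t, 0 ≤ t → t ≤ T → k1 ≤ k t ∧ k t ≤ k2)
    (x1 P : Euc d) (hb : 0 ≤ b)
    (hf : ∀ t, 0 ≤ t → t ≤ T → ∀ x, ‖x - x1‖ ≤ 1 → f t x ≤ D)
    (hW0 : ∀ x, W 0 x ≤ W 0 x1 + ⟪P, x - x1⟫ + b * ‖x - x1‖ ^ 2)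
    (hM : M = ν * (2 * d + 8) / (2 * k1))
    (hK : ν * (2 * b * d) + 2 * (ν * M * (2 * d + 8)) + k2 * ‖P‖ ^ 2 + D < K) :
    ∀ t, 0 ≤ t → t ≤ T → W t x1 ≤ W 0 x1 + K * t := by
  have hMpos : 0 < M := by rw [hM]; positivity
  have hMe : 2 * k1 * M = ν * (2 * d + 8) := by rw [hM]; field_simp
  -- the comparison function without barrier
  set G : ℝ × Euc d → ℝ := fun z => W z.1 z.2 - (W 0 x1 + ⟪P, z.2 - x1⟫ + b * ‖z.2 - x1‖ ^ 2 + K * z.1 - M) with hG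
  set Φ : ℝ × Euc d → ℝ := fun z => G z - M * (1 - 1 * ‖z.2 - x1‖ ^ 2)⁻¹ with hΦ
  by_contra hcon
  push Not at hcon
  obtain ⟨t1, ht1, ht1T, hlt⟩ := hcon
  have hGc : ContinuousOn G (Icc 0 T ×ˢ univ) := by
    apply ContinuousOn.sub
    · exact hS.cont.mono (prod_mono (fun t ht => ht.1) (subset_univ _))
    · apply Continuous.continuousOn; fun_prop
  have hcomp : IsCompact (Icc 0 T ×ˢ Metric.closedBall x1 1) :=
    isCompact_Icc.prod (isCompact_closedBall x1 1)
  obtain ⟨N0, hN0⟩ := hcomp.bddAbove_image (hGc.mono (prod_mono Subset.rfl (subset_univ _)))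
  obtain ⟨N, hN, hNM, hNpos⟩ : ∃ N, N0 ≤ N ∧ M ≤ N ∧ 0 < N :=
    ⟨max N0 M, le_max_left _ _, le_max_right _ _, lt_of_lt_of_le hMpos (le_max_right _ _)⟩
  have hGN : ∀ t, 0 ≤ t → t ≤ T → ∀ x, ‖x - x1‖ ≤ 1 → G (t, x) ≤ N := by
    intro t h0 h1 x hx
    refine le_trans (hN0 ⟨(t, x), ⟨⟨h0, h1⟩, ?_⟩, rfl⟩) hN
    simpa [dist_eq_norm] using hx
  have hz1 : 0 < Φ (t1, x1) := by
    simp only [hΦ, hG]; simp; linarith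
  obtain ⟨z, hzK, hz2, hmax⟩ := max_exists Φ {z | (0 ≤ z.1 ∧ z.1 ≤ T) ∧ ‖z.2 - x1‖ ^ 2 < 1}
    {z | (0 ≤ z.1 ∧ z.1 ≤ T) ∧ ‖z.2 - x1‖ ^ 2 ≤ 1 - M / N} (t1, x1) (by simp [ht1, ht1T])
    (by
      apply hcomp.of_isClosed_subset
      · apply IsClosed.inter
        · exact (isClosed_le continuous_const continuous_fst).inter (isClosed_le continuous_fst continuous_const)
        · exact isClosed_le (f := fun z : ℝ × Euc d => ‖z.2 - x1‖ ^ 2) (by fun_prop) continuous_const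
      · rintro z ⟨h1, h2⟩
        refine ⟨h1, ?_⟩
        simp only [Metric.mem_closedBall, dist_eq_norm]
        have : 0 < M / N := by positivity
        have := norm_nonneg (z.2 - x1)
        nlinarith)
    (by
      have h1 : ∀ z ∈ {z : ℝ × Euc d | (0 ≤ z.1 ∧ z.1 ≤ T) ∧ ‖z.2 - x1‖ ^ 2 ≤ 1 - M / N}, 1 - 1 * ‖z.2 - x1‖ ^ 2 ≠ 0 := by
        rintro z ⟨h1, h2⟩
        have : 0 < M / N := by positivity
        apply ne_of_gt; linarith
      apply ContinuousOn.sub (hGc.mono (fun z hz => ⟨hz.1, mem_univ _⟩))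
      apply ContinuousOn.mul continuousOn_const
      apply ContinuousOn.inv₀ _ h1
      apply Continuous.continuousOn; fun_prop)
    (by
      rintro ⟨t, x⟩ ⟨⟨h0, h1⟩, h2⟩ h3
      refine ⟨⟨h0, h1⟩, ?_⟩
      have h4 := hGN t h0 h1 x (by simp only at h2; nlinarith [norm_nonneg (x - x1)])
      have h5 : M * (1 - 1 * ‖x - x1‖ ^ 2)⁻¹ ≤ N := by
        have : Φ (t, x) = G (t, x) - M * (1 - 1 * ‖x - x1‖ ^ 2)⁻¹ := rfl
        linarith
      simp only at h2 ⊢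
      have h6 : 0 < 1 - 1 * ‖x - x1‖ ^ 2 := by linarith
      rw [mul_inv_le_iff₀ h6] at h5
      have : M / N ≤ 1 - 1 * ‖x - x1‖ ^ 2 := by rw [div_le_iff₀ hNpos]; linarith
      linarith)
  obtain ⟨t, x⟩ := z
  obtain ⟨⟨h0, h1⟩, h2⟩ := hzK
  simp only at h0 h1 h2
  have hMN : 0 < M / N := by positivity
  have hr1 : ‖x - x1‖ ^ 2 < 1 := by linarith
  have hΦpos : 0 < Φ (t, x) := by linarith
  set s := (1 - 1 * ‖x - x1‖ ^ 2)⁻¹ with hs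
  have hs0 : 0 < 1 - 1 * ‖x - x1‖ ^ 2 := by linarith
  have hs1 : 1 ≤ s := by
    rw [hs]; apply (one_le_inv₀ hs0).2; nlinarith [sq_nonneg ‖x - x1‖]
  have hsr : s * (1 - ‖x - x1‖ ^ 2) = 1 := by
    have := inv_mul_cancel₀ hs0.ne'
    rw [← hs] at this
    linarith
  have hΦe : Φ (t, x) = W t x - (W 0 x1 + ⟪P, x - x1⟫ + b * ‖x - x1‖ ^ 2 + K * t - M) - M * s := rfl
  have htpos : 0 < t := by
    rcases eq_or_lt_of_le h0 with h | h
    · exfalso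
      subst h
      have := hW0 x
      nlinarith
    · exact h
  obtain ⟨p, h, hT2, hdt⟩ := hS.eq t htpos x
  have hspace : ∀ i, p i = P i + 2 * (b + M * s ^ 2) * (x - x1) i ∧
      h i ≤ 2 * b + M * (2 * s ^ 2 + 8 * (x - x1) i ^ 2 * s ^ 3) := by
    intro i
    have hT := (((hT2 i).sub (T2.lin P (x - x1) i)).sub ((T2.normSq (x - x1) i).const_mul b)).sub
      ((T2.invBall 1 (x - x1) i hs0.ne').const_mul M)
    have := hT.localMax (by
      have hc : Continuous fun s : ℝ => ‖x - x1 + s • ei i‖ ^ 2 := by fun_prop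
      have : ∀ᶠ s in 𝓝 (0:ℝ), ‖x - x1 + s • ei i‖ ^ 2 < 1 := by
        apply hc.continuousAt.eventually_lt continuousAt_const; simpa using hr1
      filter_upwards [this] with u hu
      have e : x + u • ei i - x1 = x - x1 + u • ei i := by abel
      have := hmax (t, x + u • ei i) ⟨⟨h0, h1⟩, by simpa [e] using hu⟩
      simp only [hΦ, hG, e] at this
      simp only [zero_smul, add_zero]
      linarith)
    rw [← hs] at this
    constructor
    · linarith [this.1]
    · linarith [this.2]
  have htime : K ≤ ν * ∑ i, h i - k t * ∑ i, (p i) ^ 2 + f t x := by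
    have h3 : HasDerivAt (fun s => W s x - K * s) (ν * ∑ i, h i - k t * ∑ i, (p i) ^ 2 + f t x - K * 1) t :=
      hdt.sub ((hasDerivAt_id t).const_mul K)
    have := left_max_deriv h3 (by
      have : ∀ᶠ u in 𝓝[<] t, 0 < u := nhdsWithin_le_nhds (lt_mem_nhds htpos)
      filter_upwards [this, self_mem_nhdsWithin] with u hu hut
      have hut' : u < t := hut
      have := hmax (u, x) ⟨⟨hu.le, by linarith⟩, hr1⟩
      simp only [hΦ, hG] at this
      linarith)
    linarith
  have hsumh : ∑ i, h i ≤ 2 * b * d + M * (2 * d * s ^ 2 + 8 * ‖x - x1‖ ^ 2 * s ^ 3) := by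
    calc ∑ i, h i ≤ ∑ i, (2 * b + M * (2 * s ^ 2 + 8 * (x - x1) i ^ 2 * s ^ 3)) :=
          Finset.sum_le_sum fun i _ => (hspace i).2
      _ = ∑ i, ((2 * b + M * (2 * s ^ 2)) + (M * 8 * s ^ 3) * (x - x1) i ^ 2) :=
          Finset.sum_congr rfl fun i _ => by ring
      _ = _ := by rw [sum_affine]; ring
  have hsump : 2 * M ^ 2 * s ^ 4 * ‖x - x1‖ ^ 2 - ‖P‖ ^ 2 ≤ ∑ i, (p i) ^ 2 := by
    rw [← sum_sq_coord, ← sum_sq_coord, Finset.mul_sum, ← Finset.sum_sub_distrib]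
    apply Finset.sum_le_sum
    intro i _
    rw [(hspace i).1]
    have h4 : M * s ^ 2 ≤ b + M * s ^ 2 := by linarith
    have h5 : (M * s ^ 2) ^ 2 ≤ (b + M * s ^ 2) ^ 2 := pow_le_pow_left₀ (by positivity) h4 2
    have h6 := mul_le_mul_of_nonneg_right h5 (sq_nonneg ((x - x1) i))
    have h7 : ∀ a z : ℝ, z ^ 2 / 2 - a ^ 2 ≤ (a + z) ^ 2 := fun a z => by
      nlinarith [sq_nonneg (2 * a + z)]
    refine le_trans ?_ (h7 _ _)
    have e1 : (2 * (b + M * s ^ 2) * (x - x1) i) ^ 2 / 2 = 2 * ((b + M * s ^ 2) ^ 2 * (x - x1) i ^ 2) := by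
      ring
    rw [e1]
    linarith
  have hkt := hk t h0 h1
  have hft := hf t h0 h1 x (by nlinarith [norm_nonneg (x - x1)])
  have hrs : s ^ 4 * ‖x - x1‖ ^ 2 = s ^ 4 - s ^ 3 := by
    have : s ^ 4 * ‖x - x1‖ ^ 2 = s ^ 4 - s ^ 3 * (s * (1 - ‖x - x1‖ ^ 2)) := by ring
    rw [this, hsr, mul_one]
  have hX : 0 ≤ s ^ 4 - s ^ 3 := by rw [← hrs]; positivity
  have hp2 : k1 * (2 * M ^ 2 * (s ^ 4 - s ^ 3)) - k2 * ‖P‖ ^ 2 ≤ k t * ∑ i, (p i) ^ 2 := by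
    have hkp : 0 ≤ k t := by linarith
    have h5 := mul_le_mul_of_nonneg_left hsump hkp
    have h6 : 2 * M ^ 2 * s ^ 4 * ‖x - x1‖ ^ 2 = 2 * M ^ 2 * (s ^ 4 - s ^ 3) := by rw [← hrs]; ring
    rw [h6] at h5
    have h7 := mul_le_mul_of_nonneg_right hkt.1 (show 0 ≤ 2 * M ^ 2 * (s ^ 4 - s ^ 3) by positivity)
    have h8 := mul_le_mul_of_nonneg_right hkt.2 (sq_nonneg ‖P‖)
    linarith
  have hh2 : ∑ i, h i ≤ 2 * b * d + M * ((2 * d + 8) * s ^ 3) := by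
    refine hsumh.trans ?_
    have h5 : 2 * d * s ^ 2 + 8 * ‖x - x1‖ ^ 2 * s ^ 3 ≤ (2 * d + 8) * s ^ 3 := by
      have h7 : s ^ 2 ≤ s ^ 3 := pow_le_pow_right₀ hs1 (by norm_num)
      have h8 : 2 * d * s ^ 2 ≤ 2 * d * s ^ 3 := by gcongr
      have h9 : 8 * ‖x - x1‖ ^ 2 * s ^ 3 ≤ 8 * 1 * s ^ 3 := by gcongr
      linarith
    have := mul_le_mul_of_nonneg_left h5 hMpos.le
    linarith
  have hh3 := mul_le_mul_of_nonneg_left hh2 hν.le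
  have hk3 : k1 * (2 * M ^ 2 * (s ^ 4 - s ^ 3)) = ν * M * (2 * d + 8) * (s ^ 4 - s ^ 3) := by
    have : k1 * (2 * M ^ 2 * (s ^ 4 - s ^ 3)) = (2 * k1 * M) * (M * (s ^ 4 - s ^ 3)) := by ring
    rw [this, hMe]; ring
  have hs4 : s ^ 3 - (s ^ 4 - s ^ 3) ≤ 2 := by nlinarith [sq_nonneg (s ^ 2 - s - 1 / 2), sq_nonneg (s - 1)]
  have := mul_le_mul_of_nonneg_left hs4 (show 0 ≤ ν * M * (2 * d + 8) by positivity)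
  linarith

theorem alg1 {a b : ℝ} (ha : 0 < a) (hb : 0 < b) : ∃ K0 : ℝ, 1 ≤ K0 ∧ ∀ K ≥ K0, ∀ s ≥ (1:ℝ), ∀ Y : ℝ,
    b * K * s ^ 8 + b * K * Y * s ^ 5 + b * Y ^ 2 < a * K ^ 2 * s ^ 8 + a * Y ^ 4 := by
  set c := b ^ 4 / a ^ 3 + b ^ 2 / (2 * a) with hc
  have hcpos : 0 < c := by positivity
  refine ⟨1 + (b + c) * (4 / (3 * a)), by have : 0 < (b + c) * (4 / (3 * a)) := by positivity
                                          linarith, ?_⟩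
  intro K hK s hs Y
  have hK1 : 1 ≤ K := by
    have : 0 < (b + c) * (4 / (3 * a)) := by positivity
    linarith
  have hKa : b + c < 3 * a / 4 * K := by
    have h1 : (b + c) * (4 / (3 * a)) < K := by linarith
    have h2 := mul_lt_mul_of_pos_left h1 (show 0 < 3 * a / 4 by positivity)
    have h3 : 3 * a / 4 * ((b + c) * (4 / (3 * a))) = b + c := by field_simp
    linarith
  have hs8 : 1 ≤ s ^ 8 := one_le_pow₀ hs
  have hs48 : s ^ 4 ≤ s ^ 8 := pow_le_pow_right₀ hs (by norm_num)
  have i1 : b * K * Y * s ^ 5 ≤ a / 4 * K ^ 2 * s ^ 8 + b ^ 2 / a * Y ^ 2 * s ^ 2 := by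
    have h : 0 ≤ a / 4 * (K * s ^ 4 - 2 * b / a * Y * s) ^ 2 := by positivity
    have e : a / 4 * (K * s ^ 4 - 2 * b / a * Y * s) ^ 2
        = a / 4 * K ^ 2 * s ^ 8 + b ^ 2 / a * Y ^ 2 * s ^ 2 - b * K * Y * s ^ 5 := by
      field_simp; ring
    linarith
  have i2 : b ^ 2 / a * Y ^ 2 * s ^ 2 ≤ a / 4 * Y ^ 4 + b ^ 4 / a ^ 3 * s ^ 4 := by
    have h : 0 ≤ a / 4 * (Y ^ 2 - 2 * b ^ 2 / a ^ 2 * s ^ 2) ^ 2 := by positivity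
    have e : a / 4 * (Y ^ 2 - 2 * b ^ 2 / a ^ 2 * s ^ 2) ^ 2
        = a / 4 * Y ^ 4 + b ^ 4 / a ^ 3 * s ^ 4 - b ^ 2 / a * Y ^ 2 * s ^ 2 := by
      field_simp; ring
    linarith
  have i3 : b * Y ^ 2 ≤ a / 2 * Y ^ 4 + b ^ 2 / (2 * a) := by
    have h : 0 ≤ a / 2 * (Y ^ 2 - b / a) ^ 2 := by positivity
    have e : a / 2 * (Y ^ 2 - b / a) ^ 2 = a / 2 * Y ^ 4 + b ^ 2 / (2 * a) - b * Y ^ 2 := by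
      field_simp; ring
    linarith
  have i4 : b ^ 4 / a ^ 3 * s ^ 4 ≤ b ^ 4 / a ^ 3 * s ^ 8 := by gcongr
  have i5 : b ^ 2 / (2 * a) ≤ b ^ 2 / (2 * a) * s ^ 8 := le_mul_of_one_le_right (by positivity) hs8
  have i6 : (b * K + c) * s ^ 8 < 3 * a / 4 * K ^ 2 * s ^ 8 := by
    apply mul_lt_mul_of_pos_right _ (by linarith)
    have h1 := mul_lt_mul_of_pos_left hKa (show 0 < K by linarith)
    have h2 : c ≤ c * K := le_mul_of_one_le_right hcpos.le hK1
    nlinarith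
  have hY : 0 ≤ a / 4 * Y ^ 4 := by positivity
  have i7 : c * s ^ 8 = b ^ 4 / a ^ 3 * s ^ 8 + b ^ 2 / (2 * a) * s ^ 8 := by rw [hc]; ring
  linarith

set_option maxHeartbeats 1000000 in
theorem stepB_alg {ν A k1 k2 Lk Cf c2 n K R s Y τ D D' F1 F2 P2 kx ky e0 a b a0 : ℝ}
    (hν : 0 < ν) (hk1 : 0 < k1) (hA : A * k1 = 1) (hCf : 0 ≤ Cf) (hc2 : 0 ≤ c2)
    (hn : 0 ≤ n) (hR : 1 ≤ R) (hs : 1 ≤ s) (hY : 0 ≤ Y) (hτ : 0 < τ)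
    (h2 : 0 ≤ (ν * D - kx * P2 + F1) - (ν * D' - ky * Y ^ 2 + F2))
    (h3 : 0 ≤ ν * D - kx * P2 + F1 + k1 * Y ^ 2 / 4 - K * s ^ 4)
    (hP2 : 0 ≤ P2)
    (h4a : Y ^ 2 / 2 - 64 * τ ^ 2 * K ^ 2 * s ^ 10 ≤ P2)
    (h4b : Y ^ 2 - 16 * τ * K * s ^ 5 * Y ≤ P2)
    (h5 : ∀ l ≥ 0, (1 + l) ^ 2 * D - D' ≤ 2 * A * n * l ^ 2 / τ + τ * K * (1 + l) ^ 2 * (c2 * s ^ 6))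
    (hF1 : F1 ≤ Cf * R ^ 2) (hF2 : F1 - F2 ≤ Cf * (τ * R ^ 2 + R * (τ * Y * k1 / 2)))
    (hkxy : ky - kx ≤ Lk * τ) (hkx1 : k1 ≤ kx) (hkx2 : kx ≤ k2)
    (hE : τ ^ 2 * s ^ 6 ≤ e0) (he1 : 256 * k1 * K * e0 ≤ 1) (he2 : 4 * K * c2 * e0 ≤ A * (n + 1))
    (hK1 : 4 * Cf * R ^ 2 ≤ K) (hK2 : R ^ 2 ≤ K)
    (ha : a = 3 * a0 / (8 * ν * A * (n + 1))) (ha0 : 0 < a0) (ha1 : a0 ≤ 1 / 4) (ha2 : a0 ≤ k1 ^ 2 / 16)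
    (hb1 : 2 * ν * c2 + Cf ≤ b) (hb2 : 16 * k2 + Cf * k1 / 2 ≤ b) (hb3 : Lk ≤ b)
    (hab : b * K * s ^ 8 + b * K * Y * s ^ 5 + b * Y ^ 2 < a * K ^ 2 * s ^ 8 + a * Y ^ 4) : False := by
  have hApos : 0 < A := pos_of_mul_pos_left (by rw [hA]; exact one_pos) hk1.le
  have hRR : R ≤ R ^ 2 := le_self_pow₀ hR (by norm_num)
  have hK : 0 < K := by linarith
  have hKR : R ≤ K := by linarith
  have hs4 : 1 ≤ s ^ 4 := one_le_pow₀ hs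
  -- lower bound on D
  set D0 := (K * s ^ 4 / 2 + k1 * Y ^ 2 / 4) / ν with hD0
  have hD0e : ν * D0 = K * s ^ 4 / 2 + k1 * Y ^ 2 / 4 := by rw [hD0]; field_simp
  have hD0pos : 0 < D0 := by rw [hD0]; positivity
  have hD : D0 ≤ D := by
    have j1 : 64 * k1 * τ ^ 2 * K ^ 2 * s ^ 10 ≤ K * s ^ 4 / 4 := by
      have e : 64 * k1 * τ ^ 2 * K ^ 2 * s ^ 10 = (64 * k1 * K ^ 2 * s ^ 4) * (τ ^ 2 * s ^ 6) := by ring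
      have j := mul_le_mul_of_nonneg_left hE (show 0 ≤ 64 * k1 * K ^ 2 * s ^ 4 by positivity)
      have j' := mul_le_mul_of_nonneg_right he1 (show 0 ≤ K * s ^ 4 / 4 by positivity)
      rw [e]; linarith
    have j2 : k1 * (Y ^ 2 / 2) - K * s ^ 4 / 4 ≤ kx * P2 := by
      have j3 := mul_le_mul_of_nonneg_left h4a hk1.le
      have := mul_le_mul_of_nonneg_right hkx1 hP2
      linarith
    have j8 : K ≤ K * s ^ 4 := le_mul_of_one_le_right hK.le hs4
    have j7 : F1 ≤ K * s ^ 4 / 4 := by linarith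
    have : ν * D0 ≤ ν * D := by rw [hD0e]; linarith
    exact le_of_mul_le_mul_left this hν
  set m := A * (n + 1) with hm
  have hmpos : 0 < m := by positivity
  set μ := D0 / (2 * m) with hμ
  have hμ0 : 0 < μ := by positivity
  have hD0μ : D0 = 2 * m * μ := by rw [hμ]; field_simp
  have u1 : D - D' ≤ τ * (-(3 / 2) * m * μ ^ 2 + 2 * K * (c2 * s ^ 6)) := by
    have h := h5 (τ * μ) (by positivity)
    have e1 : 2 * A * n * (τ * μ) ^ 2 / τ = τ * (2 * A * n * μ ^ 2) := by field_simp
    rw [e1] at h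
    have e2 : (1 + τ * μ) ^ 2 ≤ 2 * (1 + τ ^ 2 * μ ^ 2) := by linarith [sq_nonneg (1 - τ * μ)]
    have e3 : τ * K * (1 + τ * μ) ^ 2 * (c2 * s ^ 6) ≤ τ * K * (2 * (1 + τ ^ 2 * μ ^ 2)) * (c2 * s ^ 6) := by
      gcongr
    have e4 : τ * K * (2 * (1 + τ ^ 2 * μ ^ 2)) * (c2 * s ^ 6) = τ * (2 * K * (c2 * s ^ 6)) +
      τ * (2 * K * c2 * μ ^ 2) * (τ ^ 2 * s ^ 6) := by ring
    have e5 : τ * (2 * K * c2 * μ ^ 2) * (τ ^ 2 * s ^ 6) ≤ τ * (2 * K * c2 * μ ^ 2) * e0 := by gcongr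
    have e6 : τ * (2 * K * c2 * μ ^ 2) * e0 ≤ τ * (m * μ ^ 2 / 2) := by
      have := mul_le_mul_of_nonneg_left he2 (show 0 ≤ τ * μ ^ 2 / 2 by positivity)
      linarith
    have e7 : 2 * (τ * μ) * D0 ≤ ((1 + τ * μ) ^ 2 - 1) * D := by
      have h1 : 2 * (τ * μ) ≤ (1 + τ * μ) ^ 2 - 1 := by linarith [sq_nonneg (τ * μ)]
      have h2 : 0 < τ * μ := by positivity
      exact mul_le_mul h1 hD hD0pos.le (by linarith)
    have e8 : τ * (2 * A * n * μ ^ 2) ≤ τ * (2 * m * μ ^ 2) := by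
      rw [hm]
      have : 0 ≤ τ * (2 * A * μ ^ 2) := by positivity
      linarith
    have e9 : 2 * (τ * μ) * D0 = τ * (4 * m * μ ^ 2) := by rw [hD0μ]; ring
    linarith
  have u2 : -(τ * (16 * k2 * K * s ^ 5 * Y + Lk * Y ^ 2 + Cf * R ^ 2 + Cf * k1 / 2 * R * Y)) ≤ ν * (D - D') := by
    have hkx0 : 0 ≤ kx := by linarith
    have w1 := mul_le_mul_of_nonneg_left h4b hkx0
    have w2 := mul_le_mul_of_nonneg_right hkx2 (show 0 ≤ 16 * τ * K * s ^ 5 * Y by positivity)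
    have w3 := mul_le_mul_of_nonneg_right hkxy (sq_nonneg Y)
    linarith
  have u3 : a * K ^ 2 * s ^ 8 + a * Y ^ 4 ≤ ν * (3 / 2 * m * μ ^ 2) := by
    have e1 : ν * (3 / 2 * m * μ ^ 2) = 3 / (8 * ν * m) * (ν * D0) ^ 2 := by
      rw [hD0μ]; field_simp; ring
    have e2 : a = 3 / (8 * ν * m) * a0 := by rw [ha, hm]; field_simp
    have e3 : a0 * (K ^ 2 * s ^ 8 + Y ^ 4) ≤ (ν * D0) ^ 2 := by
      rw [hD0e]
      have t1 := mul_le_mul_of_nonneg_right ha1 (show 0 ≤ K ^ 2 * s ^ 8 by positivity)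
      have t2 := mul_le_mul_of_nonneg_right ha2 (show 0 ≤ Y ^ 4 by positivity)
      have t3 : 0 ≤ K * s ^ 4 * (k1 * Y ^ 2) := by positivity
      have t4 : (K * s ^ 4 / 2 + k1 * Y ^ 2 / 4) ^ 2 = 1 / 4 * (K ^ 2 * s ^ 8) + k1 ^ 2 / 16 * Y ^ 4 + K * s ^ 4 * (k1 * Y ^ 2) / 4 := by ring
      rw [t4]; linarith
    have := mul_le_mul_of_nonneg_left e3 (show 0 ≤ 3 / (8 * ν * m) by positivity)
    rw [e1, e2]; linarith
  have hs68 : s ^ 6 ≤ s ^ 8 := pow_le_pow_right₀ hs (by norm_num)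
  have hs5 : 1 ≤ s ^ 5 := one_le_pow₀ hs
  have hs8 : 1 ≤ s ^ 8 := one_le_pow₀ hs
  have u4 := mul_le_mul_of_nonneg_left u1 hν.le
  have u5 : 0 ≤ τ * ((16 * k2 * K * s ^ 5 * Y + Lk * Y ^ 2 + Cf * R ^ 2 + Cf * k1 / 2 * R * Y) + ν * (-(3 / 2) * m * μ ^ 2 + 2 * K * (c2 * s ^ 6))) := by
    linarith
  have u6 := nonneg_of_mul_nonneg_right u5 hτ
  have u7 : 2 * ν * c2 * K * s ^ 6 ≤ 2 * ν * c2 * K * s ^ 8 := by gcongr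
  have u8 : Cf * R ^ 2 ≤ Cf * (K * s ^ 8) := by
    apply mul_le_mul_of_nonneg_left _ hCf
    exact hK2.trans (le_mul_of_one_le_right hK.le hs8)
  have u9 : Cf * k1 / 2 * R * Y ≤ Cf * k1 / 2 * K * Y * s ^ 5 := by
    have : R * Y ≤ K * Y * s ^ 5 := by
      calc R * Y ≤ K * Y := by gcongr
        _ ≤ K * Y * s ^ 5 := le_mul_of_one_le_right (by positivity) hs5
    have := mul_le_mul_of_nonneg_left this (show 0 ≤ Cf * k1 / 2 by positivity)
    linarith
  have u10 := mul_le_mul_of_nonneg_right hb1 (show 0 ≤ K * s ^ 8 by positivity)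
  have u11 := mul_le_mul_of_nonneg_right hb2 (show 0 ≤ K * Y * s ^ 5 by positivity)
  have u12 := mul_le_mul_of_nonneg_right hb3 (sq_nonneg Y)
  linarith

theorem T2.pow4Ball {d : ℕ} (c : ℝ) (y : Euc d) (i : Fin d) (h : 1 - c * ‖y‖ ^ 2 ≠ 0) :
    T2 (fun s => (1 - c * ‖y + s • ei i‖ ^ 2)⁻¹ ^ 4) (8 * c * y i * (1 - c * ‖y‖ ^ 2)⁻¹ ^ 5)
      (8 * c * (1 - c * ‖y‖ ^ 2)⁻¹ ^ 5 + 80 * c ^ 2 * (1 - c * ‖y‖ ^ 2)⁻¹ ^ 6 * (y i) ^ 2) := by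
  have h1 := T2.invBall c y i h
  have h2 := h1.mul h1
  have h3 := h2.mul h2
  refine h3.congr (fun s => by ring) ?_ ?_
  · simp only [zero_smul, add_zero]; ring
  · simp only [zero_smul, add_zero]; ring

/-- two-point function -/
def PhiB {d : ℕ} (W : ℝ → Euc d → ℝ) (A c K τ t : ℝ) (x y : Euc d) : ℝ :=
  W (t + τ) x - W t y - A / τ * ‖x - y‖ ^ 2 - τ * K * (1 - c * ‖x‖ ^ 2)⁻¹ ^ 4

set_option maxHeartbeats 1000000 in
theorem stepB_maxpt {d : ℕ} {ν : ℝ} {k : ℝ → ℝ} {f W : ℝ → Euc d → ℝ} (hS : Sol ν k f W)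
    {T τ0 A k1 c K R τ t : ℝ} {x y : Euc d} (hk1 : 0 < k1) (hA : A * k1 = 1) (hK : 0 < K)
    (hc0 : 0 ≤ c) (hc1 : c ≤ 1)
    (hτ : 0 < τ) (hττ : τ ≤ τ0) (ht : 0 < t) (htT : t ≤ T) (hx : c * ‖x‖ ^ 2 < 1) (hy : ‖y‖ < 2 * R)
    (hmax : ∀ τ' t' x' y', 0 < τ' → τ' ≤ τ0 → 0 ≤ t' → t' ≤ T → c * ‖x'‖ ^ 2 < 1 → ‖y'‖ ≤ 2 * R →
      PhiB W A c K τ' t' x' y' ≤ PhiB W A c K τ t x y)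
    {s Y : ℝ} (hs : s = (1 - c * ‖x‖ ^ 2)⁻¹) (hY : Y = 2 * A / τ * ‖x - y‖) :
    ∃ D D' P2 : ℝ, 0 ≤ P2 ∧
      0 ≤ (ν * D - k (t + τ) * P2 + f (t + τ) x) - (ν * D' - k t * Y ^ 2 + f t y) ∧
      0 ≤ ν * D - k (t + τ) * P2 + f (t + τ) x + k1 * Y ^ 2 / 4 - K * s ^ 4 ∧
      Y ^ 2 / 2 - 64 * τ ^ 2 * K ^ 2 * s ^ 10 ≤ P2 ∧
      Y ^ 2 - 16 * τ * K * s ^ 5 * Y ≤ P2 ∧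
      (∀ l ≥ 0, (1 + l) ^ 2 * D - D' ≤ 2 * A * d * l ^ 2 / τ + τ * K * (1 + l) ^ 2 * ((8 * d + 80) * s ^ 6)) := by
  have hs0 : 0 < 1 - c * ‖x‖ ^ 2 := by linarith
  have hs1 : 1 ≤ s := by
    rw [hs]; apply (one_le_inv₀ hs0).2
    have : 0 ≤ c * ‖x‖ ^ 2 := by positivity
    linarith
  have hApos : 0 < A := pos_of_mul_pos_left (by rw [hA]; exact one_pos) hk1.le
  obtain ⟨p, h, hT, hdt⟩ := hS.eq (t + τ) (by linarith) x
  obtain ⟨p', h', hT', hdt'⟩ := hS.eq t ht y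
  have key : ∀ (l : ℝ) (i : Fin d),
      (1 + l) * p i - p' i - A / τ * (l * (2 * (x - y) i)) - τ * K * ((1 + l) * (8 * c * x i * s ^ 5)) = 0 ∧
      (1 + l) ^ 2 * h i - h' i - A / τ * (l ^ 2 * 2)
        - τ * K * ((1 + l) ^ 2 * (8 * c * s ^ 5 + 80 * c ^ 2 * s ^ 6 * (x i) ^ 2)) ≤ 0 := by
    intro l i
    have hTT := ((((hT i).scale (1 + l)).sub (hT' i)).sub
      ((((T2.normSq (x - y) i).scale l)).const_mul (A / τ))).sub
      (((T2.pow4Ball c x i hs0.ne').scale (1 + l)).const_mul (τ * K))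
    have := hTT.localMax (by
      have c1 : Continuous fun u : ℝ => c * ‖x + ((1 + l) * u) • ei i‖ ^ 2 := by fun_prop
      have c2 : Continuous fun u : ℝ => ‖y + u • ei i‖ := by fun_prop
      have e1 : ∀ᶠ u in 𝓝 (0:ℝ), c * ‖x + ((1 + l) * u) • ei i‖ ^ 2 < 1 := by
        apply c1.continuousAt.eventually_lt continuousAt_const; simpa using hx
      have e2 : ∀ᶠ u in 𝓝 (0:ℝ), ‖y + u • ei i‖ < 2 * R := by
        apply c2.continuousAt.eventually_lt continuousAt_const; simpa using hy
      filter_upwards [e1, e2] with u hu1 hu2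
      have := hmax τ t (x + ((1 + l) * u) • ei i) (y + u • ei i) hτ hττ ht.le htT hu1 hu2.le
      have e : x + ((1 + l) * u) • ei i - (y + u • ei i) = x - y + (l * u) • ei i := by module
      simp only [PhiB, e] at this
      simp only [mul_zero, zero_smul, add_zero]
      exact this)
    rw [← hs] at this
    exact this
  have hp' : ∀ i, p' i = 2 * A / τ * (x - y) i := by
    intro i
    have := (key (-1) i).1
    have e : A / τ * (-1 * (2 * (x - y) i)) = - (2 * A / τ * (x - y) i) := by ring
    rw [e] at this
    linarith
  have hp : ∀ i, p i = 2 * A / τ * (x - y) i + τ * K * 8 * c * s ^ 5 * x i := by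
    intro i
    have := (key 0 i).1
    rw [hp'] at this
    linarith
  have hsp' : ∑ i, (p' i) ^ 2 = Y ^ 2 := by
    simp_rw [hp', mul_pow]
    rw [← Finset.mul_sum, sum_sq_coord, hY]; ring
  have hsp : ∑ i, (p i) ^ 2 = ‖(2 * A / τ) • (x - y) + (τ * K * 8 * c * s ^ 5) • x‖ ^ 2 := by
    rw [← sum_sq_coord]
    apply Finset.sum_congr rfl
    intro i _
    rw [hp i]; simp
  have hYn : ‖(2 * A / τ) • (x - y)‖ = Y := by
    rw [norm_smul, hY, Real.norm_of_nonneg (by positivity)]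
  have hY0 : 0 ≤ Y := by rw [← hYn]; positivity
  have hcx : (c * ‖x‖) ^ 2 ≤ 1 := by
    have : (c * ‖x‖) ^ 2 = c * (c * ‖x‖ ^ 2) := by ring
    rw [this]
    have : 0 ≤ c * ‖x‖ ^ 2 := by positivity
    nlinarith
  have hcx' : c * ‖x‖ ≤ 1 := by
    have : 0 ≤ c * ‖x‖ := by positivity
    nlinarith
  have hbn : ‖(τ * K * 8 * c * s ^ 5) • x‖ ≤ 8 * τ * K * s ^ 5 := by
    rw [norm_smul, Real.norm_of_nonneg (by positivity)]
    calc τ * K * 8 * c * s ^ 5 * ‖x‖ = 8 * τ * K * s ^ 5 * (c * ‖x‖) := by ring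
      _ ≤ 8 * τ * K * s ^ 5 * 1 := by gcongr
      _ = _ := by ring
  generalize hq : (2 * A / τ) • (x - y) = q at hsp hYn
  generalize hbv : (τ * K * 8 * c * s ^ 5) • x = bv at hsp hbn
  have hbn2 : ‖bv‖ ^ 2 ≤ 64 * τ ^ 2 * K ^ 2 * s ^ 10 := by
    calc ‖bv‖ ^ 2 ≤ (8 * τ * K * s ^ 5) ^ 2 := by gcongr
      _ = _ := by ring
  have hin : -(‖q‖ * ‖bv‖) ≤ ⟪q, bv⟫ := by
    have := abs_real_inner_le_norm q bv
    have := neg_abs_le ⟪q, bv⟫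
    linarith
  have hex := norm_add_sq_real q bv
  refine ⟨∑ i, h i, ∑ i, h' i, ∑ i, (p i) ^ 2, Finset.sum_nonneg fun i _ => sq_nonneg _, ?_, ?_, ?_, ?_, ?_⟩
  · -- time derivative
    rw [← hsp']
    have hdt2 : HasDerivAt (fun u => W (u + τ) x) (ν * ∑ i, h i - k (t + τ) * ∑ i, (p i) ^ 2 + f (t + τ) x) t :=
      hdt.comp_add_const t τ
    refine left_max_deriv (hdt2.sub hdt') ?_
    have : ∀ᶠ u in 𝓝[<] t, 0 < u := nhdsWithin_le_nhds (lt_mem_nhds ht)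
    filter_upwards [this, self_mem_nhdsWithin] with u hu hut
    have hut' : u < t := hut
    have := hmax τ u x y hτ hττ hu.le (by linarith) hx hy.le
    simp only [PhiB] at this
    simp only [Pi.sub_apply]
    linarith
  · have hdt2 : HasDerivAt (fun u => W (t + u) x) (ν * ∑ i, h i - k (t + τ) * ∑ i, (p i) ^ 2 + f (t + τ) x) τ :=
      hdt.comp_const_add t τ
    have hdiv : HasDerivAt (fun u : ℝ => A * ‖x - y‖ ^ 2 * u⁻¹) (A * ‖x - y‖ ^ 2 * (-(τ ^ 2)⁻¹)) τ :=
      (hasDerivAt_inv hτ.ne').const_mul _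
    have hlin : HasDerivAt (fun u : ℝ => K * s ^ 4 * u) (K * s ^ 4 * 1) τ := (hasDerivAt_id τ).const_mul _
    have := left_max_deriv ((hdt2.sub hdiv).sub hlin) (by
      have : ∀ᶠ u in 𝓝[<] τ, 0 < u := nhdsWithin_le_nhds (lt_mem_nhds hτ)
      filter_upwards [this, self_mem_nhdsWithin] with u hu hut
      have hut' : u < τ := hut
      have := hmax u t x y hu (by linarith) ht.le htT hx hy.le
      simp only [PhiB, ← hs, div_eq_mul_inv] at this
      simp only [Pi.sub_apply]
      linarith)
    have e : k1 * Y ^ 2 / 4 = - (A * ‖x - y‖ ^ 2 * (-(τ ^ 2)⁻¹)) := by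
      rw [hY]
      have : k1 * (2 * A / τ * ‖x - y‖) ^ 2 / 4 = (A * k1) * (A * ‖x - y‖ ^ 2 * (τ ^ 2)⁻¹) := by
        field_simp; ring
      rw [this, hA]; ring
    rw [e]; linarith
  · rw [hsp]
    have h1 : ‖q‖ ^ 2 / 2 - ‖bv‖ ^ 2 ≤ ‖q + bv‖ ^ 2 := by
      have := norm_add_sq_real q ((2:ℝ) • bv)
      rw [norm_smul, inner_smul_right] at this
      simp at this
      have h0 := sq_nonneg ‖q + (2:ℝ) • bv‖
      linarith
    rw [hYn] at h1
    linarith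
  · rw [hsp, hex, hYn]
    rw [hYn] at hin
    have : Y * ‖bv‖ ≤ Y * (8 * τ * K * s ^ 5) := by gcongr
    have := sq_nonneg ‖bv‖
    linarith
  · intro l hl
    have h1 : ∑ i, ((1 + l) ^ 2 * h i - h' i) ≤ ∑ i, ((A / τ * (l ^ 2 * 2)
        + τ * K * ((1 + l) ^ 2 * (8 * c * s ^ 5))) + τ * K * (1 + l) ^ 2 * 80 * c ^ 2 * s ^ 6 * (x i) ^ 2) := by
      apply Finset.sum_le_sum
      intro i _
      have := (key l i).2
      linarith
    rw [sum_affine, Finset.sum_sub_distrib, ← Finset.mul_sum] at h1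
    refine h1.trans ?_
    have h56 : s ^ 5 ≤ s ^ 6 := pow_le_pow_right₀ hs1 (by norm_num)
    have h2 : c * s ^ 5 ≤ 1 * s ^ 6 := by gcongr
    have h3 : (c * ‖x‖) ^ 2 * s ^ 6 ≤ 1 * s ^ 6 := by gcongr
    have hpos : 0 ≤ τ * K * (1 + l) ^ 2 := by positivity
    have h4 := mul_le_mul_of_nonneg_left h2 (show 0 ≤ τ * K * (1 + l) ^ 2 * (8 * d) by positivity)
    have h5 := mul_le_mul_of_nonneg_left h3 (show 0 ≤ τ * K * (1 + l) ^ 2 * 80 by positivity)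
    have e : 2 * A * d * l ^ 2 / τ = d * (A / τ * (l ^ 2 * 2)) := by ring
    rw [e]
    linarith

set_option maxHeartbeats 2000000 in
theorem stepB {d : ℕ} {ν : ℝ} {k : ℝ → ℝ} {f W : ℝ → Euc d → ℝ} (hS : Sol ν k f W)
    (hν : 0 < ν) {T k1 k2 Lk Cf C1 A : ℝ} (hT : 0 ≤ T) (hk1 : 0 < k1) (hA : A * k1 = 1)
    (hk : ∀ t, 0 ≤ t → t ≤ T + 1 → k1 ≤ k t ∧ k t ≤ k2)
    (hkL : ∀ t τ, 0 ≤ t → 0 ≤ τ → t + τ ≤ T + 1 → k t - k (t + τ) ≤ Lk * τ)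
    (hCf : 0 ≤ Cf)
    (hf1 : ∀ t R x, 0 ≤ t → t ≤ T + 1 → 1 ≤ R → ‖x‖ ≤ R → f t x ≤ Cf * R ^ 2)
    (hf2 : ∀ t τ R x y, 0 ≤ t → 0 ≤ τ → t + τ ≤ T + 1 → 1 ≤ R → ‖x‖ ≤ R → ‖y‖ ≤ 2 * R →
      f (t + τ) x - f t y ≤ Cf * (τ * R ^ 2 + R * ‖x - y‖))
    (hC1 : ∀ τ R x y, 0 < τ → τ ≤ 1 → 1 ≤ R → ‖x‖ ≤ R → ‖y‖ ≤ 2 * R →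
      W τ x - W 0 y ≤ A / τ * ‖x - y‖ ^ 2 + τ * (C1 * R ^ 2)) :
    ∃ C0 : ℝ, 0 ≤ C0 ∧ ∀ R ≥ 1, ∃ τ0 > 0, τ0 ≤ 1 ∧ ∀ τ t x y, 0 < τ → τ ≤ τ0 → 0 ≤ t → t ≤ T →
      (R ^ 2)⁻¹ * ‖x‖ ^ 2 < 1 → ‖y‖ ≤ 2 * R → PhiB W A (R ^ 2)⁻¹ (C0 * R ^ 2) τ t x y ≤ 0 := by
  have hApos : 0 < A := pos_of_mul_pos_left (by rw [hA]; exact one_pos) hk1.le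
  set a0 : ℝ := min (1 / 4) (k1 ^ 2 / 16) with ha0
  have ha0pos : 0 < a0 := by rw [ha0]; positivity
  set a : ℝ := 3 * a0 / (8 * ν * A * (d + 1)) with ha
  have hapos : 0 < a := by positivity
  set c2 : ℝ := 8 * d + 80 with hc2
  have hc2pos : 0 < c2 := by positivity
  set b : ℝ := 1 + |2 * ν * c2 + Cf| + |16 * k2 + Cf * k1 / 2| + |Lk| with hb
  have hbpos : 0 < b := by positivity
  obtain ⟨K0, hK01, hK0⟩ := alg1 hapos hbpos
  set C0 : ℝ := K0 + 4 * Cf + |C1| with hC0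
  have hC0' : 1 ≤ C0 := by have := abs_nonneg C1; linarith
  refine ⟨C0, by linarith, fun R hR => ?_⟩
  have hR2 : 1 ≤ R ^ 2 := one_le_pow₀ hR
  set K : ℝ := C0 * R ^ 2 with hK
  have hKpos : 0 < K := by positivity
  have hKK0 : K0 ≤ K := by
    have h1 : C0 ≤ K := le_mul_of_one_le_right (by linarith) hR2
    have := abs_nonneg C1
    linarith
  have hKR : R ^ 2 ≤ K := le_mul_of_one_le_left (by positivity) hC0'
  have hKC : 4 * Cf * R ^ 2 ≤ K := by
    apply mul_le_mul_of_nonneg_right _ (by positivity)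
    have := abs_nonneg C1
    linarith
  have hKC1 : C1 * R ^ 2 ≤ K := by
    apply mul_le_mul_of_nonneg_right _ (by positivity)
    have := le_abs_self C1
    linarith
  set c : ℝ := (R ^ 2)⁻¹ with hc
  have hcpos : 0 < c := by positivity
  have hc1 : c ≤ 1 := inv_le_one_of_one_le₀ hR2
  have hcR : ∀ x : Euc d, c * ‖x‖ ^ 2 < 1 → ‖x‖ < R := by
    intro x hx
    rw [hc, inv_mul_lt_iff₀ (by positivity), mul_one] at hx
    exact lt_of_pow_lt_pow_left₀ 2 (by linarith) hx
  set e0 : ℝ := min (1 / (256 * k1 * K)) (A * (d + 1) / (4 * K * c2)) with he0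
  have he0pos : 0 < e0 := by rw [he0]; positivity
  have he1 : 256 * k1 * K * e0 ≤ 1 := by
    have : e0 ≤ 1 / (256 * k1 * K) := min_le_left _ _
    rw [le_div_iff₀ (by positivity)] at this
    linarith
  have he2 : 4 * K * c2 * e0 ≤ A * (d + 1) := by
    have : e0 ≤ A * (d + 1) / (4 * K * c2) := min_le_right _ _
    rw [le_div_iff₀ (by positivity)] at this
    linarith
  have hcomp : IsCompact (Icc 0 (T + 1) ×ˢ Metric.closedBall (0 : Euc d) (2 * R)) :=
    isCompact_Icc.prod (isCompact_closedBall 0 (2 * R))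
  have hWc : ContinuousOn (fun q : ℝ × Euc d => W q.1 q.2) (Icc 0 (T + 1) ×ˢ Metric.closedBall (0 : Euc d) (2 * R)) :=
    hS.cont.mono (prod_mono (fun t ht => ht.1) (subset_univ _))
  obtain ⟨N0, hN0⟩ := hcomp.exists_bound_of_continuousOn hWc
  set N : ℝ := max N0 1 with hN
  have hN1 : 1 ≤ N := le_max_right _ _
  have hNW : ∀ t x, 0 ≤ t → t ≤ T + 1 → ‖x‖ ≤ 2 * R → |W t x| ≤ N := fun t x h1 h2 h3 =>
    le_trans (hN0 (t, x) ⟨⟨h1, h2⟩, by simpa using h3⟩) (le_max_left _ _)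
  set τ0 : ℝ := min 1 (min (A / (4 * N)) (e0 ^ 2 * K ^ 3 / (2 * N) ^ 3)) with hτ0
  have hτ0pos : 0 < τ0 := by rw [hτ0]; positivity
  have hτ01 : τ0 ≤ 1 := min_le_left _ _
  have hτ0A : τ0 * (2 * N) < A := by
    have : τ0 ≤ A / (4 * N) := (min_le_right _ _).trans (min_le_left _ _)
    rw [le_div_iff₀ (by positivity)] at this
    linarith
  have hτ0e : τ0 * (2 * N) ^ 3 ≤ e0 ^ 2 * K ^ 3 := by
    have : τ0 ≤ e0 ^ 2 * K ^ 3 / (2 * N) ^ 3 := (min_le_right _ _).trans (min_le_right _ _)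
    rwa [le_div_iff₀ (by positivity)] at this
  refine ⟨τ0, hτ0pos, hτ01, ?_⟩
  by_contra hcon
  push Not at hcon
  obtain ⟨τ', t', x', y', hτ', hττ', ht', htT', hx', hy', hΦ'⟩ := hcon
  set δ := PhiB W A c K τ' t' x' y' with hδ
  -- consequences of positivity
  have hbd : ∀ τ t x y, 0 < τ → τ ≤ τ0 → 0 ≤ t → t ≤ T → c * ‖x‖ ^ 2 < 1 → ‖y‖ ≤ 2 * R →
      δ ≤ PhiB W A c K τ t x y → A / τ * ‖x - y‖ ^ 2 ≤ 2 * N ∧ τ * K * (1 - c * ‖x‖ ^ 2)⁻¹ ^ 4 ≤ 2 * N ∧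
        1 ≤ (1 - c * ‖x‖ ^ 2)⁻¹ := by
    intro τ t x y h1 h2 h3 h4 h5 h6 h7
    have hx0 : 0 < 1 - c * ‖x‖ ^ 2 := by linarith
    have g1 := abs_le.1 (hNW (t + τ) x (by linarith) (by linarith) (by linarith [hcR x h5]))
    have g2 := abs_le.1 (hNW t y h3 (by linarith) h6)
    have g3 : 0 ≤ A / τ * ‖x - y‖ ^ 2 := by positivity
    have g4 : 0 ≤ τ * K * (1 - c * ‖x‖ ^ 2)⁻¹ ^ 4 := by positivity
    simp only [PhiB] at h7
    refine ⟨by linarith, by linarith, ?_⟩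
    apply (one_le_inv₀ hx0).2
    have : 0 ≤ c * ‖x‖ ^ 2 := by positivity
    linarith
  have hunif := Metric.uniformContinuousOn_iff.1 (hcomp.uniformContinuousOn_of_continuous hWc) δ hΦ'
  obtain ⟨ρ, hρ, hunif⟩ := hunif
  set τ1 : ℝ := min ρ (ρ ^ 2 * A / (2 * N)) with hτ1
  have hτ1pos : 0 < τ1 := by rw [hτ1]; positivity
  have hlow : ∀ τ t x y, 0 < τ → τ ≤ τ0 → 0 ≤ t → t ≤ T → c * ‖x‖ ^ 2 < 1 → ‖y‖ ≤ 2 * R →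
      δ ≤ PhiB W A c K τ t x y → τ1 ≤ τ := by
    intro τ t x y h1 h2 h3 h4 h5 h6 h7
    by_contra hlt
    push Not at hlt
    have b1 : τ < ρ := hlt.trans_le (min_le_left _ _)
    have b2 : τ < ρ ^ 2 * A / (2 * N) := hlt.trans_le (min_le_right _ _)
    rw [lt_div_iff₀ (by positivity)] at b2
    have b3 := (hbd τ t x y h1 h2 h3 h4 h5 h6 h7).1
    rw [div_mul_eq_mul_div, div_le_iff₀ h1] at b3
    have b4 : ‖x - y‖ ^ 2 < ρ ^ 2 := by
      have : A * ‖x - y‖ ^ 2 < A * ρ ^ 2 := by linarith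
      exact lt_of_mul_lt_mul_left this hApos.le
    have b5 : ‖x - y‖ < ρ := lt_of_pow_lt_pow_left₀ 2 hρ.le b4
    have := hunif (t + τ, x) ⟨⟨by simp only; linarith, by simp only; linarith⟩, by
        have := hcR x h5
        simp; linarith⟩
      (t, y) ⟨⟨h3, by simp only; linarith⟩, by simpa using h6⟩ (by
        rw [Prod.dist_eq, max_lt_iff]
        refine ⟨?_, by simpa [dist_eq_norm] using b5⟩
        simp [abs_of_pos h1, b1])
    rw [Real.dist_eq] at this
    have b6 := le_abs_self (W (t + τ) x - W t y)
    have hx0 : 0 < 1 - c * ‖x‖ ^ 2 := by linarith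
    have g3 : 0 ≤ A / τ * ‖x - y‖ ^ 2 := by positivity
    have g4 : 0 ≤ τ * K * (1 - c * ‖x‖ ^ 2)⁻¹ ^ 4 := by positivity
    simp only [PhiB] at h7
    simp only at this
    linarith
  set S1 : ℝ := 2 * N / (τ1 * K) with hS1
  have hS1pos : 0 < S1 := by positivity
  obtain ⟨z, hzK, hz2, hmax⟩ := max_exists (fun z : (ℝ × ℝ) × (Euc d × Euc d) => PhiB W A c K z.1.1 z.1.2 z.2.1 z.2.2)
    {z | (0 < z.1.1 ∧ z.1.1 ≤ τ0) ∧ (0 ≤ z.1.2 ∧ z.1.2 ≤ T) ∧ c * ‖z.2.1‖ ^ 2 < 1 ∧ ‖z.2.2‖ ≤ 2 * R}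
    ((Icc τ1 τ0 ×ˢ Icc 0 T) ×ˢ ({x | S1⁻¹ ≤ 1 - c * ‖x‖ ^ 2} ×ˢ Metric.closedBall 0 (2 * R)))
    ((τ', t'), (x', y')) ⟨⟨hτ', hττ'⟩, ⟨ht', htT'⟩, hx', hy'⟩
    (by
      apply (isCompact_Icc.prod isCompact_Icc).prod
      apply IsCompact.prod _ (isCompact_closedBall _ _)
      apply (isCompact_closedBall (0 : Euc d) R).of_isClosed_subset
      · exact isClosed_le continuous_const (by fun_prop)
      · intro x hx
        have : 0 < S1⁻¹ := by positivity
        have hx' : S1⁻¹ ≤ 1 - c * ‖x‖ ^ 2 := hx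
        have := hcR x (by linarith)
        simp; linarith)
    (by
      have hsub : ∀ z ∈ ((Icc τ1 τ0 ×ˢ Icc 0 T) ×ˢ ({x : Euc d | S1⁻¹ ≤ 1 - c * ‖x‖ ^ 2} ×ˢ Metric.closedBall (0 : Euc d) (2 * R))),
          z.1.1 ≠ 0 ∧ 1 - c * ‖z.2.1‖ ^ 2 ≠ 0 := by
        rintro ⟨⟨τ, t⟩, ⟨x, y⟩⟩ ⟨⟨h1, h2⟩, ⟨h3, h4⟩⟩
        have h1' : τ1 ≤ τ := h1.1
        have h3' : S1⁻¹ ≤ 1 - c * ‖x‖ ^ 2 := h3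
        have : 0 < S1⁻¹ := by positivity
        exact ⟨by simp only; linarith, by simp only; linarith⟩
      unfold PhiB
      apply ContinuousOn.sub
      · apply ContinuousOn.sub
        · apply ContinuousOn.sub
          · apply hWc.comp (f := fun z : (ℝ × ℝ) × (Euc d × Euc d) => (z.1.2 + z.1.1, z.2.1)) (by fun_prop)
            rintro ⟨⟨τ, t⟩, ⟨x, y⟩⟩ ⟨⟨h1, h2⟩, ⟨h3, h4⟩⟩
            have h3' : S1⁻¹ ≤ 1 - c * ‖x‖ ^ 2 := h3
            have : 0 < S1⁻¹ := by positivity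
            have := hcR x (by linarith)
            simp only [mem_Icc] at h1 h2
            exact ⟨⟨by simp only; linarith, by simp only; linarith⟩, by simp; linarith⟩
          · apply hWc.comp (f := fun z : (ℝ × ℝ) × (Euc d × Euc d) => (z.1.2, z.2.2)) (by fun_prop)
            rintro ⟨⟨τ, t⟩, ⟨x, y⟩⟩ ⟨⟨h1, h2⟩, ⟨h3, h4⟩⟩
            simp only [mem_Icc] at h1 h2
            exact ⟨⟨by simp only; linarith, by simp only; linarith⟩, h4⟩
        · apply ContinuousOn.mul
          · apply ContinuousOn.div continuousOn_const (by fun_prop) (fun z hz => (hsub z hz).1)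
          · fun_prop
      · apply ContinuousOn.mul (by fun_prop)
        apply ContinuousOn.pow
        apply ContinuousOn.inv₀ (by fun_prop) (fun z hz => (hsub z hz).2))
    (by
      rintro ⟨⟨τ, t⟩, ⟨x, y⟩⟩ ⟨⟨h1, h2⟩, ⟨h3, h4⟩, h5, h6⟩ h7
      simp only at h1 h2 h3 h4 h5 h6 h7
      have g1 := hlow τ t x y h1 h2 h3 h4 h5 h6 h7
      obtain ⟨g2, g3, g4⟩ := hbd τ t x y h1 h2 h3 h4 h5 h6 h7
      refine ⟨⟨⟨g1, h2⟩, ⟨h3, h4⟩⟩, ⟨?_, by simpa using h6⟩⟩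
      have hx0 : 0 < 1 - c * ‖x‖ ^ 2 := by linarith
      have g5 : (1 - c * ‖x‖ ^ 2)⁻¹ ≤ S1 := by
        have q1 : (1 - c * ‖x‖ ^ 2)⁻¹ ≤ (1 - c * ‖x‖ ^ 2)⁻¹ ^ 4 := le_self_pow₀ g4 (by norm_num)
        have q2 : τ1 * K * (1 - c * ‖x‖ ^ 2)⁻¹ ^ 4 ≤ τ * K * (1 - c * ‖x‖ ^ 2)⁻¹ ^ 4 := by gcongr
        rw [hS1, le_div_iff₀ (by positivity)]
        have q3 := mul_le_mul_of_nonneg_left q1 (show 0 ≤ τ1 * K by positivity)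
        linarith
      exact (inv_le_comm₀ hS1pos hx0).2 g5)
  obtain ⟨⟨τ, t⟩, ⟨x, y⟩⟩ := z
  obtain ⟨⟨⟨h1, h2⟩, ⟨h3, h4⟩⟩, ⟨h5, h6⟩⟩ := hzK
  simp only at h1 h2 h3 h4 h5 h6 hz2 hmax
  have h5' : S1⁻¹ ≤ 1 - c * ‖x‖ ^ 2 := h5
  have hS1i : 0 < S1⁻¹ := by positivity
  have hx : c * ‖x‖ ^ 2 < 1 := by linarith
  have hxR := hcR x hx
  have hτ : 0 < τ := by linarith
  have hy : ‖y‖ ≤ 2 * R := by simpa using h6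
  obtain ⟨g1, g2, g3⟩ := hbd τ t x y hτ h2 h3 h4 hx hy hz2
  set s := (1 - c * ‖x‖ ^ 2)⁻¹ with hs
  have hxy1 : ‖x - y‖ ^ 2 < 1 := by
    rw [div_mul_eq_mul_div, div_le_iff₀ hτ] at g1
    have b1 : 2 * N * τ ≤ τ0 * (2 * N) := by
      rw [mul_comm]; apply mul_le_mul_of_nonneg_right h2 (by linarith)
    have : A * ‖x - y‖ ^ 2 < A * 1 := by linarith
    exact lt_of_mul_lt_mul_left this hApos.le
  have hxy : ‖x - y‖ < R := by
    have : ‖x - y‖ < 1 := by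
      apply lt_of_pow_lt_pow_left₀ 2 (by norm_num); simpa using hxy1
    linarith
  have hyR : ‖y‖ < 2 * R := by
    have e : y = x - (x - y) := by abel
    have := norm_sub_le x (x - y)
    rw [← e] at this
    linarith
  have hδpos : 0 < PhiB W A c K τ t x y := lt_of_lt_of_le hΦ' hz2
  have hs4 : 1 ≤ s ^ 4 := one_le_pow₀ g3
  have ht : 0 < t := by
    rcases eq_or_lt_of_le h3 with h | h
    · exfalso
      subst h
      have := hC1 τ R x y hτ (h2.trans hτ01) hR hxR.le hy
      simp only [PhiB, zero_add] at hδpos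
      rw [← hs] at hδpos
      have w1 : C1 * R ^ 2 ≤ K * s ^ 4 := hKC1.trans (le_mul_of_one_le_right hKpos.le hs4)
      have w2 := mul_le_mul_of_nonneg_left w1 hτ.le
      linarith
    · exact h
  obtain ⟨D, D', P2, m0, m1, m2, m3, m4, m5⟩ := stepB_maxpt hS (T := T) (τ0 := τ0) (R := R) hk1 hA hKpos hcpos.le hc1 hτ h2 ht h4 hx hyR
    (fun τ' t' x' y' q1 q2 q3 q4 q5 q6 => hmax ((τ', t'), (x', y')) ⟨⟨q1, q2⟩, ⟨q3, q4⟩, q5, q6⟩) hs rfl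
  have hY0 : 0 ≤ 2 * A / τ * ‖x - y‖ := by positivity
  have hE : τ ^ 2 * s ^ 6 ≤ e0 := by
    have w1 : τ * s ^ 4 * K ≤ 2 * N := by linarith
    have w2 : (τ * s ^ 4 * K) ^ 3 ≤ (2 * N) ^ 3 := by
      apply pow_le_pow_left₀ _ w1
      positivity
    have w3 : (τ ^ 2 * s ^ 6) ^ 2 * K ^ 3 ≤ e0 ^ 2 * K ^ 3 := by
      calc (τ ^ 2 * s ^ 6) ^ 2 * K ^ 3 = τ * (τ * s ^ 4 * K) ^ 3 := by ring
        _ ≤ τ0 * (2 * N) ^ 3 := by gcongr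
        _ ≤ _ := hτ0e
    have w4 := le_of_mul_le_mul_right w3 (by positivity)
    exact le_of_sq_le_sq w4 he0pos.le
  refine stepB_alg (n := d) (k2 := k2) (Lk := Lk) (Cf := Cf) (R := R) (a := a) (b := b) (a0 := a0) (e0 := e0)
    hν hk1 hA hCf hc2pos.le (Nat.cast_nonneg d) hR g3 hY0 hτ m1 m2 m0 m3 m4 m5
    (hf1 (t + τ) R x (by linarith) (by linarith) hR hxR.le) ?_ ?_
    (hk (t + τ) (by linarith) (by linarith)).1 (hk (t + τ) (by linarith) (by linarith)).2
    hE he1 he2 hKC hKR ha ha0pos (min_le_left _ _) (min_le_right _ _) ?_ ?_ ?_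
    (hK0 K hKK0 s g3 _)
  · have := hf2 t τ R x y h3 hτ.le (by linarith) hR hxR.le hy
    have e : τ * (2 * A / τ * ‖x - y‖) * k1 / 2 = ‖x - y‖ := by
      have : τ * (2 * A / τ * ‖x - y‖) * k1 / 2 = (A * k1) * ‖x - y‖ := by field_simp
      rw [this, hA, one_mul]
    rw [e]; exact this
  · exact hkL t τ h3 hτ.le (by linarith)
  · have := le_abs_self (2 * ν * c2 + Cf)
    have := abs_nonneg (16 * k2 + Cf * k1 / 2)
    have := abs_nonneg Lk
    linarith
  · have := abs_nonneg (2 * ν * c2 + Cf)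
    have := le_abs_self (16 * k2 + Cf * k1 / 2)
    have := abs_nonneg Lk
    linarith
  · have := abs_nonneg (2 * ν * c2 + Cf)
    have := abs_nonneg (16 * k2 + Cf * k1 / 2)
    have := le_abs_self Lk
    linarith

set_option maxHeartbeats 1000000 in
theorem stepC {d : ℕ} {W : ℝ → Euc d → ℝ} {T A C0 : ℝ} (hT : 0 ≤ T) (hA : 0 < A) (hC0 : 0 ≤ C0)
    (hB : ∀ R ≥ 1, ∃ τ0 > 0, τ0 ≤ 1 ∧ ∀ τ t x y, 0 < τ → τ ≤ τ0 → 0 ≤ t → t ≤ T + 1 →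
      (R ^ 2)⁻¹ * ‖x‖ ^ 2 < 1 → ‖y‖ ≤ 2 * R → PhiB W A (R ^ 2)⁻¹ (C0 * R ^ 2) τ t x y ≤ 0) :
    ∃ C : ℝ, ∀ t y, 0 ≤ t → t ≤ T → -(C * (1 + ‖y‖ ^ 2)) ≤ W t y := by
  refine ⟨|W (T + 1) 0| + A + 32 * (T + 1) * C0, fun t y ht htT => ?_⟩
  set R : ℝ := 2 * ‖y‖ + 2 with hR
  have hy0 := norm_nonneg y
  obtain ⟨τ0, hτ0, -, hB⟩ := hB R (by linarith)
  set L : ℝ := T + 1 - t with hL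
  have hL1 : 1 ≤ L := by linarith
  obtain ⟨n, hn⟩ := exists_nat_gt (L / τ0)
  have hn0 : (0:ℝ) < n := lt_trans (by positivity) hn
  set τ : ℝ := L / n with hτ
  have hτpos : 0 < τ := by positivity
  have hττ : τ ≤ τ0 := by
    rw [div_lt_iff₀ hτ0] at hn
    rw [hτ, div_le_iff₀ hn0]; linarith
  have hnτ : n * τ = L := by rw [hτ]; field_simp
  have hRpos : 0 < R := by linarith
  have step : ∀ t' x' y', 0 ≤ t' → t' ≤ T + 1 → ‖x'‖ ≤ ‖y‖ → ‖y'‖ ≤ ‖y‖ →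
      W (t' + τ) x' ≤ W t' y' + A / τ * ‖x' - y'‖ ^ 2 + 4 * τ * (C0 * R ^ 2) := by
    intro t' x' y' h1 h2 h3 h4
    have hc : (R ^ 2)⁻¹ * ‖x'‖ ^ 2 ≤ 1 / 4 := by
      rw [inv_mul_le_iff₀ (by positivity)]
      have : ‖x'‖ ≤ R / 2 := by linarith
      calc ‖x'‖ ^ 2 ≤ (R / 2) ^ 2 := by gcongr
        _ = _ := by ring
    have := hB τ t' x' y' hτpos hττ h1 h2 (by linarith) (by linarith)
    simp only [PhiB] at this
    have hs : (1 - (R ^ 2)⁻¹ * ‖x'‖ ^ 2)⁻¹ ^ 4 ≤ 4 := by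
      have h5 : (3 / 4 : ℝ) ≤ 1 - (R ^ 2)⁻¹ * ‖x'‖ ^ 2 := by linarith
      have h6 : (1 - (R ^ 2)⁻¹ * ‖x'‖ ^ 2)⁻¹ ≤ (3 / 4 : ℝ)⁻¹ := inv_anti₀ (by norm_num) h5
      have h7 : 0 ≤ (1 - (R ^ 2)⁻¹ * ‖x'‖ ^ 2)⁻¹ := inv_nonneg.2 (by linarith)
      calc _ ≤ ((3 / 4 : ℝ)⁻¹) ^ 4 := pow_le_pow_left₀ h7 h6 4
        _ ≤ 4 := by norm_num
    have := mul_le_mul_of_nonneg_left hs (show 0 ≤ τ * (C0 * R ^ 2) by positivity)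
    linarith
  have ind : ∀ j : ℕ, j ≤ n → W (t + j * τ) ((1 - j / n : ℝ) • y) ≤
      W t y + j * (A / τ * (‖y‖ / n) ^ 2 + 4 * τ * (C0 * R ^ 2)) := by
    intro j
    induction j with
    | zero => intro _; simp
    | succ j ih =>
      intro hj
      have ih' := ih (by omega)
      have hjn : (j:ℝ) + 1 ≤ n := by exact_mod_cast hj
      have hj0 : (0:ℝ) ≤ j := Nat.cast_nonneg j
      have hfac : ∀ r : ℝ, 0 ≤ r → r ≤ n → ‖((1 - r / n : ℝ)) • y‖ ≤ ‖y‖ := by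
        intro r hr hrn
        rw [norm_smul]
        have h1 : r / n ≤ 1 := (div_le_one hn0).2 hrn
        have h2 : 0 ≤ r / n := by positivity
        rw [Real.norm_of_nonneg (by linarith)]
        nlinarith
      have hjτ : (j:ℝ) * τ ≤ n * τ := by
        apply mul_le_mul_of_nonneg_right _ hτpos.le; linarith
      have := step (t + j * τ) ((1 - (j + 1) / n : ℝ) • y) ((1 - j / n : ℝ) • y) (by positivity) (by linarith)
        (hfac _ (by linarith) hjn) (hfac _ hj0 (by linarith))
      have e1 : ‖((1 - (j + 1) / n : ℝ)) • y - ((1 - j / n : ℝ)) • y‖ = ‖y‖ / n := by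
        rw [← sub_smul, norm_smul]
        have : (1 - ((j:ℝ) + 1) / n - (1 - j / n)) = - (1 / n) := by field_simp; ring
        rw [this, norm_neg, Real.norm_of_nonneg (by positivity)]
        field_simp
      rw [e1] at this
      have e2 : t + j * τ + τ = t + ((j + 1 : ℕ) : ℝ) * τ := by push_cast; ring
      rw [e2] at this
      push_cast at this ⊢
      linarith
  have := ind n le_rfl
  have e0 : (1 - (n:ℝ) / n) = 0 := by field_simp; ring
  rw [e0, zero_smul, hnτ] at this
  have e1 : t + L = T + 1 := by rw [hL]; ring
  rw [e1] at this
  have e2 : (n:ℝ) * (A / τ * (‖y‖ / n) ^ 2 + 4 * τ * (C0 * R ^ 2)) = A / L * ‖y‖ ^ 2 + 4 * L * (C0 * R ^ 2) := by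
    rw [← hnτ]; field_simp
  rw [e2] at this
  have i1 : A / L * ‖y‖ ^ 2 ≤ A * ‖y‖ ^ 2 := by
    gcongr
    exact div_le_self hA.le hL1
  have i2 : R ^ 2 ≤ 8 * (1 + ‖y‖ ^ 2) := by rw [hR]; nlinarith [sq_nonneg (‖y‖ - 1)]
  have i3 : 4 * L * (C0 * R ^ 2) ≤ 4 * (T + 1) * (C0 * (8 * (1 + ‖y‖ ^ 2))) := by
    have : L ≤ T + 1 := by linarith
    gcongr
  have i4 := neg_abs_le (W (T + 1) 0)
  have i5 : 0 ≤ |W (T + 1) 0| * ‖y‖ ^ 2 := by positivity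
  have i6 : 0 ≤ A := hA.le
  linarith

theorem line_deriv {d : ℕ} {F : Euc d → ℝ} (hF : Differentiable ℝ F) (x e : Euc d) (s : ℝ) :
    HasDerivAt (fun s : ℝ => F (x + s • e)) ⟪gradient F (x + s • e), e⟫ s := by
  have h1 : HasDerivAt (fun s : ℝ => x + s • e) e s := by
    simpa using ((hasDerivAt_id s).smul_const e).const_add x
  have h2 := (hF (x + s • e)).hasGradientAt.hasFDerivAt.comp_hasDerivAt s h1
  simpa [Function.comp_def] using h2

/-- `G` is a gradient field of `F` along lines. -/
def LG {d : ℕ} (F : Euc d → ℝ) (G : Euc d → Euc d) : Prop :=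
  ∀ (x e : Euc d) (s : ℝ), HasDerivAt (fun s : ℝ => F (x + s • e)) ⟪G (x + s • e), e⟫ s

theorem LG.neg {d : ℕ} {F : Euc d → ℝ} {G : Euc d → Euc d} (h : LG F G) :
    LG (fun x => - F x) (fun x => - G x) := by
  intro x e s
  refine (h x e s).neg.congr_deriv ?_
  simp

theorem mono_aux {φ φ' : ℝ → ℝ} (h : ∀ s, HasDerivAt φ (φ' s) s) (h0 : ∀ s, 0 < s → 0 ≤ φ' s) :
    φ 0 ≤ φ 1 := by
  have hm : MonotoneOn φ (Icc 0 1) := by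
    apply monotoneOn_of_deriv_nonneg (convex_Icc 0 1)
    · exact fun s _ => (h s).continuousAt.continuousWithinAt
    · exact fun s _ => (h s).differentiableAt.differentiableWithinAt
    · intro s hs
      rw [interior_Icc] at hs
      rw [(h s).deriv]; exact h0 s hs.1
  exact hm (by simp) (by simp) zero_le_one

theorem mid_lower {d : ℕ} {F : Euc d → ℝ} {G : Euc d → Euc d} (h : LG F G) {c : ℝ}
    (hc : ∀ x y, c * ‖x - y‖ ^ 2 ≤ ⟪G x - G y, x - y⟫) (m ξ : Euc d) :
    c * ‖ξ‖ ^ 2 ≤ F (m + ξ) + F (m - ξ) - 2 * F m := by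
  have hd : ∀ s : ℝ, HasDerivAt (fun s : ℝ => F (m + s • ξ) + F (m + s • (-ξ)) - c * ‖ξ‖ ^ 2 * s ^ 2)
      (⟪G (m + s • ξ), ξ⟫ + ⟪G (m + s • (-ξ)), -ξ⟫ - c * ‖ξ‖ ^ 2 * (2 * s)) s := by
    intro s
    have h3 : HasDerivAt (fun s : ℝ => c * ‖ξ‖ ^ 2 * s ^ 2) (c * ‖ξ‖ ^ 2 * (2 * s)) s := by
      simpa using (hasDerivAt_pow 2 s).const_mul (c * ‖ξ‖ ^ 2)
    exact ((h m ξ s).add (h m (-ξ) s)).sub h3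
  have := mono_aux hd (by
    intro s hs
    have h1 := hc (m + s • ξ) (m + s • (-ξ))
    have e : m + s • ξ - (m + s • (-ξ)) = (2 * s) • ξ := by module
    rw [e, norm_smul, inner_smul_right, inner_sub_left, mul_pow] at h1
    rw [Real.norm_of_nonneg (by positivity)] at h1
    rw [inner_neg_right]
    have h2 : (2 * s) * (2 * s * c * ‖ξ‖ ^ 2) ≤ (2 * s) * (⟪G (m + s • ξ), ξ⟫ - ⟪G (m + s • (-ξ)), ξ⟫) := by linarith
    have := le_of_mul_le_mul_left h2 (by positivity)
    linarith)
  simp [← sub_eq_add_neg] at this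
  linarith

theorem mid_upper {d : ℕ} {F : Euc d → ℝ} {G : Euc d → Euc d} (h : LG F G) {c : ℝ}
    (hc : ∀ x y, ⟪G x - G y, x - y⟫ ≤ c * ‖x - y‖ ^ 2) (m ξ : Euc d) :
    F (m + ξ) + F (m - ξ) - 2 * F m ≤ c * ‖ξ‖ ^ 2 := by
  have := mid_lower h.neg (c := -c) (fun x y => by
    have := hc x y
    have e : - G x - - G y = -(G x - G y) := by abel
    rw [e, inner_neg_left]; linarith) m ξ
  linarith

theorem tan_lower {d : ℕ} {F : Euc d → ℝ} {G : Euc d → Euc d} (h : LG F G) {c : ℝ}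
    (hc : ∀ x y, c * ‖x - y‖ ^ 2 ≤ ⟪G x - G y, x - y⟫) (x y : Euc d) :
    F y + ⟪G y, x - y⟫ + c / 2 * ‖x - y‖ ^ 2 ≤ F x := by
  generalize hξ : x - y = ξ
  have hd : ∀ s : ℝ, HasDerivAt (fun s : ℝ => F (y + s • ξ) - ⟪G y, ξ⟫ * s - c / 2 * ‖ξ‖ ^ 2 * s ^ 2)
      (⟪G (y + s • ξ), ξ⟫ - ⟪G y, ξ⟫ * 1 - c / 2 * ‖ξ‖ ^ 2 * (2 * s)) s := by
    intro s
    have h3 : HasDerivAt (fun s : ℝ => c / 2 * ‖ξ‖ ^ 2 * s ^ 2) (c / 2 * ‖ξ‖ ^ 2 * (2 * s)) s := by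
      simpa using (hasDerivAt_pow 2 s).const_mul (c / 2 * ‖ξ‖ ^ 2)
    exact ((h y ξ s).sub ((hasDerivAt_id s).const_mul _)).sub h3
  have := mono_aux hd (by
    intro s hs
    have h1 := hc (y + s • ξ) y
    have e : y + s • ξ - y = s • ξ := by module
    rw [e, norm_smul, inner_smul_right, inner_sub_left, mul_pow] at h1
    rw [Real.norm_of_nonneg (by positivity)] at h1
    have h2 : s * (s * c * ‖ξ‖ ^ 2) ≤ s * (⟪G (y + s • ξ), ξ⟫ - ⟪G y, ξ⟫) := by linarith
    have := le_of_mul_le_mul_left h2 hs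
    linarith)
  have ex : y + ξ = x := by rw [← hξ]; abel
  simp [ex] at this
  linarith

theorem tan_upper {d : ℕ} {F : Euc d → ℝ} {G : Euc d → Euc d} (h : LG F G) {c : ℝ}
    (hc : ∀ x y, ⟪G x - G y, x - y⟫ ≤ c * ‖x - y‖ ^ 2) (x y : Euc d) :
    F x ≤ F y + ⟪G y, x - y⟫ + c / 2 * ‖x - y‖ ^ 2 := by
  have := tan_lower h.neg (c := -c) (fun x y => by
    have := hc x y
    have e : - G x - - G y = -(G x - G y) := by abel
    rw [e, inner_neg_left]; linarith) x y
  rw [inner_neg_left] at this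
  linarith

theorem quad_growth {d : ℕ} {F : Euc d → ℝ} {G : Euc d → Euc d} (h : LG F G) {cl cu : ℝ}
    (hcl : 0 < cl) (hcu : 0 < cu)
    (h1 : ∀ x y, cl * ‖x - y‖ ^ 2 ≤ ⟪G x - G y, x - y⟫)
    (h2 : ∀ x y, ⟪G x - G y, x - y⟫ ≤ cu * ‖x - y‖ ^ 2) :
    ∃ C : ℝ, 0 ≤ C ∧ ∀ x, |F x| ≤ C * (1 + ‖x‖ ^ 2) ∧ ‖G x‖ ^ 2 ≤ C * (1 + ‖x‖ ^ 2) := by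
  have low : ∀ x, F 0 - ‖G 0‖ ^ 2 / (2 * cl) ≤ F x := by
    intro x
    have h3 := tan_lower h h1 x 0
    rw [sub_zero] at h3
    have h4 := (abs_le.1 (abs_real_inner_le_norm (G 0) x)).1
    have h5 : ‖G 0‖ * ‖x‖ ≤ ‖G 0‖ ^ 2 / (2 * cl) + cl / 2 * ‖x‖ ^ 2 := by
      have e : ‖G 0‖ ^ 2 / (2 * cl) + cl / 2 * ‖x‖ ^ 2 - ‖G 0‖ * ‖x‖ = (‖G 0‖ - cl * ‖x‖) ^ 2 / (2 * cl) := by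
        field_simp; ring
      have : 0 ≤ (‖G 0‖ - cl * ‖x‖) ^ 2 / (2 * cl) := by positivity
      linarith
    linarith
  have up : ∀ x, F x ≤ |F 0| + ‖G 0‖ ^ 2 + (1 + cu) * ‖x‖ ^ 2 := by
    intro x
    have h3 := tan_upper h h2 x 0
    rw [sub_zero] at h3
    have h4 := (abs_le.1 (abs_real_inner_le_norm (G 0) x)).2
    have h5 : ‖G 0‖ * ‖x‖ ≤ ‖G 0‖ ^ 2 + ‖x‖ ^ 2 := by nlinarith [sq_nonneg (‖G 0‖ - ‖x‖), sq_nonneg ‖G 0‖, sq_nonneg ‖x‖]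
    have h6 := le_abs_self (F 0)
    have h7 : 0 ≤ cu * ‖x‖ ^ 2 := by positivity
    linarith
  have gr : ∀ x, ‖G x‖ ^ 2 ≤ 2 * cu * (F x - (F 0 - ‖G 0‖ ^ 2 / (2 * cl))) := by
    intro x
    have h3 := tan_upper h h2 (x - cu⁻¹ • G x) x
    have e : x - cu⁻¹ • G x - x = - (cu⁻¹ • G x) := by abel
    rw [e, inner_neg_right, inner_smul_right, norm_neg, norm_smul, mul_pow, real_inner_self_eq_norm_sq,
      Real.norm_of_nonneg (by positivity)] at h3
    have h4 := low (x - cu⁻¹ • G x)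
    have e2 : -(cu⁻¹ * ‖G x‖ ^ 2) + cu / 2 * (cu⁻¹ ^ 2 * ‖G x‖ ^ 2) = - (‖G x‖ ^ 2 / (2 * cu)) := by
      field_simp; ring
    have h5 : ‖G x‖ ^ 2 / (2 * cu) ≤ F x - (F 0 - ‖G 0‖ ^ 2 / (2 * cl)) := by linarith
    rw [div_le_iff₀ (by positivity)] at h5
    linarith
  set a : ℝ := |F 0| + ‖G 0‖ ^ 2 / (2 * cl) with ha
  set b : ℝ := |F 0| + ‖G 0‖ ^ 2 + (1 + cu) with hb
  have ha0 : 0 ≤ a := by positivity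
  have hb0 : 0 ≤ b := by positivity
  have up' : ∀ x, F x ≤ b * (1 + ‖x‖ ^ 2) := by
    intro x
    have := up x
    have h7 : 0 ≤ (|F 0| + ‖G 0‖ ^ 2) * ‖x‖ ^ 2 := by positivity
    rw [hb]; linarith
  have low' : ∀ x, -a ≤ F x := by
    intro x
    have := low x
    have := neg_abs_le (F 0)
    rw [ha]; linarith
  refine ⟨a + b + 2 * cu * (a + b), by positivity, fun x => ⟨?_, ?_⟩⟩
  · have h8 : 0 ≤ ‖x‖ ^ 2 := by positivity
    have w1 : 0 ≤ a * ‖x‖ ^ 2 := by positivity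
    have w2 : 0 ≤ 2 * cu * (a + b) * (1 + ‖x‖ ^ 2) := by positivity
    have w3 : 0 ≤ b * (1 + ‖x‖ ^ 2) := by positivity
    rw [abs_le]
    constructor
    · have := low' x; linarith
    · have := up' x; linarith
  · have g1 := gr x
    have g2 : F x - (F 0 - ‖G 0‖ ^ 2 / (2 * cl)) ≤ a + b * (1 + ‖x‖ ^ 2) := by
      have := up' x
      have := neg_abs_le (F 0)
      rw [ha]; linarith
    have g3 := mul_le_mul_of_nonneg_left g2 (show 0 ≤ 2 * cu by positivity)
    have w1 : 0 ≤ 2 * cu * a * ‖x‖ ^ 2 := by positivity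
    have w3 : 0 ≤ (a + b) * (1 + ‖x‖ ^ 2) := by positivity
    linarith

theorem contDiff_gradient {d : ℕ} {F : Euc d → ℝ} (hF : ContDiff ℝ 2 F) : ContDiff ℝ 1 (gradient F) := by
  have h1 : ContDiff ℝ 1 (fderiv ℝ F) := hF.fderiv_right (by norm_num)
  exact ((InnerProductSpace.toDual ℝ (Euc d)).symm.contDiff).comp h1

theorem T2_line {d : ℕ} {F : Euc d → ℝ} (hF : ContDiff ℝ 2 F) (x e : Euc d) :
    T2 (fun s => F (x + s • e)) ⟪gradient F x, e⟫ ⟪fderiv ℝ (gradient F) x e, e⟫ := by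
  have hd := hF.differentiable (by norm_num)
  refine ⟨fun s => ⟪gradient F (x + s • e), e⟫, Eventually.of_forall fun s => line_deriv hd x e s, by simp, ?_⟩
  have h1 : HasDerivAt (fun s : ℝ => x + s • e) e 0 := by
    simpa using ((hasDerivAt_id (0:ℝ)).smul_const e).const_add x
  have h2 : HasFDerivAt (gradient F) (fderiv ℝ (gradient F) x) (x + (0:ℝ) • e) := by
    have := ((contDiff_gradient hF).differentiable (by norm_num) x).hasFDerivAt
    simpa using this
  have h3 := h2.comp_hasDerivAt (0:ℝ) h1
  have h4 := h3.inner ℝ (hasDerivAt_const (0:ℝ) e)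
  simpa [Function.comp_def] using h4

theorem sol_of {d : ℕ} {σ γ : ℝ} {g v0 : Euc d → ℝ} {v : ℝ → Euc d → ℝ}
    (hv : IsHJBSolution σ γ (fun _ x => g x) v0 v) :
    Sol (σ ^ 2 / 2) (fun _ => σ ^ 2 / 4) (fun t x => g x - γ * v t x) v := by
  obtain ⟨h1, h2, h3, h4⟩ := hv
  refine ⟨h1, fun t ht x => ⟨fun i => ⟪gradient (v t) x, ei i⟫,
    fun i => ⟪fderiv ℝ (gradient (v t)) x (ei i), ei i⟫, fun i => ?_, ?_⟩⟩
  · exact T2_line ((h2 t ht).of_le (by norm_num)) x (ei i)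
  · refine (h4 x t ht).congr_deriv ?_
    have e : ∑ i, ⟪gradient (v t) x, ei i⟫ ^ 2 = ‖gradient (v t) x‖ ^ 2 := by
      rw [← sum_sq_coord]
      apply Finset.sum_congr rfl
      intro i _
      rw [EuclideanSpace.inner_single_right]; simp
    rw [e]
    simp only [lap, divg]
    ring

theorem sol_exp {d : ℕ} {ν κ γ : ℝ} {g : Euc d → ℝ} {v : ℝ → Euc d → ℝ}
    (hS : Sol ν (fun _ => κ) (fun t x => g x - γ * v t x) v) :
    Sol ν (fun t => κ * exp (-(γ * t))) (fun t x => exp (γ * t) * g x) (fun t x => exp (γ * t) * v t x) := by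
  refine ⟨?_, fun t ht x => ?_⟩
  · apply ContinuousOn.mul _ hS.cont
    apply Continuous.continuousOn; fun_prop
  · obtain ⟨p, h, hT, hd⟩ := hS.eq t ht x
    refine ⟨fun i => exp (γ * t) * p i, fun i => exp (γ * t) * h i, fun i => (hT i).const_mul _, ?_⟩
    have hE : HasDerivAt (fun s => exp (γ * s)) (exp (γ * t) * (γ * 1)) t :=
      ((hasDerivAt_id t).const_mul γ).exp
    refine (hE.mul hd).congr_deriv ?_
    have e1 : exp (-(γ * t)) * exp (γ * t) = 1 := by rw [← exp_add]; simp
    simp_rw [mul_pow]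
    rw [← Finset.mul_sum, ← Finset.mul_sum]
    have e2 : κ * exp (-(γ * t)) * (exp (γ * t) ^ 2 * ∑ i, p i ^ 2) =
      κ * (exp (-(γ * t)) * exp (γ * t)) * (exp (γ * t) * ∑ i, p i ^ 2) := by ring
    rw [e2, e1]
    ring

set_option maxHeartbeats 1000000 in
theorem growth {d : ℕ} {ν κ γ : ℝ} {g : Euc d → ℝ} {v : ℝ → Euc d → ℝ}
    (hS : Sol ν (fun _ => κ) (fun t x => g x - γ * v t x) v)
    (hν : 0 < ν) (hκ : 0 < κ) (hγ : 0 ≤ γ) {Gg G0 : Euc d → Euc d} {kl etal etau Cg Cv : ℝ}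
    (hg : LG g Gg) (h0 : LG (v 0) G0) (hkl : 0 < kl)
    (hgl : ∀ x y, kl * ‖x - y‖ ^ 2 ≤ ⟪Gg x - Gg y, x - y⟫)
    (hetal : 0 < etal) (hetau : 0 < etau)
    (h0l : ∀ x y, etal * ‖x - y‖ ^ 2 ≤ ⟪G0 x - G0 y, x - y⟫)
    (h0u : ∀ x y, ⟪G0 x - G0 y, x - y⟫ ≤ etau * ‖x - y‖ ^ 2)
    (hCg : 0 ≤ Cg) (hCv : 0 ≤ Cv)
    (hgb : ∀ x, |g x| ≤ Cg * (1 + ‖x‖ ^ 2) ∧ ‖Gg x‖ ^ 2 ≤ Cg * (1 + ‖x‖ ^ 2))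
    (h0b : ∀ x, |v 0 x| ≤ Cv * (1 + ‖x‖ ^ 2) ∧ ‖G0 x‖ ^ 2 ≤ Cv * (1 + ‖x‖ ^ 2))
    {T : ℝ} (hT : 0 ≤ T) :
    ∃ C : ℝ, 0 ≤ C ∧ ∀ t x, 0 ≤ t → t ≤ T → |v t x| ≤ C * (1 + ‖x‖ ^ 2) := by
  have hW := sol_exp hS
  set W : ℝ → Euc d → ℝ := fun t x => exp (γ * t) * v t x with hWdef
  have hW0 : ∀ x, W 0 x = v 0 x := fun x => by simp [hWdef]
  set T2' : ℝ := T + 1 + 1 with hT2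
  set E : ℝ := exp (γ * T2') with hE
  have hE0 : 0 < E := exp_pos _
  have hexp : ∀ t, t ≤ T2' → exp (γ * t) ≤ E := fun t ht => by
    apply exp_le_exp.2; gcongr
  set k1 : ℝ := κ * exp (-(γ * T2')) with hk1
  have hk1pos : 0 < k1 := by positivity
  have hk : ∀ t, 0 ≤ t → t ≤ T2' → k1 ≤ κ * exp (-(γ * t)) ∧ κ * exp (-(γ * t)) ≤ κ := by
    intro t ht htT
    constructor
    · rw [hk1]; gcongr
    · have : exp (-(γ * t)) ≤ 1 := by
        apply exp_le_one_iff.2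
        have : 0 ≤ γ * t := by positivity
        linarith
      nlinarith
  -- upper barrier
  set M : ℝ := ν * (2 * d + 8) / (2 * k1) with hM
  have hMpos : 0 < M := by positivity
  set CA : ℝ := 1 + ν * (etau * d) + 2 * (ν * M * (2 * d + 8)) + κ * Cv + 3 * E * Cg with hCA
  have hCA0 : 0 ≤ CA := by positivity
  have stA : ∀ t x, 0 ≤ t → t ≤ T2' → W t x ≤ v 0 x + CA * (1 + ‖x‖ ^ 2) * t := by
    intro t x1 ht htT
    have := stepA_local hW hν (T := T2') (k1 := k1) (k2 := κ) (b := etau / 2) (K := CA * (1 + ‖x1‖ ^ 2))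
      (D := 3 * E * Cg * (1 + ‖x1‖ ^ 2)) hk1pos hk x1 (G0 x1) (by positivity)
      (by
        intro t ht htT x hx
        have e : ‖x‖ ≤ ‖x1‖ + 1 := by
          have : ‖x‖ = ‖x1 + (x - x1)‖ := by congr 1; abel
          rw [this]
          have := norm_add_le x1 (x - x1)
          linarith
        have e2 : 1 + ‖x‖ ^ 2 ≤ 3 * (1 + ‖x1‖ ^ 2) := by
          have : ‖x‖ ^ 2 ≤ (‖x1‖ + 1) ^ 2 := by gcongr
          nlinarith [sq_nonneg (‖x1‖ - 1)]
        have e3 := (hgb x).1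
        have e4 := le_abs_self (g x)
        calc exp (γ * t) * g x ≤ exp (γ * t) * (Cg * (1 + ‖x‖ ^ 2)) := by
              apply mul_le_mul_of_nonneg_left (by linarith) (exp_pos _).le
          _ ≤ E * (Cg * (3 * (1 + ‖x1‖ ^ 2))) := by
              have := hexp t htT
              gcongr
          _ = _ := by ring)
      (by
        intro x
        rw [hW0, hW0]
        exact tan_upper h0 h0u x x1)
      hM
      (by
        have w1 := (h0b x1).2
        have w2 := mul_le_mul_of_nonneg_left w1 hκ.le
        have w3 : 0 ≤ (ν * (etau * d) + 2 * (ν * M * (2 * d + 8))) * ‖x1‖ ^ 2 := by positivity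
        have w4 : 0 ≤ ‖x1‖ ^ 2 := by positivity
        rw [hCA]
        linarith) t ht htT
    rw [hW0] at this
    exact this
  set A : ℝ := k1⁻¹ with hA
  have hApos : 0 < A := by positivity
  have hAk : A * k1 = 1 := by rw [hA]; field_simp
  have hR1 : ∀ (x : Euc d) R, 1 ≤ R → ‖x‖ ≤ R → 1 + ‖x‖ ^ 2 ≤ 2 * R ^ 2 := by
    intro x R hR hx
    have : ‖x‖ ^ 2 ≤ R ^ 2 := by gcongr
    have : 1 ≤ R ^ 2 := one_le_pow₀ hR
    linarith
  set Cf : ℝ := E * (2 * γ * Cg + 1 + 2 * Cg) with hCf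
  have hCf0 : 0 ≤ Cf := by positivity
  obtain ⟨C0, hC0, hB⟩ := stepB hW hν (T := T + 1) (k1 := k1) (k2 := κ) (Lk := κ * γ) (Cf := Cf) (A := A)
    (C1 := 2 * CA + 2 * Cv / (4 * A)) (by linarith) hk1pos hAk hk
    (by
      intro t τ ht hτ htτ
      have e1 : exp (-(γ * (t + τ))) = exp (-(γ * t)) * exp (-(γ * τ)) := by rw [← exp_add]; ring_nf
      have e2 : 1 - γ * τ ≤ exp (-(γ * τ)) := by linarith [add_one_le_exp (-(γ * τ))]
      have e3 : exp (-(γ * t)) ≤ 1 := by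
        apply exp_le_one_iff.2
        have : 0 ≤ γ * t := by positivity
        linarith
      have e4 := exp_pos (-(γ * t))
      rw [e1]
      have e5 : exp (-(γ * t)) * (1 - exp (-(γ * τ))) ≤ 1 * (γ * τ) := by
        have : 0 ≤ γ * τ := by positivity
        calc exp (-(γ * t)) * (1 - exp (-(γ * τ))) ≤ exp (-(γ * t)) * (γ * τ) := by gcongr; linarith
          _ ≤ 1 * (γ * τ) := by gcongr
      have := mul_le_mul_of_nonneg_left e5 hκ.le
      linarith)
    hCf0
    (by
      intro t R x ht htT hR hx
      have e3 := (hgb x).1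
      have e4 := le_abs_self (g x)
      have e5 := hR1 x R hR hx
      calc exp (γ * t) * g x ≤ exp (γ * t) * (Cg * (1 + ‖x‖ ^ 2)) := by
              apply mul_le_mul_of_nonneg_left (by linarith) (exp_pos _).le
        _ ≤ E * (Cg * (2 * R ^ 2)) := by
              have := hexp t htT
              gcongr
        _ ≤ Cf * R ^ 2 := by
              have : 0 ≤ E * (2 * γ * Cg + 1) * R ^ 2 := by positivity
              rw [hCf]; linarith)
    (by
      intro t τ R x y ht hτ htτ hR hx hy
      have e5 := hR1 x R hR hx
      have hg1 := tan_lower hg hgl y x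
      have hi := (abs_le.1 (abs_real_inner_le_norm (Gg x) (y - x))).1
      have hG : ‖Gg x‖ ≤ (1 + 2 * Cg) * R := by
        apply le_of_sq_le_sq _ (by positivity)
        calc ‖Gg x‖ ^ 2 ≤ Cg * (1 + ‖x‖ ^ 2) := (hgb x).2
          _ ≤ Cg * (2 * R ^ 2) := by gcongr
          _ ≤ _ := by
            have : 0 ≤ (1 + 2 * Cg + 4 * Cg ^ 2) * R ^ 2 := by positivity
            linarith
      have hdiff : g x - g y ≤ (1 + 2 * Cg) * R * ‖x - y‖ := by
        have : 0 ≤ kl / 2 * ‖y - x‖ ^ 2 := by positivity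
        have w : ‖Gg x‖ * ‖y - x‖ ≤ (1 + 2 * Cg) * R * ‖x - y‖ := by
          rw [norm_sub_rev y x]; gcongr
        linarith
      have hgx : g x ≤ Cg * (2 * R ^ 2) := by
        have e3 := (hgb x).1
        have e4 := le_abs_self (g x)
        have : Cg * (1 + ‖x‖ ^ 2) ≤ Cg * (2 * R ^ 2) := by gcongr
        linarith
      have hexp1 : 0 ≤ exp (γ * (t + τ)) - exp (γ * t) := by
        have : exp (γ * t) ≤ exp (γ * (t + τ)) := by apply exp_le_exp.2; gcongr; linarith
        linarith
      have hexp2 : exp (γ * (t + τ)) - exp (γ * t) ≤ E * (γ * τ) := by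
        have e1 : exp (γ * t) = exp (γ * (t + τ)) * exp (-(γ * τ)) := by rw [← exp_add]; ring_nf
        have e2 : 1 - γ * τ ≤ exp (-(γ * τ)) := by linarith [add_one_le_exp (-(γ * τ))]
        have e4 := exp_pos (γ * (t + τ))
        have : 0 ≤ γ * τ := by positivity
        calc exp (γ * (t + τ)) - exp (γ * t) = exp (γ * (t + τ)) * (1 - exp (-(γ * τ))) := by rw [e1]; ring
          _ ≤ exp (γ * (t + τ)) * (γ * τ) := by gcongr; linarith
          _ ≤ E * (γ * τ) := by
            have := hexp (t + τ) htτ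
            gcongr
      have a1 : (exp (γ * (t + τ)) - exp (γ * t)) * g x ≤ E * (γ * τ) * (Cg * (2 * R ^ 2)) := by
        calc _ ≤ (exp (γ * (t + τ)) - exp (γ * t)) * (Cg * (2 * R ^ 2)) := by gcongr
          _ ≤ _ := by gcongr
      have a2 : exp (γ * t) * (g x - g y) ≤ E * ((1 + 2 * Cg) * R * ‖x - y‖) := by
        calc _ ≤ exp (γ * t) * ((1 + 2 * Cg) * R * ‖x - y‖) := by gcongr
          _ ≤ _ := by
            have := hexp t (by linarith)
            gcongr
      have a3 : 0 ≤ E * (1 + 2 * Cg) * (τ * R ^ 2) := by positivity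
      have a4 : 0 ≤ E * (2 * γ * Cg) * (R * ‖x - y‖) := by positivity
      rw [hCf]
      linarith)
    (by
      intro τ R x y hτ hτ1 hR hx hy
      have e5 := hR1 x R hR hx
      have b1 := stA τ x hτ.le (by linarith)
      have hg1 := tan_lower h0 h0l y x
      have hi := (abs_le.1 (abs_real_inner_le_norm (G0 x) (y - x))).1
      rw [norm_sub_rev y x] at hi
      rw [hW0]
      have b2 : ‖G0 x‖ * ‖x - y‖ ≤ A / τ * ‖x - y‖ ^ 2 + τ / (4 * A) * ‖G0 x‖ ^ 2 := by
        have e : A / τ * ‖x - y‖ ^ 2 + τ / (4 * A) * ‖G0 x‖ ^ 2 - ‖G0 x‖ * ‖x - y‖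
          = A / τ * (‖x - y‖ - τ / (2 * A) * ‖G0 x‖) ^ 2 := by
          field_simp; ring
        have : 0 ≤ A / τ * (‖x - y‖ - τ / (2 * A) * ‖G0 x‖) ^ 2 := by positivity
        linarith
      have b3 : τ / (4 * A) * ‖G0 x‖ ^ 2 ≤ τ / (4 * A) * (Cv * (2 * R ^ 2)) := by
        have := (h0b x).2
        gcongr
        refine this.trans ?_
        gcongr
      have b4 : CA * (1 + ‖x‖ ^ 2) * τ ≤ CA * (2 * R ^ 2) * τ := by gcongr
      have b5 : 0 ≤ etal / 2 * ‖y - x‖ ^ 2 := by positivity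
      have b6 : τ * ((2 * CA + 2 * Cv / (4 * A)) * R ^ 2) = CA * (2 * R ^ 2) * τ + τ / (4 * A) * (Cv * (2 * R ^ 2)) := by
        field_simp
      rw [b6]
      linarith)
  obtain ⟨C, hC⟩ := stepC hT hApos hC0 hB
  have hCW : ∀ t x, 0 ≤ t → t ≤ T → |W t x| ≤ (|C| + Cv + CA * T) * (1 + ‖x‖ ^ 2) := by
    intro t x ht htT
    have c1 := hC t x ht htT
    have c2 := stA t x ht (by linarith)
    have c3 := le_abs_self C
    have c4 : C * (1 + ‖x‖ ^ 2) ≤ |C| * (1 + ‖x‖ ^ 2) := by gcongr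
    have c5 : 0 ≤ (Cv + CA * T) * (1 + ‖x‖ ^ 2) := by positivity
    have c6 := (abs_le.1 (h0b x).1).2
    have c7 : CA * (1 + ‖x‖ ^ 2) * t ≤ CA * (1 + ‖x‖ ^ 2) * T := by gcongr
    have c8 : 0 ≤ |C| * (1 + ‖x‖ ^ 2) := by positivity
    rw [abs_le]
    constructor <;> linarith
  refine ⟨|C| + Cv + CA * T, by positivity, fun t x ht htT => le_trans ?_ (hCW t x ht htT)⟩
  rw [hWdef]
  simp only
  rw [abs_mul, abs_of_pos (exp_pos _)]
  apply le_mul_of_one_le_left (abs_nonneg _)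
  apply one_le_exp
  positivity

/-- quadratic growth corrector -/
def wh {d : ℕ} (v : ℝ → Euc d → ℝ) (B t : ℝ) (x : Euc d) : ℝ := v t x + B * (1 + ‖x‖ ^ 2)

/-- strict supersolution obtained from the solution -/
def VV {d : ℕ} (v : ℝ → Euc d → ℝ) (ε L B t : ℝ) (x : Euc d) : ℝ :=
  v t x + ε * exp (L * t) * (wh v B t x) ^ 2

set_option maxHeartbeats 1000000 in
theorem super {d : ℕ} {κ γ : ℝ} {g : Euc d → ℝ} {v : ℝ → Euc d → ℝ}
    (hS : Sol (2 * κ) (fun _ => κ) (fun t x => g x - γ * v t x) v) (hκ : 0 < κ) (hγ : 0 ≤ γ)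
    {Cg C T L ε : ℝ} (hCg : 0 ≤ Cg) (hC : 0 ≤ C) (hε : 0 < ε)
    (hgb : ∀ x, |g x| ≤ Cg * (1 + ‖x‖ ^ 2))
    (hvb : ∀ t x, 0 ≤ t → t ≤ T → |v t x| ≤ C * (1 + ‖x‖ ^ 2))
    (hL : L = 8 * κ * (C + 2) ^ 2 + 2 * Cg + 2 * γ + 8 * κ * (C + 2) * d + 1)
    {t : ℝ} (ht : 0 < t) (htT : t ≤ T) (x : Euc d) :
    ∃ (P H : Fin d → ℝ) (D : ℝ), (∀ i, T2 (fun s => VV v ε L (C + 2) t (x + s • ei i)) (P i) (H i)) ∧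
      HasDerivAt (fun s => VV v ε L (C + 2) s x) D t ∧
      2 * κ * ∑ i, H i - κ * ∑ i, (P i) ^ 2 + g x - γ * VV v ε L (C + 2) t x < D := by
  obtain ⟨p, h, hT, hdt⟩ := hS.eq t ht x
  set B := C + 2 with hB
  set w := wh v B t x with hw
  set e := ε * exp (L * t) with he
  have he0 : 0 < e := by positivity
  set vt := 2 * κ * ∑ i, h i - κ * ∑ i, (p i) ^ 2 + (g x - γ * v t x) with hvt
  have hTw : ∀ i, T2 (fun s => wh v B t (x + s • ei i)) (p i + B * (2 * x i)) (h i + B * 2) := by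
    intro i
    refine ((hT i).add (((T2.const 1).add (T2.normSq x i)).const_mul B)).congr (fun s => ?_) ?_ ?_
    · simp only [wh]
    · ring
    · ring
  refine ⟨fun i => p i + e * (2 * w * (p i + B * (2 * x i))),
    fun i => h i + e * (2 * w * (h i + B * 2) + 2 * (p i + B * (2 * x i)) ^ 2),
    vt + e * (2 * w * vt + L * w ^ 2), ?_, ?_, ?_⟩
  · intro i
    refine ((hT i).add (((hTw i).mul (hTw i)).const_mul e)).congr (fun s => ?_) ?_ ?_
    · simp only [VV, he]; ring
    · simp only [zero_smul, add_zero, ← hw]; ring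
    · simp only [zero_smul, add_zero, ← hw]; ring
  · have h1 : HasDerivAt (fun s : ℝ => ε * exp (L * s)) (e * L) t := by
      have := (((hasDerivAt_id t).const_mul L).exp).const_mul ε
      refine this.congr_deriv ?_
      simp [he]; ring
    have h2 : HasDerivAt (fun s => wh v B s x) vt t := hdt.add_const _
    have := hdt.add (h1.mul (h2.pow 2))
    refine this.congr_deriv ?_
    simp only [Pi.pow_apply, ← hw, ← he, ← hvt]
    push_cast
    ring
  · have hV : VV v ε L B t x = v t x + e * w ^ 2 := rfl
    rw [hV]
    have hr0 : 0 ≤ ‖x‖ ^ 2 := by positivity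
    have hv := abs_le.1 (hvb t x ht.le htT)
    have hg := abs_le.1 (hgb x)
    have hw1 : w = v t x + B * (1 + ‖x‖ ^ 2) := rfl
    have hw2 : 2 * (1 + ‖x‖ ^ 2) ≤ w := by rw [hw1, hB]; linarith
    have hw3 : v t x ≤ w := by
      rw [hw1]
      have : 0 ≤ B * (1 + ‖x‖ ^ 2) := by rw [hB]; positivity
      linarith
    have hw4 : 2 ≤ w := by linarith
    have hw0 : 0 ≤ w := by linarith
    have hB0 : 0 ≤ B := by rw [hB]; linarith
    set b2 := ∑ i, (p i + B * (2 * x i)) ^ 2 with hb2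
    have hb20 : 0 ≤ b2 := Finset.sum_nonneg fun i _ => sq_nonneg _
    have sH : ∑ i, (h i + e * (2 * w * (h i + B * 2) + 2 * (p i + B * (2 * x i)) ^ 2))
        = (1 + 2 * e * w) * ∑ i, h i + 4 * e * w * B * d + 2 * e * b2 := by
      rw [hb2, Finset.mul_sum, Finset.mul_sum]
      have : (4 * e * w * B * d : ℝ) = ∑ i : Fin d, 4 * e * w * B := by simp; ring
      rw [this, ← Finset.sum_add_distrib, ← Finset.sum_add_distrib]
      apply Finset.sum_congr rfl
      intro i _; ring
    have sP : ∑ i, (p i + e * (2 * w * (p i + B * (2 * x i)))) ^ 2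
        = (1 + 2 * e * w) * ∑ i, (p i) ^ 2 + (2 * e * w + 4 * e ^ 2 * w ^ 2) * b2
          - 2 * e * w * (4 * B ^ 2) * ‖x‖ ^ 2 := by
      rw [hb2, ← sum_sq_coord x, Finset.mul_sum, Finset.mul_sum, Finset.mul_sum, ← Finset.sum_add_distrib,
        ← Finset.sum_sub_distrib]
      apply Finset.sum_congr rfl
      intro i _; ring
    simp only [sH, sP]
    have main : 0 < 2 * κ * w * b2 - 2 * κ * w * (4 * B ^ 2 * ‖x‖ ^ 2) + L * w ^ 2 + 2 * w * (g x - γ * v t x)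
        - 8 * κ * B * d * w - 4 * κ * b2 + γ * w ^ 2 + 4 * κ * e * w ^ 2 * b2 := by
      have m1 : 4 * κ * b2 ≤ 2 * κ * w * b2 := by
        have : 0 ≤ (w - 2) * (2 * κ * b2) := mul_nonneg (by linarith) (by positivity)
        linarith
      have m2 : 2 * κ * w * (4 * B ^ 2 * ‖x‖ ^ 2) ≤ 8 * κ * B ^ 2 * w ^ 2 := by
        have : 0 ≤ (w - ‖x‖ ^ 2) * (8 * κ * B ^ 2 * w) := mul_nonneg (by linarith) (by positivity)
        linarith
      have m3 : -(2 * Cg * w ^ 2) ≤ 2 * w * g x := by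
        have : 0 ≤ (w - (1 + ‖x‖ ^ 2)) * (2 * Cg * w) := mul_nonneg (by linarith) (by positivity)
        have : 0 ≤ (g x + Cg * (1 + ‖x‖ ^ 2)) * (2 * w) := mul_nonneg (by linarith) (by positivity)
        linarith
      have m4 : 2 * w * (γ * v t x) ≤ 2 * γ * w ^ 2 := by
        have : 0 ≤ (w - v t x) * (2 * γ * w) := mul_nonneg (by linarith) (by positivity)
        linarith
      have m5 : 8 * κ * B * d * w ≤ 8 * κ * B * d * w ^ 2 := by
        have : 0 ≤ (w - 1) * (8 * κ * B * d * w) := mul_nonneg (by linarith) (by positivity)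
        linarith
      have m6 : 0 ≤ 4 * κ * e * w ^ 2 * b2 := by positivity
      have m7 : 0 ≤ γ * w ^ 2 := by positivity
      have m8 : 0 < w ^ 2 := by positivity
      rw [hL]
      linarith
    have := mul_pos he0 main
    rw [hvt]
    linarith

theorem VV_lower {d : ℕ} {v : ℝ → Euc d → ℝ} {C T L ε : ℝ} (hC : 0 ≤ C) (hε : 0 < ε) (hL : 0 ≤ L)
    (hvb : ∀ t x, 0 ≤ t → t ≤ T → |v t x| ≤ C * (1 + ‖x‖ ^ 2)) {t : ℝ} (ht : 0 ≤ t) (htT : t ≤ T) (x : Euc d) :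
    v t x + 4 * ε * (1 + ‖x‖ ^ 2) ^ 2 ≤ VV v ε L (C + 2) t x := by
  have hv := abs_le.1 (hvb t x ht htT)
  have hw : 2 * (1 + ‖x‖ ^ 2) ≤ wh v (C + 2) t x := by simp only [wh]; linarith
  have h1 : (2 * (1 + ‖x‖ ^ 2)) ^ 2 ≤ (wh v (C + 2) t x) ^ 2 := by gcongr
  have h2 : 1 ≤ exp (L * t) := one_le_exp (by positivity)
  simp only [VV]
  have h3 : 0 ≤ (exp (L * t) - 1) * (ε * (wh v (C + 2) t x) ^ 2) := mul_nonneg (by linarith) (by positivity)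
  have h4 := mul_le_mul_of_nonneg_left h1 hε.le
  linarith

theorem VV_cont {d : ℕ} {v : ℝ → Euc d → ℝ} {ε L B : ℝ}
    (hc : ContinuousOn (fun q : ℝ × Euc d => v q.1 q.2) (Ici 0 ×ˢ univ)) :
    ContinuousOn (fun q : ℝ × Euc d => VV v ε L B q.1 q.2) (Ici 0 ×ˢ univ) := by
  unfold VV wh
  fun_prop

theorem cont_comp {d : ℕ} {u : ℝ → Euc d → ℝ} {T R : ℝ}
    (hc : ContinuousOn (fun q : ℝ × Euc d => u q.1 q.2) (Ici 0 ×ˢ univ)) (a : ℝ) :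
    ContinuousOn (fun q : ℝ × (Euc d × Euc d) => u q.1 (q.2.1 + a • q.2.2))
      (Icc 0 T ×ˢ (Metric.closedBall 0 R ×ˢ Metric.closedBall 0 R)) := by
  refine hc.comp (f := fun q : ℝ × (Euc d × Euc d) => (q.1, q.2.1 + a • q.2.2)) ?_ ?_
  · fun_prop
  · intro q hq; exact ⟨hq.1.1, trivial⟩

theorem mem_box {d : ℕ} {T R t : ℝ} {m ξ : Euc d} (ht : 0 ≤ t) (htT : t ≤ T) (hR : 0 ≤ R)
    (h : ‖m‖ ^ 2 + ‖ξ‖ ^ 2 ≤ R ^ 2) :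
    ((t, m, ξ) : ℝ × (Euc d × Euc d)) ∈ Icc 0 T ×ˢ (Metric.closedBall 0 R ×ˢ Metric.closedBall 0 R) := by
  refine ⟨⟨ht, htT⟩, ?_, ?_⟩
  · simp only [Metric.mem_closedBall, dist_zero_right]
    exact abs_le_of_sq_le_sq' (by nlinarith [sq_nonneg ‖ξ‖]) hR |>.2
  · simp only [Metric.mem_closedBall, dist_zero_right]
    exact abs_le_of_sq_le_sq' (by nlinarith [sq_nonneg ‖m‖]) hR |>.2

theorem par {d : ℕ} (m ξ : Euc d) : ‖m + ξ‖ ^ 2 + ‖m - ξ‖ ^ 2 = 2 * (‖m‖ ^ 2 + ‖ξ‖ ^ 2) := by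
  rw [norm_add_sq_real, norm_sub_sq_real]; ring

theorem sum_sq_shift {d : ℕ} {p a b : Fin d → ℝ} {ξ : Euc d} {c : ℝ}
    (h1 : ∀ i, a i = p i + c * ξ i) (h2 : ∀ i, b i = p i - c * ξ i) :
    ∑ i, (a i) ^ 2 + ∑ i, (b i) ^ 2 = 2 * ∑ i, (p i) ^ 2 + 2 * c ^ 2 * ‖ξ‖ ^ 2 := by
  rw [← sum_sq_coord ξ, Finset.mul_sum, Finset.mul_sum, ← Finset.sum_add_distrib, ← Finset.sum_add_distrib]
  apply Finset.sum_congr rfl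
  intro i _
  rw [h1, h2]; ring

set_option maxHeartbeats 1000000 in
theorem stepD {d : ℕ} {κ γ : ℝ} {g : Euc d → ℝ} {v : ℝ → Euc d → ℝ}
    (hS : Sol (2 * κ) (fun _ => κ) (fun t x => g x - γ * v t x) v) (hκ : 0 < κ) (hγ : 0 ≤ γ)
    {Cg C T kl : ℝ} (hCg : 0 ≤ Cg) (hC : 0 ≤ C) (hT : 0 ≤ T)
    (hgb : ∀ x, |g x| ≤ Cg * (1 + ‖x‖ ^ 2))
    (hvb : ∀ t x, 0 ≤ t → t ≤ T → |v t x| ≤ C * (1 + ‖x‖ ^ 2))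
    {θ : ℝ → ℝ}
    (hθ : ∀ t ≥ (0:ℝ), HasDerivAt θ (kl - γ * θ t - 4 * κ * θ t ^ 2) t)
    (hgm : ∀ m ξ : Euc d, kl * ‖ξ‖ ^ 2 ≤ g (m + ξ) + g (m - ξ) - 2 * g m)
    (h0m : ∀ m ξ : Euc d, θ 0 * ‖ξ‖ ^ 2 ≤ v 0 (m + ξ) + v 0 (m - ξ) - 2 * v 0 m)
    (m1 ξ1 : Euc d) :
    θ T * ‖ξ1‖ ^ 2 ≤ v T (m1 + ξ1) + v T (m1 - ξ1) - 2 * v T m1 := by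
  by_contra hcon
  push Not at hcon
  obtain ⟨L, hL⟩ : ∃ L : ℝ, L = 8 * κ * (C + 2) ^ 2 + 2 * Cg + 2 * γ + 8 * κ * (C + 2) * d + 1 := ⟨_, rfl⟩
  have hL0 : 0 ≤ L := by rw [hL]; positivity
  obtain ⟨ε, hε, hεp⟩ : ∃ ε > 0, 0 < 2 * v T m1 - VV v ε L (C + 2) T (m1 + ξ1)
      - VV v ε L (C + 2) T (m1 - ξ1) + θ T * ‖ξ1‖ ^ 2 := by
    have hcont : Continuous fun ε : ℝ => 2 * v T m1 - VV v ε L (C + 2) T (m1 + ξ1)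
      - VV v ε L (C + 2) T (m1 - ξ1) + θ T * ‖ξ1‖ ^ 2 := by unfold VV; fun_prop
    have h0 : ∀ᶠ ε in 𝓝[>] (0:ℝ), 0 < 2 * v T m1 - VV v ε L (C + 2) T (m1 + ξ1)
      - VV v ε L (C + 2) T (m1 - ξ1) + θ T * ‖ξ1‖ ^ 2 := by
      apply nhdsWithin_le_nhds
      apply hcont.continuousAt.eventually (lt_mem_nhds _)
      simp only [VV]; linarith
    obtain ⟨ε, h1, h2⟩ := (h0.and self_mem_nhdsWithin).exists
    exact ⟨ε, h2, h1⟩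
  have hθc : ContinuousOn θ (Icc 0 T) := fun s hs => (hθ s hs.1).continuousAt.continuousWithinAt
  obtain ⟨Θ, hΘ⟩ := isCompact_Icc.exists_bound_of_continuousOn hθc
  have hΘ0 : 0 ≤ Θ := (norm_nonneg _).trans (hΘ 0 ⟨le_rfl, hT⟩)
  set V := VV v ε L (C + 2) with hVdef
  have hVl : ∀ t x, 0 ≤ t → t ≤ T → v t x + 4 * ε * (1 + ‖x‖ ^ 2) ^ 2 ≤ V t x :=
    fun t x h1 h2 => VV_lower hC hε hL0 hvb h1 h2 x
  set Φ : ℝ × (Euc d × Euc d) → ℝ := fun q => 2 * v q.1 (q.2.1 + (0:ℝ) • q.2.2) - V q.1 (q.2.1 + (1:ℝ) • q.2.2)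
    - V q.1 (q.2.1 + (-1:ℝ) • q.2.2) + θ q.1 * ‖q.2.2‖ ^ 2 with hΦ
  have hΦe : ∀ t m ξ, Φ (t, m, ξ) = 2 * v t m - V t (m + ξ) - V t (m - ξ) + θ t * ‖ξ‖ ^ 2 := by
    intro t m ξ
    simp only [hΦ, zero_smul, add_zero, one_smul, neg_smul, ← sub_eq_add_neg]
  obtain ⟨R, hRdef⟩ : ∃ R : ℝ, R = (4 * C + Θ) / (8 * ε) + 1 := ⟨_, rfl⟩
  have hR1 : 1 ≤ R := by
    have : 0 ≤ (4 * C + Θ) / (8 * ε) := by positivity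
    linarith
  have hmax := max_exists Φ {q | 0 ≤ q.1 ∧ q.1 ≤ T}
    (Icc 0 T ×ˢ (Metric.closedBall 0 R ×ˢ Metric.closedBall 0 R)) (T, m1, ξ1) ⟨hT, le_rfl⟩
    (isCompact_Icc.prod ((isCompact_closedBall _ _).prod (isCompact_closedBall _ _)))
    (by
      have c1 := cont_comp (T := T) (R := R) hS.cont 0
      have c2 := cont_comp (T := T) (R := R) (VV_cont (ε := ε) (L := L) (B := C + 2) hS.cont) 1
      have c3 := cont_comp (T := T) (R := R) (VV_cont (ε := ε) (L := L) (B := C + 2) hS.cont) (-1)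
      have c4 : ContinuousOn (fun q : ℝ × (Euc d × Euc d) => θ q.1 * ‖q.2.2‖ ^ 2)
          (Icc 0 T ×ˢ (Metric.closedBall 0 R ×ˢ Metric.closedBall 0 R)) := by
        refine ContinuousOn.mul (hθc.comp continuous_fst.continuousOn fun q hq => hq.1) ?_
        fun_prop
      exact (((c1.const_smul (2:ℝ)).sub c2).sub c3).add c4)
    (by
      rintro ⟨t, m, ξ⟩ ⟨ht, htT⟩ hge
      simp only at ht htT
      rw [hΦe, hΦe] at hge
      have hpos := hεp.trans_le hge
      apply mem_box ht htT (by linarith)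
      have hp := par m ξ
      have b1 := abs_le.1 (hvb t m ht htT)
      have b2 := abs_le.1 (hvb t (m + ξ) ht htT)
      have b3 := abs_le.1 (hvb t (m - ξ) ht htT)
      have l1 := hVl t (m + ξ) ht htT
      have l2 := hVl t (m - ξ) ht htT
      have l3 : θ t * ‖ξ‖ ^ 2 ≤ Θ * ‖ξ‖ ^ 2 :=
        mul_le_mul_of_nonneg_right ((le_abs_self _).trans (hΘ t ⟨ht, htT⟩)) (by positivity)
      obtain ⟨A, hA⟩ : ∃ A, A = ‖m + ξ‖ ^ 2 := ⟨_, rfl⟩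
      obtain ⟨A', hA'⟩ : ∃ A, A = ‖m - ξ‖ ^ 2 := ⟨_, rfl⟩
      have ha0 : 0 ≤ ‖m‖ ^ 2 := by positivity
      have hb0 : 0 ≤ ‖ξ‖ ^ 2 := by positivity
      rw [← hA] at hp b2 l1
      rw [← hA'] at hp b3 l2
      obtain ⟨r, hr⟩ : ∃ r, r = ‖m‖ ^ 2 + ‖ξ‖ ^ 2 := ⟨_, rfl⟩
      rw [← hr] at hp ⊢
      have q1 : 2 * (1 + r) ^ 2 ≤ (1 + A) ^ 2 + (1 + A') ^ 2 := by
        have : A' = 2 * r - A := by linarith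
        rw [this]; nlinarith [sq_nonneg (A - r)]
      have q2 := mul_le_mul_of_nonneg_left q1 hε.le
      have r0 : 0 ≤ r := by linarith
      have q3 : C * ‖m‖ ^ 2 ≤ C * r := mul_le_mul_of_nonneg_left (by linarith) hC
      have q4 : Θ * ‖ξ‖ ^ 2 ≤ Θ * r := mul_le_mul_of_nonneg_left (by linarith) hΘ0
      have q5 : C * A + C * A' = C * (2 * r) := by rw [← hp]; ring
      have q6 : 0 < (1 + r) * ((4 * C + Θ) - 8 * ε * (1 + r)) := by
        linarith
      have q7 : 8 * ε * (1 + r) < 4 * C + Θ := by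
        have := pos_of_mul_pos_right q6 (by linarith)
        linarith
      have q8 : r ≤ R := by
        have : (1 + r) < (4 * C + Θ) / (8 * ε) := by
          rw [lt_div_iff₀ (by positivity)]; linarith
        linarith
      calc r ≤ R := q8
        _ ≤ R ^ 2 := by nlinarith)
  obtain ⟨⟨t, m, ξ⟩, hK, hge, hM⟩ := hmax
  have htT : t ≤ T := hK.1.2
  have ht0 : 0 ≤ t := hK.1.1
  have hpos : 0 < Φ (t, m, ξ) := by
    rw [hΦe] at hge
    exact hεp.trans_le hge
  have hM' : ∀ t' m' ξ', 0 ≤ t' → t' ≤ T →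
      2 * v t' m' - V t' (m' + ξ') - V t' (m' - ξ') + θ t' * ‖ξ'‖ ^ 2
      ≤ 2 * v t m - V t (m + ξ) - V t (m - ξ) + θ t * ‖ξ‖ ^ 2 := by
    intro t' m' ξ' h1 h2
    have := hM (t', m', ξ') ⟨h1, h2⟩
    rwa [hΦe, hΦe] at this
  rw [hΦe] at hpos
  clear hM hK hge hεp
  have ht : 0 < t := by
    rcases eq_or_lt_of_le ht0 with h | h
    · exfalso
      rw [← h] at hpos
      have a1 := hVl 0 (m + ξ) le_rfl hT
      have a2 := hVl 0 (m - ξ) le_rfl hT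
      have a3 := h0m m ξ
      have a4 : 0 ≤ 4 * ε * (1 + ‖m + ξ‖ ^ 2) ^ 2 := by positivity
      have a5 : 0 ≤ 4 * ε * (1 + ‖m - ξ‖ ^ 2) ^ 2 := by positivity
      linarith
    · exact h
  obtain ⟨p, h, hT2, hdt⟩ := hS.eq t ht m
  obtain ⟨Px, Hx, Dx, hTx, hdx, hsx⟩ := super hS hκ hγ hCg hC hε hgb hvb hL ht htT (m + ξ)
  obtain ⟨Pz, Hz, Dz, hTz, hdz, hsz⟩ := super hS hκ hγ hCg hC hε hgb hvb hL ht htT (m - ξ)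
  rw [← hVdef] at hTx hTz hdx hdz hsx hsz
  have k1 : ∀ i, 2 * p i - Px i - Pz i = 0 ∧ 2 * h i - Hx i - Hz i ≤ 0 := by
    intro i
    refine ((((hT2 i).const_mul 2).sub (hTx i)).sub (hTz i)).localMax (Eventually.of_forall fun s => ?_)
    have := hM' t (m + s • ei i) ξ ht.le htT
    rw [show m + s • ei i + ξ = m + ξ + s • ei i by module,
      show m + s • ei i - ξ = m - ξ + s • ei i by module] at this
    simp only [zero_smul, add_zero]
    linarith
  have k2 : ∀ i, θ t * (2 * ξ i) - Px i - (-1) * Pz i = 0 := by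
    intro i
    refine (((((T2.normSq ξ i).const_mul (θ t)).sub (hTx i)).sub
      ((hTz i).scale (-1))).localMax (Eventually.of_forall fun s => ?_)).1
    have := hM' t m (ξ + s • ei i) ht.le htT
    rw [show m + (ξ + s • ei i) = m + ξ + s • ei i by module,
      show m - (ξ + s • ei i) = m - ξ + (-1 * s) • ei i by module] at this
    simp only [zero_smul, add_zero, mul_zero]
    linarith
  have k3 := left_max_deriv (((((hdt.const_mul 2).sub hdx).sub hdz).add
    ((hθ t ht.le).mul_const (‖ξ‖ ^ 2)))) (by
      have : ∀ᶠ u in 𝓝[<] t, 0 < u := nhdsWithin_le_nhds (lt_mem_nhds ht)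
      filter_upwards [this, self_mem_nhdsWithin] with u hu hut
      have hut' : u < t := hut
      exact hM' u m ξ hu.le (by linarith))
  have hss := sum_sq_shift (p := p) (a := Px) (b := Pz) (ξ := ξ) (c := θ t)
    (fun i => by linarith [(k1 i).1, k2 i]) (fun i => by linarith [(k1 i).1, k2 i])
  have hHH : 2 * ∑ i, h i - ∑ i, Hx i - ∑ i, Hz i ≤ 0 := by
    rw [Finset.mul_sum, ← Finset.sum_sub_distrib, ← Finset.sum_sub_distrib]
    exact Finset.sum_nonpos fun i _ => (k1 i).2
  have hHH2 := mul_nonneg_of_nonpos_of_nonpos hHH (by linarith : -(2 * κ) ≤ 0)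
  have hgmm := hgm m ξ
  have hγp := mul_nonneg hγ hpos.le
  have hss2 := congrArg (fun z => κ * z) hss
  have hfin : 0 ≤ κ * (θ t ^ 2 * ‖ξ‖ ^ 2) := by positivity
  linarith

set_option maxHeartbeats 1000000 in
theorem stepE {d : ℕ} {κ γ : ℝ} {g : Euc d → ℝ} {v : ℝ → Euc d → ℝ}
    (hS : Sol (2 * κ) (fun _ => κ) (fun t x => g x - γ * v t x) v) (hκ : 0 < κ) (hγ : 0 ≤ γ)
    {Cg C T ku Λ : ℝ} (hCg : 0 ≤ Cg) (hC : 0 ≤ C) (hT : 0 ≤ T)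
    (hgb : ∀ x, |g x| ≤ Cg * (1 + ‖x‖ ^ 2))
    (hvb : ∀ t x, 0 ≤ t → t ≤ T → |v t x| ≤ C * (1 + ‖x‖ ^ 2))
    (hΛ0 : 0 ≤ Λ) (hΛ : ku ≤ 2 * κ * Λ ^ 2)
    (hgm : ∀ m ξ : Euc d, g (m + ξ) + g (m - ξ) - 2 * g m ≤ ku * ‖ξ‖ ^ 2)
    (h0m : ∀ m ξ : Euc d, v 0 (m + ξ) + v 0 (m - ξ) - 2 * v 0 m ≤ Λ * ‖ξ‖ ^ 2)
    (m1 ξ1 : Euc d) :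
    v T (m1 + ξ1) + v T (m1 - ξ1) - 2 * v T m1 ≤ Λ * ‖ξ1‖ ^ 2 := by
  by_contra hcon
  push Not at hcon
  obtain ⟨L, hL⟩ : ∃ L : ℝ, L = 8 * κ * (C + 2) ^ 2 + 2 * Cg + 2 * γ + 8 * κ * (C + 2) * d + 1 := ⟨_, rfl⟩
  have hL0 : 0 ≤ L := by rw [hL]; positivity
  obtain ⟨ε, hε, hεp⟩ : ∃ ε > 0, 0 < v T (m1 + ξ1) + v T (m1 - ξ1) - 2 * VV v ε L (C + 2) T m1
      - (Λ * ‖ξ1‖ ^ 2 + ε * (‖ξ1‖ ^ 2 * ‖ξ1‖ ^ 2)) := by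
    have hcont : Continuous fun ε : ℝ => v T (m1 + ξ1) + v T (m1 - ξ1) - 2 * VV v ε L (C + 2) T m1
      - (Λ * ‖ξ1‖ ^ 2 + ε * (‖ξ1‖ ^ 2 * ‖ξ1‖ ^ 2)) := by unfold VV; fun_prop
    have h0 : ∀ᶠ ε in 𝓝[>] (0:ℝ), 0 < v T (m1 + ξ1) + v T (m1 - ξ1) - 2 * VV v ε L (C + 2) T m1
      - (Λ * ‖ξ1‖ ^ 2 + ε * (‖ξ1‖ ^ 2 * ‖ξ1‖ ^ 2)) := by
      apply nhdsWithin_le_nhds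
      apply hcont.continuousAt.eventually (lt_mem_nhds _)
      simp only [VV]; linarith
    obtain ⟨ε, h1, h2⟩ := (h0.and self_mem_nhdsWithin).exists
    exact ⟨ε, h2, h1⟩
  set V := VV v ε L (C + 2) with hVdef
  have hVl : ∀ t x, 0 ≤ t → t ≤ T → v t x + 4 * ε * (1 + ‖x‖ ^ 2) ^ 2 ≤ V t x :=
    fun t x h1 h2 => VV_lower hC hε hL0 hvb h1 h2 x
  set Φ : ℝ × (Euc d × Euc d) → ℝ := fun q => v q.1 (q.2.1 + (1:ℝ) • q.2.2)
    + v q.1 (q.2.1 + (-1:ℝ) • q.2.2) - 2 * V q.1 (q.2.1 + (0:ℝ) • q.2.2)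
    - (Λ * ‖q.2.2‖ ^ 2 + ε * (‖q.2.2‖ ^ 2 * ‖q.2.2‖ ^ 2)) with hΦ
  have hΦe : ∀ t m ξ, Φ (t, m, ξ) = v t (m + ξ) + v t (m - ξ) - 2 * V t m
      - (Λ * ‖ξ‖ ^ 2 + ε * (‖ξ‖ ^ 2 * ‖ξ‖ ^ 2)) := by
    intro t m ξ
    simp only [hΦ, zero_smul, add_zero, one_smul, neg_smul, ← sub_eq_add_neg]
  obtain ⟨R, hRdef⟩ : ∃ R : ℝ, R = 16 * C / ε + 1 := ⟨_, rfl⟩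
  have hR1 : 1 ≤ R := by
    have : 0 ≤ 16 * C / ε := by positivity
    linarith
  have hmax := max_exists Φ {q | 0 ≤ q.1 ∧ q.1 ≤ T}
    (Icc 0 T ×ˢ (Metric.closedBall 0 R ×ˢ Metric.closedBall 0 R)) (T, m1, ξ1) ⟨hT, le_rfl⟩
    (isCompact_Icc.prod ((isCompact_closedBall _ _).prod (isCompact_closedBall _ _)))
    (by
      have c1 := cont_comp (T := T) (R := R) hS.cont 1
      have c2 := cont_comp (T := T) (R := R) hS.cont (-1)
      have c3 := cont_comp (T := T) (R := R) (VV_cont (ε := ε) (L := L) (B := C + 2) hS.cont) 0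
      have c4 : ContinuousOn (fun q : ℝ × (Euc d × Euc d) => Λ * ‖q.2.2‖ ^ 2 + ε * (‖q.2.2‖ ^ 2 * ‖q.2.2‖ ^ 2))
          (Icc 0 T ×ˢ (Metric.closedBall 0 R ×ˢ Metric.closedBall 0 R)) := by
        fun_prop
      exact ((c1.add c2).sub (c3.const_smul (2:ℝ))).sub c4)
    (by
      rintro ⟨t, m, ξ⟩ ⟨ht, htT⟩ hge
      simp only at ht htT
      rw [hΦe, hΦe] at hge
      have hpos := hεp.trans_le hge
      apply mem_box ht htT (by linarith)
      have hp := par m ξ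
      have b1 := abs_le.1 (hvb t m ht htT)
      have b2 := abs_le.1 (hvb t (m + ξ) ht htT)
      have b3 := abs_le.1 (hvb t (m - ξ) ht htT)
      have l1 := hVl t m ht htT
      have ha0 : 0 ≤ ‖m‖ ^ 2 := by positivity
      have hb0 : 0 ≤ ‖ξ‖ ^ 2 := by positivity
      have l3 : 0 ≤ Λ * ‖ξ‖ ^ 2 := by positivity
      obtain ⟨a, ha⟩ : ∃ A, A = ‖m‖ ^ 2 := ⟨_, rfl⟩
      obtain ⟨b, hb⟩ : ∃ A, A = ‖ξ‖ ^ 2 := ⟨_, rfl⟩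
      rw [← ha] at b1 l1 ha0 hp ⊢
      rw [← hb] at hpos hb0 l3 hp ⊢
      have q5 : C * ‖m + ξ‖ ^ 2 + C * ‖m - ξ‖ ^ 2 = C * (2 * (a + b)) := by rw [← hp]; ring
      have q3 : 0 ≤ C * b := by positivity
      have q4 : ε * a ^ 2 ≤ ε * (1 + a) ^ 2 := mul_le_mul_of_nonneg_left (by nlinarith) hε.le
      have q6 : ε * (a + b) ^ 2 ≤ ε * (2 * a ^ 2 + 2 * b ^ 2) :=
        mul_le_mul_of_nonneg_left (by nlinarith [sq_nonneg (a - b)]) hε.le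
      have q7 : 0 ≤ ε * a ^ 2 := by positivity
      by_cases hr : a + b ≤ 1
      · nlinarith
      · push Not at hr
        have q9 : C * 1 ≤ C * (a + b) := mul_le_mul_of_nonneg_left hr.le hC
        have q8 : 0 < (a + b) * (16 * C - ε * (a + b)) := by linarith
        have q10 := pos_of_mul_pos_right q8 (by linarith)
        have q11 : (a + b) ≤ R := by
          have : (a + b) < 16 * C / ε := by
            rw [lt_div_iff₀ (by positivity)]; linarith
          linarith
        calc a + b ≤ R := q11
          _ ≤ R ^ 2 := by nlinarith)
  obtain ⟨⟨t, m, ξ⟩, hK, hge, hM⟩ := hmax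
  have htT : t ≤ T := hK.1.2
  have ht0 : 0 ≤ t := hK.1.1
  have hpos : 0 < Φ (t, m, ξ) := by
    rw [hΦe] at hge
    exact hεp.trans_le hge
  have hM' : ∀ t' m' ξ', 0 ≤ t' → t' ≤ T →
      v t' (m' + ξ') + v t' (m' - ξ') - 2 * V t' m' - (Λ * ‖ξ'‖ ^ 2 + ε * (‖ξ'‖ ^ 2 * ‖ξ'‖ ^ 2))
      ≤ v t (m + ξ) + v t (m - ξ) - 2 * V t m - (Λ * ‖ξ‖ ^ 2 + ε * (‖ξ‖ ^ 2 * ‖ξ‖ ^ 2)) := by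
    intro t' m' ξ' h1 h2
    have := hM (t', m', ξ') ⟨h1, h2⟩
    rwa [hΦe, hΦe] at this
  rw [hΦe] at hpos
  clear hM hK hge hεp
  have hq0 : 0 ≤ ε * (‖ξ‖ ^ 2 * ‖ξ‖ ^ 2) := by positivity
  have hq1 : 0 ≤ Λ * ‖ξ‖ ^ 2 := by positivity
  have ht : 0 < t := by
    rcases eq_or_lt_of_le ht0 with h | h
    · exfalso
      rw [← h] at hpos
      have a1 := hVl 0 m le_rfl hT
      have a3 := h0m m ξ
      have a4 : 0 ≤ 4 * ε * (1 + ‖m‖ ^ 2) ^ 2 := by positivity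
      linarith
    · exact h
  obtain ⟨P, H, D, hT2, hdt, hs⟩ := super hS hκ hγ hCg hC hε hgb hvb hL ht htT m
  obtain ⟨px, hx, hTx, hdx⟩ := hS.eq t ht (m + ξ)
  obtain ⟨pz, hz, hTz, hdz⟩ := hS.eq t ht (m - ξ)
  rw [← hVdef] at hT2 hdt hs
  have k1 : ∀ i, px i + pz i - 2 * P i = 0 ∧ hx i + hz i - 2 * H i ≤ 0 := by
    intro i
    refine (((hTx i).add (hTz i)).sub ((hT2 i).const_mul 2)).localMax (Eventually.of_forall fun s => ?_)
    have := hM' t (m + s • ei i) ξ ht.le htT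
    rw [show m + s • ei i + ξ = m + ξ + s • ei i by module,
      show m + s • ei i - ξ = m - ξ + s • ei i by module] at this
    simp only [zero_smul, add_zero]
    linarith
  obtain ⟨φ, hφ⟩ : ∃ φ, φ = Λ + 2 * ε * ‖ξ‖ ^ 2 := ⟨_, rfl⟩
  have k2 : ∀ i, px i + (-1) * pz i - (Λ * (2 * ξ i) + ε * (2 * ξ i * ‖ξ + (0:ℝ) • ei i‖ ^ 2
      + ‖ξ + (0:ℝ) • ei i‖ ^ 2 * (2 * ξ i))) = 0 := by
    intro i
    have hn := T2.normSq ξ i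
    refine ((((hTx i).add ((hTz i).scale (-1))).sub ((hn.const_mul Λ).add
      ((hn.mul hn).const_mul ε))).localMax (Eventually.of_forall fun s => ?_)).1
    have := hM' t m (ξ + s • ei i) ht.le htT
    rw [show m + (ξ + s • ei i) = m + ξ + s • ei i by module,
      show m - (ξ + s • ei i) = m - ξ + (-1 * s) • ei i by module] at this
    simp only [zero_smul, add_zero, mul_zero]
    linarith
  simp only [zero_smul, add_zero] at k2
  have k3 := left_max_deriv ((hdx.add hdz).sub (hdt.const_mul 2)) (by
      have : ∀ᶠ u in 𝓝[<] t, 0 < u := nhdsWithin_le_nhds (lt_mem_nhds ht)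
      filter_upwards [this, self_mem_nhdsWithin] with u hu hut
      have hut' : u < t := hut
      have := hM' u m ξ hu.le (by linarith)
      simp only [Pi.add_apply, Pi.sub_apply]
      linarith)
  have hss := sum_sq_shift (p := P) (a := px) (b := pz) (ξ := ξ) (c := φ)
    (fun i => by rw [hφ]; linarith [(k1 i).1, k2 i]) (fun i => by rw [hφ]; linarith [(k1 i).1, k2 i])
  have hHH : ∑ i, hx i + ∑ i, hz i - 2 * ∑ i, H i ≤ 0 := by
    rw [Finset.mul_sum, ← Finset.sum_add_distrib, ← Finset.sum_sub_distrib]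
    exact Finset.sum_nonpos fun i _ => (k1 i).2
  have hHH2 := mul_nonneg_of_nonpos_of_nonpos hHH (by linarith : -(2 * κ) ≤ 0)
  have hgmm := hgm m ξ
  have hγp := mul_nonneg hγ (by linarith : 0 ≤ v t (m + ξ) + v t (m - ξ) - 2 * V t m)
  have hss2 := congrArg (fun z => κ * z) hss
  have hφΛ : Λ ≤ φ := by
    rw [hφ]
    have : 0 ≤ 2 * ε * ‖ξ‖ ^ 2 := by positivity
    linarith
  have hfin : ku * ‖ξ‖ ^ 2 ≤ 2 * κ * φ ^ 2 * ‖ξ‖ ^ 2 := by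
    apply mul_le_mul_of_nonneg_right _ (by positivity)
    refine hΛ.trans ?_
    gcongr
  linarith

theorem grad_lower {d : ℕ} {F : Euc d → ℝ} (hF : ContDiff ℝ 2 F) {c : ℝ}
    (h : ∀ m ξ : Euc d, c * ‖ξ‖ ^ 2 ≤ F (m + ξ) + F (m - ξ) - 2 * F m) (x y : Euc d) :
    c * ‖x - y‖ ^ 2 ≤ ⟪gradient F x - gradient F y, x - y⟫ := by
  have hess : ∀ x e : Euc d, c * ‖e‖ ^ 2 ≤ ⟪fderiv ℝ (gradient F) x e, e⟫ := by
    intro x e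
    have hT := T2_line hF x e
    have := (((T2.quad 0 0 (c * ‖e‖ ^ 2)).sub hT).sub (hT.scale (-1))).localMax
      (Eventually.of_forall fun s => by
        have := h x (s • e)
        rw [norm_smul, mul_pow, Real.norm_eq_abs, sq_abs] at this
        have e1 : x + (-1 * s) • e = x - s • e := by module
        simp only [e1, mul_zero, zero_smul, add_zero]
        linarith)
    linarith [this.2]
  have hG := (contDiff_gradient hF).differentiable (by norm_num)
  generalize hξ : x - y = ξ
  have hd : ∀ s : ℝ, HasDerivAt (fun s : ℝ => ⟪gradient F (y + s • ξ), ξ⟫ - c * ‖ξ‖ ^ 2 * s)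
      (⟪fderiv ℝ (gradient F) (y + s • ξ) ξ, ξ⟫ - c * ‖ξ‖ ^ 2 * 1) s := by
    intro s
    have h1 : HasDerivAt (fun s : ℝ => y + s • ξ) ξ s := by
      simpa using ((hasDerivAt_id s).smul_const ξ).const_add y
    have h2 := (hG (y + s • ξ)).hasFDerivAt.comp_hasDerivAt s h1
    have h3 := h2.inner ℝ (hasDerivAt_const s ξ)
    have h4 : HasDerivAt (fun s : ℝ => ⟪gradient F (y + s • ξ), ξ⟫)
        ⟪fderiv ℝ (gradient F) (y + s • ξ) ξ, ξ⟫ s := by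
      simpa [Function.comp_def] using h3
    exact h4.sub ((hasDerivAt_id s).const_mul _)
  have := mono_aux hd (fun s _ => by linarith [hess (y + s • ξ) ξ])
  have e1 : y + ξ = x := by rw [← hξ]; abel
  simp only [zero_smul, add_zero, one_smul, e1] at this
  rw [inner_sub_left]
  linarith

theorem grad_upper {d : ℕ} {F : Euc d → ℝ} (hF : ContDiff ℝ 2 F) {c : ℝ}
    (h : ∀ m ξ : Euc d, F (m + ξ) + F (m - ξ) - 2 * F m ≤ c * ‖ξ‖ ^ 2) (x y : Euc d) :
    ⟪gradient F x - gradient F y, x - y⟫ ≤ c * ‖x - y‖ ^ 2 := by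
  have h1 := grad_lower (F := fun x => - F x) hF.neg (c := -c) (fun m ξ => by linarith [h m ξ]) x y
  have hg : ∀ x, gradient (fun x => - F x) x = - gradient F x := by
    intro x
    simp [gradient, fderiv_fun_neg]
  rw [hg, hg, show - gradient F x - - gradient F y = -(gradient F x - gradient F y) by abel,
    inner_neg_left] at h1
  linarith

theorem lip_of {d : ℕ} {F : Euc d → ℝ} {G : Euc d → Euc d} (h : LG F G) {c : ℝ} (hc : 0 < c)
    (h1 : ∀ x y, 0 * ‖x - y‖ ^ 2 ≤ ⟪G x - G y, x - y⟫)
    (h2 : ∀ x y, ⟪G x - G y, x - y⟫ ≤ c * ‖x - y‖ ^ 2) (x y : Euc d) :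
    ‖G x - G y‖ ≤ c * ‖x - y‖ := by
  have key : ∀ x y : Euc d, F x + ⟪G x, y - x⟫ + c⁻¹ / 2 * ‖G y - G x‖ ^ 2 ≤ F y := by
    intro x y
    generalize hw : G y - G x = w
    have a1 := tan_lower h h1 (y - c⁻¹ • w) x
    have a2 := tan_upper h h2 (y - c⁻¹ • w) y
    rw [show y - c⁻¹ • w - y = -(c⁻¹ • w) by abel, inner_neg_right, inner_smul_right, norm_neg, norm_smul,
      Real.norm_of_nonneg (by positivity)] at a2
    rw [show y - c⁻¹ • w - x = (y - x) - c⁻¹ • w by abel, inner_sub_right, inner_smul_right] at a1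
    have a3 : ⟪G y, w⟫ = ⟪G x, w⟫ + ‖w‖ ^ 2 := by
      rw [← real_inner_self_eq_norm_sq, ← inner_add_left, ← hw]; congr 1; abel
    rw [a3] at a2
    have a4 : c / 2 * (c⁻¹ * ‖w‖) ^ 2 = c⁻¹ / 2 * ‖w‖ ^ 2 := by field_simp
    rw [a4] at a2
    linarith
  have k1 := key x y
  have k2 := key y x
  rw [norm_sub_rev] at k1
  have e : ⟪G x, y - x⟫ = - ⟪G x, x - y⟫ := by rw [← inner_neg_right]; congr 1; abel
  rw [e] at k1
  have k3 : c⁻¹ * ‖G x - G y‖ ^ 2 ≤ ⟪G x - G y, x - y⟫ := by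
    rw [inner_sub_left]; linarith
  have k4 := real_inner_le_norm (G x - G y) (x - y)
  have k5 : ‖G x - G y‖ ^ 2 ≤ c * (‖G x - G y‖ * ‖x - y‖) := by
    have := mul_le_mul_of_nonneg_left (k3.trans k4) hc.le
    rwa [mul_inv_cancel_left₀ hc.ne'] at this
  rcases eq_or_lt_of_le (norm_nonneg (G x - G y)) with h0 | h0
  · rw [← h0]; positivity
  · by_contra hcon
    push Not at hcon
    have := mul_lt_mul_of_pos_left hcon h0
    linarith

theorem theta_lower {γ kl σ etal : ℝ} (hγ : 0 ≤ γ) (hkl : 0 < kl) (hetal : 0 < etal)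
    {θ : ℝ → ℝ} (hθ0 : θ 0 = etal)
    (hθ : ∀ t ≥ (0:ℝ), HasDerivAt θ (kl - γ * θ t - σ ^ 2 * θ t ^ 2) t) :
    ∃ c : ℝ, 0 < c ∧ ∀ t ≥ (0:ℝ), c ≤ θ t := by
  obtain ⟨c, hc, hc1, hc2, hc3⟩ : ∃ c : ℝ, 0 < c ∧ c ≤ 1 ∧ c ≤ etal ∧ (γ + σ ^ 2) * c < kl := by
    refine ⟨min (min 1 etal) (kl / (2 * (γ + σ ^ 2 + 1))), by positivity, ?_, ?_, ?_⟩
    · exact (min_le_left _ _).trans (min_le_left _ _)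
    · exact (min_le_left _ _).trans (min_le_right _ _)
    · have h1 : min (min 1 etal) (kl / (2 * (γ + σ ^ 2 + 1))) ≤ kl / (2 * (γ + σ ^ 2 + 1)) := min_le_right _ _
      have h2 : (γ + σ ^ 2) * (kl / (2 * (γ + σ ^ 2 + 1))) < kl := by
        rw [mul_div_assoc', div_lt_iff₀ (by positivity)]
        have : 0 ≤ kl * (γ + σ ^ 2) := by positivity
        linarith
      exact (mul_le_mul_of_nonneg_left h1 (by positivity)).trans_lt h2
  refine ⟨c, hc, fun t ht => ?_⟩
  have := image_le_of_deriv_right_lt_deriv_boundary (f := fun s => - θ s)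
    (f' := fun s => -(kl - γ * θ s - σ ^ 2 * θ s ^ 2)) (a := 0) (b := t) (B := fun _ => -c) (B' := fun _ => 0)
    (fun s hs => (hθ s hs.1).neg.continuousAt.continuousWithinAt)
    (fun s hs => (hθ s hs.1).neg.hasDerivWithinAt) (by simp only [hθ0]; linarith)
    (fun s => hasDerivAt_const s _)
    (fun s hs h => by
      have h' : θ s = c := by linarith
      simp only [h']
      have : 0 ≤ (1 - c) * (σ ^ 2 * c) := mul_nonneg (by linarith) (by positivity)
      linarith)
    (right_mem_Icc.2 ht)
  linarith

theorem hjb_aux (d : ℕ)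
    (g v0 : Euc d → ℝ) (σ γ kl ku etal etau : ℝ)
    (hσ : 0 < σ) (hγ : 0 ≤ γ) (hkl : 0 < kl) (hklku : kl ≤ ku)
    (hetal : 0 < etal) (hetau : 0 < etau)
    (hgC2 : ContDiff ℝ 2 g)
    (hgHess : ∀ x y : Euc d,
      kl * ‖x - y‖ ^ 2 ≤ ⟪gradient g x - gradient g y, x - y⟫ ∧
      ⟪gradient g x - gradient g y, x - y⟫ ≤ ku * ‖x - y‖ ^ 2)
    (hv0C1 : ContDiff ℝ 1 v0)
    (hv0Lip : ∀ x y : Euc d, ‖gradient v0 x - gradient v0 y‖ ≤ etau * ‖x - y‖)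
    (hv0conv : ∀ x y : Euc d, etal * ‖x - y‖ ^ 2 ≤ ⟪gradient v0 x - gradient v0 y, x - y⟫)
    (v : ℝ → Euc d → ℝ)
    (hv : IsHJBSolution σ γ (fun _ x => g x) v0 v)
    (θ : ℝ → ℝ) (hθ0 : θ 0 = etal)
    (hθ : ∀ t ≥ (0:ℝ), HasDerivAt θ (kl - γ * θ t - σ ^ 2 * θ t ^ 2) t) :
    (∀ t ≥ (0:ℝ), ∀ x y : Euc d,
      θ t * ‖x - y‖ ^ 2 ≤ ⟪gradient (v t) x - gradient (v t) y, x - y⟫) ∧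
    (∃ c : ℝ, 0 < c ∧ ∀ t ≥ (0:ℝ), ∀ x y : Euc d,
      c * ‖x - y‖ ^ 2 ≤ ⟪gradient (v t) x - gradient (v t) y, x - y⟫) ∧
    (∃ C : ℝ, ∀ t > (0:ℝ), ∀ x y : Euc d,
      ‖gradient (v t) x - gradient (v t) y‖ ≤ C * ‖x - y‖) := by
  have hS := sol_of hv
  obtain ⟨_, hvC3, hvi, _⟩ := hv
  have hv0 : v 0 = v0 := funext hvi
  have hvC2 : ∀ t > (0:ℝ), ContDiff ℝ 2 (v t) := fun t ht => (hvC3 t ht).of_le (by norm_num)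
  obtain ⟨κ, hκd⟩ : ∃ κ, κ = σ ^ 2 / 4 := ⟨_, rfl⟩
  have hκ : 0 < κ := by rw [hκd]; positivity
  have hσκ : σ ^ 2 = 4 * κ := by rw [hκd]; ring
  rw [← hκd, show σ ^ 2 / 2 = 2 * κ by rw [hκd]; ring] at hS
  have hku : 0 < ku := hkl.trans_le hklku
  have hLg : LG g (gradient g) := fun x e s => line_deriv (hgC2.differentiable (by norm_num)) x e s
  have hL0 : LG (v 0) (gradient v0) := by
    rw [hv0]; exact fun x e s => line_deriv (hv0C1.differentiable (by norm_num)) x e s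
  have h0u : ∀ x y : Euc d, ⟪gradient v0 x - gradient v0 y, x - y⟫ ≤ etau * ‖x - y‖ ^ 2 := by
    intro x y
    have h1 := real_inner_le_norm (gradient v0 x - gradient v0 y) (x - y)
    have h2 := mul_le_mul_of_nonneg_right (hv0Lip x y) (norm_nonneg (x - y))
    calc _ ≤ _ := h1
      _ ≤ _ := h2
      _ = _ := by ring
  obtain ⟨Cg, hCg, hgb⟩ := quad_growth hLg hkl hku (fun x y => (hgHess x y).1) (fun x y => (hgHess x y).2)
  obtain ⟨Cv, hCv, h0b⟩ := quad_growth hL0 hetal hetau hv0conv h0u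
  have hgr : ∀ T : ℝ, 0 ≤ T → ∃ C : ℝ, 0 ≤ C ∧ ∀ t x, 0 ≤ t → t ≤ T → |v t x| ≤ C * (1 + ‖x‖ ^ 2) :=
    fun T hT => growth hS (by positivity) hκ hγ hLg hL0 hkl (fun x y => (hgHess x y).1) hetal hetau hv0conv h0u
      hCg hCv hgb h0b hT
  have hlow : ∀ t ≥ (0:ℝ), ∀ x y : Euc d,
      θ t * ‖x - y‖ ^ 2 ≤ ⟪gradient (v t) x - gradient (v t) y, x - y⟫ := by
    intro t ht
    rcases eq_or_lt_of_le ht with h | h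
    · rw [← h, hv0, hθ0]; exact hv0conv
    · obtain ⟨C, hC, hvb⟩ := hgr t ht
      refine grad_lower (hvC2 t h) (fun m ξ => ?_)
      refine stepD hS hκ hγ hCg hC ht (fun x => (hgb x).1) hvb (kl := kl) (θ := θ) ?_
        (mid_lower hLg (fun x y => (hgHess x y).1)) ?_ m ξ
      · rw [← hσκ]; exact hθ
      · rw [hθ0]; exact mid_lower hL0 hv0conv
  obtain ⟨c, hc, hcθ⟩ := theta_lower hγ hkl hetal hθ0 hθ
  have hlow2 : ∀ t ≥ (0:ℝ), ∀ x y : Euc d,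
      c * ‖x - y‖ ^ 2 ≤ ⟪gradient (v t) x - gradient (v t) y, x - y⟫ := fun t ht x y =>
    (mul_le_mul_of_nonneg_right (hcθ t ht) (by positivity)).trans (hlow t ht x y)
  refine ⟨hlow, ⟨c, hc, hlow2⟩, ?_⟩
  obtain ⟨Λ, hΛ1, hΛ2⟩ : ∃ Λ : ℝ, etau ≤ Λ ∧ ku ≤ 2 * κ * Λ ^ 2 := by
    refine ⟨etau + 1 + ku / (2 * κ), ?_, ?_⟩
    · have : 0 ≤ ku / (2 * κ) := by positivity
      linarith
    · have h1 : 0 < ku / (2 * κ) := by positivity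
      have h2 : ku / (2 * κ) ≤ (etau + 1 + ku / (2 * κ)) ^ 2 := by nlinarith
      have h3 := mul_le_mul_of_nonneg_left h2 (by positivity : 0 ≤ 2 * κ)
      rwa [mul_div_cancel₀ _ (by positivity)] at h3
  have hΛ0 : 0 < Λ := hetau.trans_le hΛ1
  refine ⟨Λ, fun t ht => ?_⟩
  obtain ⟨C, hC, hvb⟩ := hgr t ht.le
  have hup := grad_upper (hvC2 t ht) (c := Λ) (fun m ξ =>
    stepE hS hκ hγ hCg hC ht.le (fun x => (hgb x).1) hvb hΛ0.le hΛ2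
      (mid_upper hLg (fun x y => (hgHess x y).2))
      (fun m ξ => (mid_upper hL0 h0u m ξ).trans (mul_le_mul_of_nonneg_right hΛ1 (by positivity))) m ξ)
  refine lip_of (F := v t) (fun x e s => line_deriv ((hvC2 t ht).differentiable (by norm_num)) x e s) hΛ0
    (fun x y => ?_) hup
  have := hlow2 t ht.le x y
  have h2 : 0 ≤ c * ‖x - y‖ ^ 2 := by positivity
  linarith

/-- Convexity propagation for the HJB equation with strongly convex source `g`:
the solution `v` of `∂ₜv = (σ²/2)Δv − (σ²/4)|∇v|² + g − γv`, `v(0,·) = v₀`,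
satisfies (i) `∇²v(t,·) ≥ θ_t I` where `θ` solves the Riccati equation
`θ' = κ̲ − γθ − σ²θ²`, `θ₀ = η̲` — in particular `v(t,·)` is strictly convex
uniformly in `t ≥ 0` — and (ii) `∇²v(t,·)` is bounded uniformly in `t > 0`. -/
theorem hjb_convexity_propagation (d : ℕ)
    (g v0 : Euc d → ℝ) (σ γ kl ku etal etau : ℝ)
    (hσ : 0 < σ) (hγ : 0 ≤ γ) (hkl : 0 < kl) (hklku : kl ≤ ku)
    (hetal : 0 < etal) (hetau : 0 < etau)
    (hgC2 : ContDiff ℝ 2 g)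
    (hgHess : ∀ x y : Euc d,
      kl * ‖x - y‖ ^ 2 ≤ ⟪gradient g x - gradient g y, x - y⟫ ∧
      ⟪gradient g x - gradient g y, x - y⟫ ≤ ku * ‖x - y‖ ^ 2)
    (hv0C1 : ContDiff ℝ 1 v0)
    (hv0Lip : ∀ x y : Euc d, ‖gradient v0 x - gradient v0 y‖ ≤ etau * ‖x - y‖)
    (hv0conv : ∀ x y : Euc d, etal * ‖x - y‖ ^ 2 ≤ ⟪gradient v0 x - gradient v0 y, x - y⟫)
    (v : ℝ → Euc d → ℝ)
    (hv : IsHJBSolution σ γ (fun _ x => g x) v0 v)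
    (θ : ℝ → ℝ) (hθ0 : θ 0 = etal)
    (hθ : ∀ t ≥ (0:ℝ), HasDerivAt θ (kl - γ * θ t - σ ^ 2 * θ t ^ 2) t) :
    (∀ t ≥ (0:ℝ), ∀ x y : Euc d,
      θ t * ‖x - y‖ ^ 2 ≤ ⟪gradient (v t) x - gradient (v t) y, x - y⟫) ∧
    (∃ c : ℝ, 0 < c ∧ ∀ t ≥ (0:ℝ), ∀ x y : Euc d,
      c * ‖x - y‖ ^ 2 ≤ ⟪gradient (v t) x - gradient (v t) y, x - y⟫) ∧
    (∃ C : ℝ, ∀ t > (0:ℝ), ∀ x y : Euc d,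
      ‖gradient (v t) x - gradient (v t) y‖ ≤ C * ‖x - y‖) := by
  exact hjb_aux d g v0 σ γ kl ku etal etau hσ hγ hkl hklku hetal hetau hgC2 hgHess hv0C1 hv0Lip hv0conv
    v hv θ hθ0 hθ
end
end

section
/- Let F : P₂(ℝ^d) → ℝ be convex and C¹, and let σ > 0, γ ≥ 0. Then the generalized free energy ℱ^{σ,γ}(p) := F(p) + σ² I(p) + γ H(p) is convex on P_H. Moreover, if ℱ^{σ,γ} admits a minimizer p* ∈ P_H whose density satisfies 1/p* ∈ L^∞_loc(ℝ^d), then this minimizer is unique. -/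
open MeasureTheory Real Filter Set
open scoped RealInnerProductSpace Topology ENNReal NNReal

noncomputable section

/-- Convex combination `(1-η) μ + η ν` of measures. -/
def mix {d : ℕ} (η : ℝ) (μ ν : Measure (Euc d)) : Measure (Euc d) :=
  ENNReal.ofReal (1 - η) • μ + ENNReal.ofReal η • ν

/-- `F` is `C¹` with linear (flat) derivative `DF`: `DF μ` is continuous of
quadratic growth in the space variable and the fundamental theorem of calculus
holds along straight lines between measures of `P₂`. -/
def IsLinearDeriv {d : ℕ} (F : Measure (Euc d) → ℝ)
    (DF : Measure (Euc d) → Euc d → ℝ) : Prop :=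
  (∀ μ ∈ P2 d, Continuous (DF μ)) ∧
  (∀ μ ∈ P2 d, ∃ C : ℝ, ∀ x, |DF μ x| ≤ C * (1 + ‖x‖ ^ 2)) ∧
  (∀ μ ∈ P2 d, ∀ ν ∈ P2 d,
    F ν - F μ = ∫ η in Ioc (0:ℝ) 1,
      ((∫ x, DF (mix η μ ν) x ∂ν) - ∫ x, DF (mix η μ ν) x ∂μ))

/-- Convexity of a functional on `P₂`. -/
def ConvexOnP2 {d : ℕ} (F : Measure (Euc d) → ℝ) : Prop :=
  ∀ μ ∈ P2 d, ∀ ν ∈ P2 d, ∀ t ∈ Icc (0:ℝ) 1,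
    F (mix t μ ν) ≤ (1 - t) * F μ + t * F ν

/-- Assumption (A1): `F` is convex, `C¹`, and `F(μ) ≥ lam ∫ |x|² μ(dx)`, `lam > 0`. -/
def AssumptionA1 {d : ℕ} (F : Measure (Euc d) → ℝ)
    (DF : Measure (Euc d) → Euc d → ℝ) (lam : ℝ) : Prop :=
  0 < lam ∧ ConvexOnP2 F ∧ IsLinearDeriv F DF ∧
    ∀ μ ∈ P2 d, lam * (∫ x, ‖x‖ ^ 2 ∂μ) ≤ F μ
/-- The generalized free energy `ℱ^{σ,γ}(p) = F(p) + σ² I(p) + γ H(p)`. -/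
def FreeEnergy {d : ℕ} (σ γ : ℝ) (F : Measure (Euc d) → ℝ) (p : Euc d → ℝ) : ℝ :=
  F (toMeas p) + σ ^ 2 * FisherInfo p + γ * Entropy p


/-- On the real line, a nonnegative differentiable function is bounded by its `W^{1,1}` norm. -/
lemma line_bound (g : ℝ → ℝ) (hg0 : ∀ t, 0 ≤ g t) (hg : Differentiable ℝ g) (s : ℝ) :
    ENNReal.ofReal (g s) ≤ ∫⁻ t, (ENNReal.ofReal (g t) + ‖deriv g t‖ₑ) := by
  by_cases htop : ∫⁻ t, (ENNReal.ofReal (g t) + ‖deriv g t‖ₑ) = ∞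
  · rw [htop]; exact le_top
  have hm : Measurable fun t => ENNReal.ofReal (g t) := hg.continuous.measurable.ennreal_ofReal
  rw [lintegral_add_left hm] at htop ⊢
  have h1 : ∫⁻ t, ENNReal.ofReal (g t) ≠ ∞ := fun h => htop (by simp [h])
  have h2 : ∫⁻ t, ‖deriv g t‖ₑ ≠ ∞ := fun h => htop (by simp [h])
  have i1 : Integrable g := by
    refine ⟨hg.continuous.aestronglyMeasurable, ?_⟩
    rw [hasFiniteIntegral_iff_ofReal (Eventually.of_forall hg0)]
    exact h1.lt_top
  have i2 : Integrable (deriv g) :=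
    ⟨(measurable_deriv g).aestronglyMeasurable, h2.lt_top⟩
  have hd : ∀ x ∈ Iic s, HasDerivAt g (deriv g x) x := fun x _ => (hg x).hasDerivAt
  have ht := tendsto_zero_of_hasDerivAt_of_integrableOn_Iic hd i2.integrableOn i1.integrableOn
  have he := integral_Iic_of_hasDerivAt_of_tendsto' hd i2.integrableOn ht
  rw [sub_zero] at he
  calc ENNReal.ofReal (g s) = ‖g s‖ₑ := (Real.enorm_of_nonneg (hg0 s)).symm
    _ = ‖∫ x in Iic s, deriv g x‖ₑ := by rw [he]
    _ ≤ ∫⁻ x in Iic s, ‖deriv g x‖ₑ := enorm_integral_le_lintegral_enorm _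
    _ ≤ ∫⁻ x, ‖deriv g x‖ₑ := setLIntegral_le_lintegral _ _
    _ ≤ _ := le_add_self

/-- Gagliardo-Nirenberg type bound: a nonnegative `W^{1,1}` function is in `L^{1+1/(d+1)}`. -/
lemma sobolev_bound {d : ℕ} (p : Euc d → ℝ) (hp0 : ∀ x, 0 ≤ p x) (hp : Differentiable ℝ p)
    (hi : Integrable p) (hi' : Integrable (fderiv ℝ p)) :
    Integrable fun x => p x ^ (1 + 1 / ((d : ℝ) + 1)) := by
  have hd1 : (0 : ℝ) < (d : ℝ) + 1 := by positivity
  set f : Euc d → ℝ≥0∞ := fun x => ENNReal.ofReal (p x) + ‖fderiv ℝ p x‖ₑ with hf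
  have hfm : Measurable f :=
    hp.continuous.measurable.ennreal_ofReal.add (measurable_fderiv ℝ p).enorm
  have hmp := PiLp.volume_preserving_toLp (Fin d)
  have hfi : ∫⁻ x, f x ≠ ∞ := by
    rw [hf, lintegral_add_left hp.continuous.measurable.ennreal_ofReal]
    have h1 := (hasFiniteIntegral_iff_ofReal (Eventually.of_forall hp0)).1 hi.2
    have h2 : ∫⁻ x, ‖fderiv ℝ p x‖ₑ < ∞ := hi'.2
    exact (ENNReal.add_lt_top.2 ⟨h1, h2⟩).ne
  set f' : (Fin d → ℝ) → ℝ≥0∞ := fun x => f (WithLp.toLp 2 x) with hf'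
  have hfm' : Measurable f' := hfm.comp hmp.measurable
  have key := lintegral_mul_prod_lintegral_pow_le (fun _ : Fin d => (volume : Measure ℝ))
    (p := 1 / ((d : ℝ) + 1)) (by positivity)
    (by rw [Fintype.card_fin, mul_one_div, div_le_one hd1]; linarith) hfm'
  rw [← volume_pi, Fintype.card_fin] at key
  have hline : ∀ (x : Fin d → ℝ) (i : Fin d), ENNReal.ofReal (p (WithLp.toLp 2 x)) ≤
      ∫⁻ t, f' (Function.update x i t) := by
    intro x i
    have hdu : ∀ t, HasDerivAt (fun t : ℝ => (WithLp.toLp 2 (Function.update x i t) : Euc d))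
        (EuclideanSpace.single i (1 : ℝ)) t := by
      intro t
      have h1 := hasDerivAt_update x i t
      have h2 := ((PiLp.continuousLinearEquiv 2 ℝ (fun _ : Fin d => ℝ)).symm
        |>.toContinuousLinearMap.hasFDerivAt (x := Function.update x i t)).comp_hasDerivAt t h1
      exact h2
    have hg : ∀ t, HasDerivAt (fun t : ℝ => p (WithLp.toLp 2 (Function.update x i t)))
        (fderiv ℝ p (WithLp.toLp 2 (Function.update x i t)) (EuclideanSpace.single i (1 : ℝ))) t :=
      fun t => ((hp _).hasFDerivAt).comp_hasDerivAt t (hdu t)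
    have h3 := line_bound (fun t : ℝ => p (WithLp.toLp 2 (Function.update x i t)))
      (fun t => hp0 _) (fun t => (hg t).differentiableAt) (x i)
    simp only [Function.update_eq_self] at h3
    refine h3.trans (lintegral_mono fun t => ?_)
    simp only [hf', hf]
    gcongr
    rw [(hg t).deriv, ← ofReal_norm, ← ofReal_norm]
    apply ENNReal.ofReal_le_ofReal
    refine (ContinuousLinearMap.le_opNorm _ _).trans ?_
    simp
  have hpt : ∀ x : Fin d → ℝ, ENNReal.ofReal (p (WithLp.toLp 2 x) ^ (1 + 1 / ((d : ℝ) + 1))) ≤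
      f' x ^ (1 - ((d : ℝ) - 1) * (1 / ((d : ℝ) + 1))) *
        ∏ i, (∫⁻ t, f' (Function.update x i t)) ^ (1 / ((d : ℝ) + 1)) := by
    intro x
    set y := ENNReal.ofReal (p (WithLp.toLp 2 x)) with hy
    have e1 : ENNReal.ofReal (p (WithLp.toLp 2 x) ^ (1 + 1 / ((d : ℝ) + 1))) =
        y ^ (1 - ((d : ℝ) - 1) * (1 / ((d : ℝ) + 1))) *
        ∏ i : Fin d, y ^ (1 / ((d : ℝ) + 1)) := by
      rw [← ENNReal.ofReal_rpow_of_nonneg (hp0 _) (by positivity), Finset.prod_const,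
        Finset.card_univ, Fintype.card_fin, ← ENNReal.rpow_mul_natCast,
        ← ENNReal.rpow_add_of_nonneg]
      · congr 1; field_simp; ring
      · rw [sub_nonneg, mul_one_div, div_le_one hd1]; linarith
      · positivity
    rw [e1]
    gcongr with i
    · rw [sub_nonneg, mul_one_div, div_le_one hd1]; linarith
    · exact le_self_add
    · exact hline x i
  refine ⟨(hp.continuous.rpow_const fun x => Or.inr (by positivity)).aestronglyMeasurable, ?_⟩
  rw [hasFiniteIntegral_iff_ofReal (Eventually.of_forall fun x => by
    have := hp0 x; positivity)]
  rw [← hmp.lintegral_comp (f := fun x => ENNReal.ofReal (p x ^ (1 + 1 / ((d : ℝ) + 1))))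
    (hp.continuous.rpow_const fun x => Or.inr (by positivity)).measurable.ennreal_ofReal]
  refine ((lintegral_mono hpt).trans key).trans_lt ?_
  have : ∫⁻ x, f' x = ∫⁻ x, f x := hmp.lintegral_comp hfm
  rw [this]
  exact ENNReal.rpow_lt_top_of_nonneg (by positivity) hfi

lemma gauss_integrable (d : ℕ) : Integrable fun x : Euc d => Real.exp (-‖x‖ ^ 2) := by
  have h := (GaussianFourier.integrable_cexp_neg_mul_sq_norm_add (V := Euc d) (b := 1)
    (by simp) 0 0).norm
  refine h.congr (Eventually.of_forall fun x => ?_)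
  simp only [Complex.norm_exp]
  congr 1
  simp [← Complex.ofReal_pow]

lemma entropy_bound (d : ℕ) (s r : ℝ) (hs : 0 ≤ s) (hr : 0 ≤ r) :
    |s * Real.log s| ≤ r * s + Real.exp (-r) + ((d : ℝ) + 1) * s ^ (1 + 1 / ((d : ℝ) + 1)) := by
  have hpow : 0 ≤ ((d : ℝ) + 1) * s ^ (1 + 1 / ((d : ℝ) + 1)) := by positivity
  rcases hs.eq_or_lt with rfl | hs'
  · simp only [zero_mul, abs_zero]; positivity
  rw [abs_le]
  constructor
  · have h1 := Real.one_sub_inv_le_log_of_pos (x := s / Real.exp (-r)) (by positivity)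
    rw [Real.log_div hs'.ne' (Real.exp_pos _).ne', Real.log_exp, inv_div] at h1
    have h2 := mul_le_mul_of_nonneg_left h1 hs
    have h3 : s * (1 - Real.exp (-r) / s) = s - Real.exp (-r) := by field_simp
    nlinarith
  · have h1 := Real.log_le_rpow_div hs (ε := 1 / ((d : ℝ) + 1)) (by positivity)
    have h2 := mul_le_mul_of_nonneg_left h1 hs
    have h3 : s * (s ^ (1 / ((d : ℝ) + 1)) / (1 / ((d : ℝ) + 1))) =
        ((d : ℝ) + 1) * s ^ (1 + 1 / ((d : ℝ) + 1)) := by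
      rw [Real.rpow_add hs', Real.rpow_one]; field_simp
    have : 0 ≤ r * s := by positivity
    have := Real.exp_pos (-r)
    linarith

section PH
variable {d : ℕ} {p q : Euc d → ℝ}

lemma MemPH.nonneg (hp : MemPH p) (x : Euc d) : 0 ≤ p x := hp.1.1 x

lemma MemPH.eq_sq (hp : MemPH p) : p = fun x => sqrtFn p x ^ 2 := by
  funext x; exact (Real.sq_sqrt (hp.nonneg x)).symm

lemma MemPH.hasFDerivAt (hp : MemPH p) (x : Euc d) :
    HasFDerivAt p ((2 * sqrtFn p x) • fderiv ℝ (sqrtFn p) x) x := by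
  have h := ((hp.2.2.1 x).hasFDerivAt).pow 2
  rw [← hp.eq_sq] at h
  simpa using h

lemma MemPH.differentiable (hp : MemPH p) : Differentiable ℝ p :=
  fun x => (hp.hasFDerivAt x).differentiableAt

lemma norm_gradient (f : Euc d → ℝ) (x : Euc d) : ‖gradient f x‖ = ‖fderiv ℝ f x‖ := by
  simp [gradient]

lemma measurable_gradient_sq (f : Euc d → ℝ) : Measurable fun x => ‖gradient f x‖ ^ 2 := by
  simp only [norm_gradient]
  exact (measurable_fderiv ℝ f).norm.pow_const 2

lemma MemPH.integrable_entropy (hp : MemPH p) :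
    Integrable fun x => p x * Real.log (p x) := by
  have hfd : Integrable (fderiv ℝ p) := by
    refine (hp.1.2.1.add hp.2.2.2).mono' (measurable_fderiv ℝ p).aestronglyMeasurable
      (Eventually.of_forall fun x => ?_)
    rw [(hp.hasFDerivAt x).fderiv, norm_smul, Pi.add_apply, norm_gradient]
    have h1 : p x = sqrtFn p x ^ 2 := congrFun hp.eq_sq x
    have h2 : 0 ≤ sqrtFn p x := Real.sqrt_nonneg _
    rw [Real.norm_of_nonneg (by positivity)]
    nlinarith [sq_nonneg (sqrtFn p x - ‖fderiv ℝ (sqrtFn p) x‖)]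
  have hs := sobolev_bound p hp.nonneg hp.differentiable hp.1.2.1 hfd
  refine ((hp.2.1.add (gauss_integrable d)).add (hs.const_mul ((d : ℝ) + 1))).mono' ?_
    (Eventually.of_forall fun x => entropy_bound d (p x) (‖x‖ ^ 2) (hp.nonneg x) (by positivity))
  have := hp.differentiable.continuous.measurable
  exact (this.mul this.log).aestronglyMeasurable

lemma MemPH.toMeas_mem (hp : MemPH p) : toMeas p ∈ P2 d := by
  have hm := hp.differentiable.continuous.measurable
  refine ⟨⟨?_⟩, ?_⟩
  · rw [toMeas, withDensity_apply _ MeasurableSet.univ, Measure.restrict_univ,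
      ← ofReal_integral_eq_lintegral_ofReal hp.1.2.1 (Eventually.of_forall hp.nonneg), hp.1.2.2,
      ENNReal.ofReal_one]
  · rw [toMeas, integrable_withDensity_iff hm.ennreal_ofReal (by simp)]
    refine hp.2.1.congr (Eventually.of_forall fun x => ?_)
    simp [ENNReal.toReal_ofReal (hp.nonneg x)]

lemma toMeas_mix (hp : MemPH p) (hq : MemPH q) {t : ℝ} (ht : t ∈ Icc (0 : ℝ) 1) :
    toMeas (fun x => (1 - t) * p x + t * q x) = mix t (toMeas p) (toMeas q) := by
  have hm := hp.differentiable.continuous.measurable.ennreal_ofReal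
  have hm' := hq.differentiable.continuous.measurable.ennreal_ofReal
  unfold toMeas mix
  rw [← withDensity_smul _ hm, ← withDensity_smul _ hm',
    ← withDensity_add_left (hm.const_smul _)]
  congr 1
  funext x
  have h1 : 0 ≤ 1 - t := by linarith [ht.2]
  simp only [Pi.add_apply, Pi.smul_apply, smul_eq_mul]
  rw [← ENNReal.ofReal_mul h1, ← ENNReal.ofReal_mul ht.1,
    ← ENNReal.ofReal_add (mul_nonneg h1 (hp.nonneg x)) (mul_nonneg ht.1 (hq.nonneg x))]

lemma isLittleO_of_zero {u : Euc d → ℝ} (hu0 : ∀ x, 0 ≤ u x) (hu : Differentiable ℝ u)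
    {x : Euc d} (hx : u x = 0) : u =o[𝓝 x] fun y => y - x := by
  have h0 : fderiv ℝ u x = 0 :=
    IsLocalMin.fderiv_eq_zero (Eventually.of_forall fun y => by rw [hx]; exact hu0 y)
  have h := (hu x).hasFDerivAt.isLittleO
  simpa [h0, hx] using h

lemma differentiable_sqrt_add_sq {u v : Euc d → ℝ} (hu0 : ∀ x, 0 ≤ u x) (hv0 : ∀ x, 0 ≤ v x)
    (hu : Differentiable ℝ u) (hv : Differentiable ℝ v) :
    Differentiable ℝ fun x => Real.sqrt (u x ^ 2 + v x ^ 2) := by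
  intro x
  by_cases h : u x ^ 2 + v x ^ 2 = 0
  · have hux : u x = 0 := by nlinarith [sq_nonneg (u x), sq_nonneg (v x)]
    have hvx : v x = 0 := by nlinarith [sq_nonneg (u x), sq_nonneg (v x)]
    have ho := (isLittleO_of_zero hu0 hu hux).add (isLittleO_of_zero hv0 hv hvx)
    have hw : (fun x => Real.sqrt (u x ^ 2 + v x ^ 2)) =o[𝓝 x] fun y => y - x := by
      refine (Asymptotics.IsBigO.of_bound 1 (Eventually.of_forall fun y => ?_)).trans_isLittleO ho
      have h1 := hu0 y
      have h2 := hv0 y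
      rw [Real.norm_of_nonneg (Real.sqrt_nonneg _), Real.norm_of_nonneg (by positivity), one_mul]
      exact Real.sqrt_le_iff.2 ⟨by positivity, by nlinarith [mul_nonneg h1 h2]⟩
    have : HasFDerivAt (fun x => Real.sqrt (u x ^ 2 + v x ^ 2)) (0 : Euc d →L[ℝ] ℝ) x := by
      apply HasFDerivAt.of_isLittleO
      simpa [hux, hvx] using hw
    exact this.differentiableAt
  · exact (((hu x).pow 2).add ((hv x).pow 2)).sqrt h

lemma differentiable_mix (hp : MemPH p) (hq : MemPH q) {t : ℝ} (ht : t ∈ Icc (0 : ℝ) 1) :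
    Differentiable ℝ (sqrtFn fun x => (1 - t) * p x + t * q x) := by
  have h1 : 0 ≤ 1 - t := by linarith [ht.2]
  have h := differentiable_sqrt_add_sq (u := fun x => Real.sqrt (1 - t) * sqrtFn p x)
    (v := fun x => Real.sqrt t * sqrtFn q x)
    (fun x => mul_nonneg (Real.sqrt_nonneg _) (Real.sqrt_nonneg _))
    (fun x => mul_nonneg (Real.sqrt_nonneg _) (Real.sqrt_nonneg _))
    (hp.2.2.1.const_mul _) (hq.2.2.1.const_mul _)
  convert h using 2 with x
  simp only [sqrtFn, mul_pow, Real.sq_sqrt h1, Real.sq_sqrt ht.1, Real.sq_sqrt (hp.nonneg x),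
    Real.sq_sqrt (hq.nonneg x)]

/-- The gradient of `√((1-t)p+tq)`. -/
lemma gradient_mix (hp : MemPH p) (hq : MemPH q) {t : ℝ} (ht : t ∈ Icc (0 : ℝ) 1) (x : Euc d) :
    sqrtFn (fun x => (1 - t) * p x + t * q x) x •
        gradient (sqrtFn fun x => (1 - t) * p x + t * q x) x =
      ((1 - t) * sqrtFn p x) • gradient (sqrtFn p) x + (t * sqrtFn q x) • gradient (sqrtFn q) x := by
  have h1 : 0 ≤ 1 - t := by linarith [ht.2]
  set w := sqrtFn (fun x => (1 - t) * p x + t * q x) with hw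
  have hww : (fun x => w x ^ 2) = fun x => (1 - t) * p x + t * q x := by
    funext y
    exact Real.sq_sqrt (add_nonneg (mul_nonneg h1 (hp.nonneg y)) (mul_nonneg ht.1 (hq.nonneg y)))
  have ha := ((differentiable_mix hp hq ht x).hasFDerivAt).pow 2
  rw [← hw] at ha
  have hb := ((hp.hasFDerivAt x).const_mul (1 - t)).add ((hq.hasFDerivAt x).const_mul t)
  have ha' : HasFDerivAt (fun x => (1 - t) * p x + t * q x) ((2 * w x) • fderiv ℝ w x) x := by
    rw [← hww]; simpa using ha
  have he := ha'.unique hb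
  have he2 : w x • fderiv ℝ w x = ((1 - t) * sqrtFn p x) • fderiv ℝ (sqrtFn p) x +
      (t * sqrtFn q x) • fderiv ℝ (sqrtFn q) x := by
    have h2 := congrArg (fun L => (1 / 2 : ℝ) • L) he
    simp only [smul_add, smul_smul] at h2
    convert h2 using 2
    · ring
    · congr 1; ring
    · congr 1; ring
  have h3 := congrArg (InnerProductSpace.toDual ℝ (Euc d)).symm he2
  simpa [gradient] using h3

lemma sq_identity (hp : MemPH p) (hq : MemPH q) {t : ℝ} (ht : t ∈ Icc (0 : ℝ) 1) (x : Euc d) :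
    ((1 - t) * p x + t * q x) * ((1 - t) * ‖gradient (sqrtFn p) x‖ ^ 2 +
        t * ‖gradient (sqrtFn q) x‖ ^ 2 -
        ‖gradient (sqrtFn fun x => (1 - t) * p x + t * q x) x‖ ^ 2) =
      t * (1 - t) * ‖sqrtFn p x • gradient (sqrtFn q) x - sqrtFn q x • gradient (sqrtFn p) x‖ ^ 2 := by
  have h1 : 0 ≤ 1 - t := by linarith [ht.2]
  have hg := congrArg (fun y => ‖y‖ ^ 2) (gradient_mix hp hq ht x)
  have hwx : sqrtFn (fun x => (1 - t) * p x + t * q x) x ^ 2 = (1 - t) * p x + t * q x :=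
    Real.sq_sqrt (add_nonneg (mul_nonneg h1 (hp.nonneg x)) (mul_nonneg ht.1 (hq.nonneg x)))
  have e1 : p x = sqrtFn p x ^ 2 := congrFun hp.eq_sq x
  have e2 : q x = sqrtFn q x ^ 2 := congrFun hq.eq_sq x
  simp only [norm_smul, mul_pow, norm_add_sq_real, Real.norm_eq_abs, sq_abs, inner_smul_left,
    inner_smul_right, hwx] at hg
  rw [mul_sub, hg, norm_sub_sq_real]
  simp only [norm_smul, mul_pow, Real.norm_eq_abs, sq_abs, inner_smul_left, inner_smul_right]
  rw [real_inner_comm (gradient (sqrtFn p) x) (gradient (sqrtFn q) x)]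
  simp only [conj_trivial]
  rw [e1, e2]
  ring

lemma gradient_le (hp : MemPH p) (hq : MemPH q) {t : ℝ} (ht : t ∈ Icc (0 : ℝ) 1) (x : Euc d) :
    ‖gradient (sqrtFn fun x => (1 - t) * p x + t * q x) x‖ ^ 2 ≤
      (1 - t) * ‖gradient (sqrtFn p) x‖ ^ 2 + t * ‖gradient (sqrtFn q) x‖ ^ 2 := by
  have h1 : 0 ≤ 1 - t := by linarith [ht.2]
  have hm0 : 0 ≤ (1 - t) * p x + t * q x :=
    add_nonneg (mul_nonneg h1 (hp.nonneg x)) (mul_nonneg ht.1 (hq.nonneg x))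
  rcases hm0.eq_or_lt with h0 | h0
  · have : gradient (sqrtFn fun x => (1 - t) * p x + t * q x) x = 0 := by
      have : fderiv ℝ (sqrtFn fun x => (1 - t) * p x + t * q x) x = 0 := by
        apply IsLocalMin.fderiv_eq_zero
        refine Eventually.of_forall fun y => ?_
        have : sqrtFn (fun x => (1 - t) * p x + t * q x) x = 0 := by simp [sqrtFn, ← h0]
        rw [this]; exact Real.sqrt_nonneg _
      simp [gradient, this]
    rw [this, norm_zero, zero_pow two_ne_zero]
    have := ht.1
    positivity
  · have h2 := sq_identity hp hq ht x
    have h3 : 0 ≤ ((1 - t) * p x + t * q x) * ((1 - t) * ‖gradient (sqrtFn p) x‖ ^ 2 +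
        t * ‖gradient (sqrtFn q) x‖ ^ 2 -
        ‖gradient (sqrtFn fun x => (1 - t) * p x + t * q x) x‖ ^ 2) := by
      rw [h2]; have := ht.1; positivity
    have := nonneg_of_mul_nonneg_right h3 h0
    linarith

lemma memPH_mix (hp : MemPH p) (hq : MemPH q) {t : ℝ} (ht : t ∈ Icc (0 : ℝ) 1) :
    MemPH fun x => (1 - t) * p x + t * q x := by
  have h1 : 0 ≤ 1 - t := by linarith [ht.2]
  refine ⟨⟨fun x => ?_, ?_, ?_⟩, ?_, differentiable_mix hp hq ht, ?_⟩
  · exact add_nonneg (mul_nonneg h1 (hp.nonneg x)) (mul_nonneg ht.1 (hq.nonneg x))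
  · exact (hp.1.2.1.const_mul _).add (hq.1.2.1.const_mul _)
  · rw [integral_add (hp.1.2.1.const_mul _) (hq.1.2.1.const_mul _), integral_const_mul,
      integral_const_mul, hp.1.2.2, hq.1.2.2]
    ring
  · refine ((hp.2.1.const_mul (1 - t)).add (hq.2.1.const_mul t)).congr
      (Eventually.of_forall fun x => ?_)
    simp only [Pi.add_apply]; ring
  · refine ((hp.2.2.2.const_mul (1 - t)).add (hq.2.2.2.const_mul t)).mono'
      (measurable_gradient_sq _).aestronglyMeasurable (Eventually.of_forall fun x => ?_)
    rw [Real.norm_of_nonneg (by positivity)]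
    exact gradient_le hp hq ht x

lemma fisher_convex (hp : MemPH p) (hq : MemPH q) {t : ℝ} (ht : t ∈ Icc (0 : ℝ) 1) :
    FisherInfo (fun x => (1 - t) * p x + t * q x) ≤ (1 - t) * FisherInfo p + t * FisherInfo q := by
  unfold FisherInfo
  rw [← integral_const_mul, ← integral_const_mul,
    ← integral_add (hp.2.2.2.const_mul _) (hq.2.2.2.const_mul _)]
  exact integral_mono (memPH_mix hp hq ht).2.2.2
    ((hp.2.2.2.const_mul (1 - t)).add (hq.2.2.2.const_mul t)) (gradient_le hp hq ht)

lemma entropy_convex (hp : MemPH p) (hq : MemPH q) {t : ℝ} (ht : t ∈ Icc (0 : ℝ) 1) :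
    Entropy (fun x => (1 - t) * p x + t * q x) ≤ (1 - t) * Entropy p + t * Entropy q := by
  have h1 : 0 ≤ 1 - t := by linarith [ht.2]
  unfold Entropy
  rw [← integral_const_mul, ← integral_const_mul,
    ← integral_add (hp.integrable_entropy.const_mul _) (hq.integrable_entropy.const_mul _)]
  refine integral_mono (memPH_mix hp hq ht).integrable_entropy
    ((hp.integrable_entropy.const_mul (1 - t)).add (hq.integrable_entropy.const_mul t)) fun x => ?_
  exact Real.convexOn_mul_log.2 (hp.nonneg x) (hq.nonneg x) h1 ht.1 (by ring)

/-- An everywhere differentiable function with a.e. vanishing derivative is constant. -/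
lemma const_of_ae_fderiv_zero (g : Euc d → ℝ) (hg : Differentiable ℝ g)
    (h0 : ∀ᵐ x, fderiv ℝ g x = 0) (y z : Euc d) : g y = g z := by
  have hS : MeasurableSet {x : Euc d | fderiv ℝ g x = 0} :=
    measurable_fderiv ℝ g (measurableSet_singleton 0)
  have hshift : ∀ h : Euc d, ∀ x, g (x + h) = g x := by
    intro h
    have hmm : Measurable fun a : ℝ × Euc d => a.2 + a.1 • h := by fun_prop
    have hae : ∀ᵐ x : Euc d, ∀ᵐ s : ℝ, fderiv ℝ g (x + s • h) = 0 := by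
      have h2 : ∀ᵐ a : ℝ × Euc d, fderiv ℝ g (a.2 + a.1 • h) = 0 := by
        rw [Measure.volume_eq_prod]
        refine (Measure.ae_prod_iff_ae_ae (p := fun a : ℝ × Euc d =>
          fderiv ℝ g (a.2 + a.1 • h) = 0) (hmm hS)).2 ?_
        refine Eventually.of_forall fun s => ?_
        exact (measurePreserving_add_right volume (s • h)).quasiMeasurePreserving.ae h0
      rw [Measure.volume_eq_prod] at h2
      have h3 := (Measure.measurePreserving_swap (μ := (volume : Measure (Euc d)))
        (ν := (volume : Measure ℝ))).quasiMeasurePreserving.ae h2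
      exact Measure.ae_ae_of_ae_prod h3
    have hae2 : (fun x => g (x + h)) =ᵐ[volume] g := by
      filter_upwards [hae] with x hx
      have hd : ∀ s ∈ uIcc (0 : ℝ) 1, HasDerivAt (fun s : ℝ => g (x + s • h))
          (fderiv ℝ g (x + s • h) h) s := by
        intro s _
        have h5 : HasDerivAt (fun s : ℝ => x + s • h) h s := by
          simpa using ((hasDerivAt_id s).smul_const h).const_add x
        exact (hg _).hasFDerivAt.comp_hasDerivAt s h5
      have hz : (fun s : ℝ => fderiv ℝ g (x + s • h) h) =ᵐ[volume] fun _ => 0 := by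
        filter_upwards [hx] with s hs
        simp [hs]
      have hint : Integrable (fun s : ℝ => fderiv ℝ g (x + s • h) h) :=
        (integrable_zero ℝ ℝ volume).congr hz.symm
      have h6 := intervalIntegral.integral_eq_sub_of_hasDerivAt hd hint.intervalIntegrable
      rw [intervalIntegral.integral_congr_ae (g := fun _ => (0 : ℝ))
        (by filter_upwards [hz] with s hs _ using hs)] at h6
      simp at h6
      linarith
    have := (Continuous.ae_eq_iff_eq (μ := (volume : Measure (Euc d)))
      (hg.continuous.comp (continuous_add_const h)) hg.continuous).1 hae2
    exact fun x => congrFun this x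
  have := hshift (z - y) y
  simpa using this.symm

lemma pos_of_locally_bounded (hp : MemPH p)
    (h : ∀ R : ℝ, ∃ ε > (0:ℝ), ∀ᵐ x : Euc d, ‖x‖ ≤ R → ε ≤ p x) (x : Euc d) : 0 < p x := by
  obtain ⟨ε, hε, hae⟩ := h (‖x‖ + 1)
  by_contra hx
  have hx0 : p x < ε := by linarith [not_lt.1 hx]
  have ho : IsOpen {y : Euc d | ‖y‖ < ‖x‖ + 1 ∧ p y < ε} :=
    (isOpen_lt continuous_norm continuous_const).inter
      (isOpen_lt hp.differentiable.continuous continuous_const)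
  have hpos := ho.measure_pos volume ⟨x, by simp, hx0⟩
  refine hpos.ne' (measure_mono_null (fun y hy => ?_) (ae_iff.1 hae))
  simp only [mem_ofPred_eq, Classical.not_imp, not_le]
  exact ⟨hy.1.le, hy.2⟩

lemma eq_of_fisher_eq (hp : MemPH p) (hq : MemPH q) (hpos : ∀ x, 0 < p x) {t : ℝ}
    (ht : t ∈ Ioo (0 : ℝ) 1)
    (he : (1 - t) * FisherInfo p + t * FisherInfo q ≤
      FisherInfo (fun x => (1 - t) * p x + t * q x)) : q = p := by
  have ht' : t ∈ Icc (0 : ℝ) 1 := ⟨ht.1.le, ht.2.le⟩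
  have h1 : 0 < 1 - t := by linarith [ht.2]
  have hi : Integrable fun x => (1 - t) * ‖gradient (sqrtFn p) x‖ ^ 2 +
      t * ‖gradient (sqrtFn q) x‖ ^ 2 := (hp.2.2.2.const_mul (1 - t)).add (hq.2.2.2.const_mul t)
  have hi2 := (memPH_mix hp hq ht').2.2.2
  have hae := (integral_eq_zero_iff_of_nonneg (μ := volume)
    (f := fun x => ((1 - t) * ‖gradient (sqrtFn p) x‖ ^ 2 + t * ‖gradient (sqrtFn q) x‖ ^ 2) -
      ‖gradient (sqrtFn fun x => (1 - t) * p x + t * q x) x‖ ^ 2)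
    (fun x => sub_nonneg.2 (gradient_le hp hq ht' x)) (hi.sub hi2)).1 (by
      apply le_antisymm
      · rw [integral_sub hi hi2, integral_add (hp.2.2.2.const_mul _) (hq.2.2.2.const_mul _),
          integral_const_mul, integral_const_mul]
        exact sub_nonpos.2 he
      · exact integral_nonneg fun x => sub_nonneg.2 (gradient_le hp hq ht' x))
  have hsp : ∀ x, 0 < sqrtFn p x := fun x => Real.sqrt_pos.2 (hpos x)
  have hgd : ∀ x, HasFDerivAt (fun y => sqrtFn q y * (sqrtFn p y)⁻¹)
      (sqrtFn q x • (-(sqrtFn p x ^ 2)⁻¹ • fderiv ℝ (sqrtFn p) x) +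
        (sqrtFn p x)⁻¹ • fderiv ℝ (sqrtFn q) x) x := by
    intro x
    exact (hq.2.2.1 x).hasFDerivAt.mul
      ((hasDerivAt_inv (hsp x).ne').comp_hasFDerivAt x (hp.2.2.1 x).hasFDerivAt)
  have hgz : ∀ᵐ x, fderiv ℝ (fun y => sqrtFn q y * (sqrtFn p y)⁻¹) x = 0 := by
    filter_upwards [hae] with x hx
    have hid := sq_identity hp hq ht' x
    simp only [Pi.zero_apply] at hx
    rw [hx, mul_zero] at hid
    have hn : ‖sqrtFn p x • gradient (sqrtFn q) x - sqrtFn q x • gradient (sqrtFn p) x‖ ^ 2 = 0 := by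
      have := mul_pos ht.1 h1
      rcases mul_eq_zero.1 hid.symm with h | h
      · exact absurd h this.ne'
      · exact h
    have hz := norm_eq_zero.1 (pow_eq_zero_iff (two_ne_zero)|>.1 hn)
    have hz2 := congrArg (InnerProductSpace.toDual ℝ (Euc d)) hz
    simp only [map_sub, map_smul, map_zero, toDual_gradient] at hz2
    rw [(hgd x).fderiv]
    have hs := (hsp x).ne'
    have : sqrtFn q x • (-(sqrtFn p x ^ 2)⁻¹ • fderiv ℝ (sqrtFn p) x) +
        (sqrtFn p x)⁻¹ • fderiv ℝ (sqrtFn q) x = (sqrtFn p x ^ 2)⁻¹ •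
        (sqrtFn p x • fderiv ℝ (sqrtFn q) x - sqrtFn q x • fderiv ℝ (sqrtFn p) x) := by
      ext y
      simp
      field_simp
      ring
    rw [this, hz2, smul_zero]
  have hc := const_of_ae_fderiv_zero _ (fun x => (hgd x).differentiableAt) hgz
  set c := sqrtFn q 0 * (sqrtFn p 0)⁻¹ with hcdef
  have hqc : ∀ x, q x = c ^ 2 * p x := by
    intro x
    have h2 := hc x 0
    simp only [← hcdef] at h2
    have h3 : sqrtFn q x = c * sqrtFn p x := by
      rw [← h2, mul_assoc, inv_mul_cancel₀ (hsp x).ne', mul_one]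
    rw [congrFun hq.eq_sq x, congrFun hp.eq_sq x, h3, mul_pow]
  have hc1 : c ^ 2 = 1 := by
    have h2 := hq.1.2.2
    simp only [hqc] at h2
    rw [integral_const_mul, hp.1.2.2, mul_one] at h2
    exact h2
  funext x
  rw [hqc x, hc1, one_mul]

end PH

/-- The generalized free energy `ℱ^{σ,γ} = F + σ² I + γ H` is convex on `P_H`, and
a minimizer `p*` whose density is locally bounded away from zero
(`1/p* ∈ L^∞_loc`) is unique (up to a.e. equality). -/
theorem free_energy_convex_and_unique_minimizer (d : ℕ)
    (F : Measure (Euc d) → ℝ) (DF : Measure (Euc d) → Euc d → ℝ)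
    (σ γ : ℝ) (hσ : 0 < σ) (hγ : 0 ≤ γ)
    (hC1 : IsLinearDeriv F DF) (hconv : ConvexOnP2 F) :
    (∀ p q : Euc d → ℝ, MemPH p → MemPH q → ∀ t ∈ Icc (0:ℝ) 1,
      FreeEnergy σ γ F (fun x => (1 - t) * p x + t * q x)
        ≤ (1 - t) * FreeEnergy σ γ F p + t * FreeEnergy σ γ F q) ∧
    (∀ pstar : Euc d → ℝ, MemPH pstar →
      (∀ q : Euc d → ℝ, MemPH q → FreeEnergy σ γ F pstar ≤ FreeEnergy σ γ F q) →
      (∀ R : ℝ, ∃ ε > (0:ℝ), ∀ᵐ x : Euc d, ‖x‖ ≤ R → ε ≤ pstar x) →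
      ∀ q : Euc d → ℝ, MemPH q →
        (∀ r : Euc d → ℝ, MemPH r → FreeEnergy σ γ F q ≤ FreeEnergy σ γ F r) →
        q =ᵐ[volume] pstar) := by
  have hcF : ∀ p q : Euc d → ℝ, MemPH p → MemPH q → ∀ t ∈ Icc (0:ℝ) 1,
      F (toMeas fun x => (1 - t) * p x + t * q x)
        ≤ (1 - t) * F (toMeas p) + t * F (toMeas q) := by
    intro p q hp hq t ht
    rw [toMeas_mix hp hq ht]
    exact hconv _ hp.toMeas_mem _ hq.toMeas_mem t ht
  refine ⟨fun p q hp hq t ht => ?_, fun p hp hmin hloc q hq hqmin => ?_⟩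
  · have h1 := hcF p q hp hq t ht
    have h2 := mul_le_mul_of_nonneg_left (fisher_convex hp hq ht) (sq_nonneg σ)
    have h3 := mul_le_mul_of_nonneg_left (entropy_convex hp hq ht) hγ
    unfold FreeEnergy
    linarith
  · have ht : (1 / 2 : ℝ) ∈ Icc (0 : ℝ) 1 := by constructor <;> norm_num
    have h1 := hcF p q hp hq _ ht
    have h3 := mul_le_mul_of_nonneg_left (entropy_convex hp hq ht) hγ
    have h4 := hmin _ (memPH_mix hp hq ht)
    have h5 := hqmin _ hp
    unfold FreeEnergy at h4 h5
    have hσ2 : 0 < σ ^ 2 := by positivity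
    have := eq_of_fisher_eq hp hq (pos_of_locally_bounded hp hloc) (t := 1 / 2)
      (by constructor <;> norm_num) (by
        refine le_of_mul_le_mul_left ?_ hσ2
        linarith)
    rw [this]
end
end

section
/- Let p, q ∈ P_H and α, β > 0. Then the Fisher information satisfies I(αp + βq) ≤ α I(p) + β I(q). If in addition 1/p ∈ L^∞_loc(ℝ^d), then equality holds if and only if p = q (equivalently, the densities p and q are proportional almost everywhere). -/
open MeasureTheory Real Filter Set
open scoped RealInnerProductSpace Topology ENNReal NNReal

noncomputable section

/-- A differentiable function with zero derivative a.e. on the real line is constant. -/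
lemma const_of_deriv_ae_zero (u : ℝ → ℝ) (hu : Differentiable ℝ u)
    (h : ∀ᵐ t : ℝ, deriv u t = 0) (a b : ℝ) : u a = u b := by
  have h1 : volume (u '' {t | deriv u t = 0}) = 0 := by
    refine addHaar_image_eq_zero_of_det_fderivWithin_eq_zero volume
      (f' := fun t => fderiv ℝ u t) (fun t _ => (hu t).hasFDerivAt.hasFDerivWithinAt) ?_
    intro t ht
    have : fderiv ℝ u t = 0 := by
      ext
      simpa using ht
    simp [this]
  have h2 : volume (u '' {t | ¬ deriv u t = 0}) = 0 :=
    addHaar_image_eq_zero_of_differentiableOn_of_addHaar_eq_zero volume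
      hu.differentiableOn (by simpa [ae_iff] using h)
  have h3 : volume (range u) = 0 := by
    refine measure_mono_null ?_ (measure_union_null h1 h2)
    rintro _ ⟨t, rfl⟩
    by_cases ht : deriv u t = 0
    · exact Or.inl ⟨t, ht, rfl⟩
    · exact Or.inr ⟨t, ht, rfl⟩
  have hconn : (range u).OrdConnected := (isPreconnected_range hu.continuous).ordConnected
  have key : ∀ a b, ¬ u a < u b := by
    intro a b hab
    have h4 : Icc (u a) (u b) ⊆ range u := hconn.out ⟨a, rfl⟩ ⟨b, rfl⟩
    have h5 := measure_mono_null h4 h3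
    rw [Real.volume_Icc, ENNReal.ofReal_eq_zero] at h5
    linarith
  exact le_antisymm (not_lt.1 (key b a)) (not_lt.1 (key a b))

lemma const_of_fderiv_ae_zero {d : ℕ} (u : Euc d → ℝ) (hu : Differentiable ℝ u)
    (h : ∀ᵐ x : Euc d, fderiv ℝ u x = 0) (x y : Euc d) : u x = u y := by
  have key : ∀ v : Euc d, (fun x => u (x + v)) = u := by
    intro v
    have h1 : ∀ᵐ z : ℝ × Euc d, fderiv ℝ u (z.2 + z.1 • v) = 0 := by
      have hqm : Measure.QuasiMeasurePreserving (fun z : ℝ × Euc d => z.2 + z.1 • v)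
          (volume.prod volume) volume := by
        refine ⟨by fun_prop, ?_⟩
        refine Measure.AbsolutelyContinuous.mk fun s hs h0 => ?_
        rw [Measure.map_apply (by fun_prop) hs,
          Measure.measure_prod_null ((by fun_prop : Measurable
            (fun z : ℝ × Euc d => z.2 + z.1 • v)) hs)]
        refine Eventually.of_forall fun t => ?_
        have : Prod.mk t ⁻¹' ((fun z : ℝ × Euc d => z.2 + z.1 • v) ⁻¹' s)
            = (fun x : Euc d => x + t • v) ⁻¹' s := rfl
        show volume (Prod.mk t ⁻¹' ((fun z : ℝ × Euc d => z.2 + z.1 • v) ⁻¹' s)) = 0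
        rw [this, measure_preimage_add_right]
        exact h0
      exact hqm.ae h
    have h2 : ∀ᵐ z : Euc d × ℝ, fderiv ℝ u (z.1 + z.2 • v) = 0 :=
      (Measure.measurePreserving_swap (μ := (volume : Measure (Euc d)))
        (ν := (volume : Measure ℝ))).quasiMeasurePreserving.ae h1
    have h3 : ∀ᵐ x : Euc d, ∀ᵐ t : ℝ, fderiv ℝ u (x + t • v) = 0 :=
      Measure.ae_ae_of_ae_prod h2
    have h4 : (fun x => u (x + v)) =ᵐ[volume] u := by
      filter_upwards [h3] with x hx
      have hd : ∀ t : ℝ, HasDerivAt (fun t : ℝ => u (x + t • v))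
          (fderiv ℝ u (x + t • v) v) t := by
        intro t
        have hl : HasDerivAt (fun t : ℝ => x + t • v) v t := by
          simpa using ((hasDerivAt_id t).smul_const v).const_add x
        exact (hu (x + t • v)).hasFDerivAt.comp_hasDerivAt t hl
      have := const_of_deriv_ae_zero (fun t : ℝ => u (x + t • v))
        (fun t => (hd t).differentiableAt)
        (by filter_upwards [hx] with t ht; rw [(hd t).deriv, ht]; rfl) 1 0
      simpa using this
    have hc := hu.continuous
    exact (Continuous.ae_eq_iff_eq volume (by fun_prop) hc).1 h4
  have := congrFun (key (y - x)) x
  simpa using this.symm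

lemma gradient_zero_of_zero {d : ℕ} (f : Euc d → ℝ) (h0 : ∀ x, 0 ≤ f x) (x : Euc d)
    (hx : f x = 0) : gradient f x = 0 := by
  have : IsLocalMin f x := Eventually.of_forall fun y => by rw [hx]; exact h0 y
  simp [gradient, this.fderiv_eq_zero]

lemma grad_identity {d : ℕ} (f g : Euc d → ℝ) (α β : ℝ) (hα : 0 < α) (hβ : 0 < β)
    (hf : Differentiable ℝ f) (hg : Differentiable ℝ g) (f0 : ∀ x, 0 ≤ f x)
    (g0 : ∀ x, 0 ≤ g x) (x : Euc d) :
    ‖gradient (fun x => √(α * f x ^ 2 + β * g x ^ 2)) x‖ ^ 2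
      = α * ‖gradient f x‖ ^ 2 + β * ‖gradient g x‖ ^ 2
        - α * β * ‖f x • gradient g x - g x • gradient f x‖ ^ 2
          / (α * f x ^ 2 + β * g x ^ 2) := by
  by_cases hN : α * f x ^ 2 + β * g x ^ 2 = 0
  · have hfx : f x = 0 := by
      have : 0 ≤ β * g x ^ 2 := by positivity
      have h1 : 0 ≤ α * f x ^ 2 := by positivity
      have : α * f x ^ 2 = 0 := by linarith
      simpa [hα.ne'] using this
    have hgx : g x = 0 := by simpa [hfx, hβ.ne'] using hN
    rw [gradient_zero_of_zero _ (fun _ => Real.sqrt_nonneg _) x (by simp [hN]),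
      gradient_zero_of_zero f f0 x hfx, gradient_zero_of_zero g g0 x hgx]
    simp
  · have hNp : 0 < α * f x ^ 2 + β * g x ^ 2 := lt_of_le_of_ne (by positivity) (Ne.symm hN)
    have hF := (hf x).hasFDerivAt
    have hG := (hg x).hasFDerivAt
    have hH := (((hF.pow 2).const_mul α).add ((hG.pow 2).const_mul β)).sqrt hN
    have hgr : gradient (fun x => √(α * f x ^ 2 + β * g x ^ 2)) x
        = (√(α * f x ^ 2 + β * g x ^ 2))⁻¹ •
          ((α * f x) • gradient f x + (β * g x) • gradient g x) := by
      have h1 : fderiv ℝ (fun x => √(α * f x ^ 2 + β * g x ^ 2)) x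
        = (√(α * f x ^ 2 + β * g x ^ 2))⁻¹ •
          ((α * f x) • fderiv ℝ f x + (β * g x) • fderiv ℝ g x) := by
        refine hH.fderiv.trans ?_
        have hs : √(α * f x ^ 2 + β * g x ^ 2) ≠ 0 := (Real.sqrt_pos.2 hNp).ne'
        ext v
        simp
        field_simp
      simp only [gradient, h1]
      simp
    rw [hgr, norm_smul, mul_pow, norm_inv, inv_pow, Real.norm_eq_abs, sq_abs,
      Real.sq_sqrt hNp.le, norm_add_sq_real, norm_sub_sq_real]
    simp only [norm_smul, mul_pow, Real.norm_eq_abs, sq_abs, inner_smul_left, inner_smul_right,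
      abs_mul]
    rw [real_inner_comm (gradient f x) (gradient g x)]
    simp
    field_simp
    ring

theorem fisher_info_convex {d : ℕ} (p q : Euc d → ℝ) (α β : ℝ)
    (hα : 0 < α) (hβ : 0 < β) (hp : MemPH p) (hq : MemPH q) :
    FisherInfo (fun x => α * p x + β * q x) ≤ α * FisherInfo p + β * FisherInfo q ∧
    ((∀ R : ℝ, ∃ ε > (0:ℝ), ∀ᵐ x : Euc d, ‖x‖ ≤ R → ε ≤ p x) →
      (FisherInfo (fun x => α * p x + β * q x) = α * FisherInfo p + β * FisherInfo q ↔
        p =ᵐ[volume] q)) := by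
  obtain ⟨⟨p0, pi, p1⟩, -, hf, If⟩ := hp
  obtain ⟨⟨q0, qi, q1⟩, -, hg, Ig⟩ := hq
  have hpf : ∀ x, p x = sqrtFn p x ^ 2 := fun x => (Real.sq_sqrt (p0 x)).symm
  have hqg : ∀ x, q x = sqrtFn q x ^ 2 := fun x => (Real.sq_sqrt (q0 x)).symm
  have f0 : ∀ x, 0 ≤ sqrtFn p x := fun x => Real.sqrt_nonneg _
  have g0 : ∀ x, 0 ≤ sqrtFn q x := fun x => Real.sqrt_nonneg _
  have hh : sqrtFn (fun x => α * p x + β * q x)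
      = fun x => √(α * sqrtFn p x ^ 2 + β * sqrtFn q x ^ 2) := by
    funext x
    rw [← hpf, ← hqg]
    rfl
  unfold FisherInfo
  rw [hh]
  set f := sqrtFn p
  set g := sqrtFn q
  have hid := grad_identity f g α β hα hβ hf hg f0 g0
  have hle : ∀ x, ‖gradient (fun x => √(α * f x ^ 2 + β * g x ^ 2)) x‖ ^ 2
      ≤ α * ‖gradient f x‖ ^ 2 + β * ‖gradient g x‖ ^ 2 := by
    intro x
    rw [hid x]
    have : 0 ≤ α * β * ‖f x • gradient g x - g x • gradient f x‖ ^ 2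
          / (α * f x ^ 2 + β * g x ^ 2) := by positivity
    linarith
  have IB : Integrable fun x => α * ‖gradient f x‖ ^ 2 + β * ‖gradient g x‖ ^ 2 :=
    (If.const_mul α).add (Ig.const_mul β)
  have hIB : α * (∫ x, ‖gradient f x‖ ^ 2) + β * (∫ x, ‖gradient g x‖ ^ 2)
      = ∫ x, (α * ‖gradient f x‖ ^ 2 + β * ‖gradient g x‖ ^ 2) := by
    rw [integral_add (If.const_mul α) (Ig.const_mul β), integral_const_mul, integral_const_mul]
  have hmeas : Measurable
      fun x => ‖gradient (fun x => √(α * f x ^ 2 + β * g x ^ 2)) x‖ ^ 2 := by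
    have : Measurable fun x => ‖fderiv ℝ (fun x => √(α * f x ^ 2 + β * g x ^ 2)) x‖ ^ 2 :=
      (measurable_fderiv ℝ _).norm.pow_const 2
    simpa [gradient] using this
  have IA : Integrable
      fun x => ‖gradient (fun x => √(α * f x ^ 2 + β * g x ^ 2)) x‖ ^ 2 := by
    refine IB.mono' hmeas.aestronglyMeasurable (Eventually.of_forall fun x => ?_)
    rw [Real.norm_eq_abs, abs_of_nonneg (by positivity)]
    exact hle x
  rw [hIB]
  refine ⟨integral_mono IA IB hle, fun hloc => ?_⟩
  have hpc : Continuous p := by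
    have : p = fun x => f x ^ 2 := funext hpf
    rw [this]
    exact hf.continuous.pow 2
  have hqc : Continuous q := by
    have : q = fun x => g x ^ 2 := funext hqg
    rw [this]
    exact hg.continuous.pow 2
  have fpos : ∀ x, 0 < f x := by
    intro x
    obtain ⟨ε, hε, hae⟩ := hloc (‖x‖ + 1)
    by_contra hx
    have hfx : f x = 0 := le_antisymm (not_lt.1 hx) (f0 x)
    have hpx : p x = 0 := by rw [hpf, hfx]; simp
    have ho : IsOpen ({y | p y < ε} ∩ {y : Euc d | ‖y‖ < ‖x‖ + 1}) :=
      (isOpen_lt hpc continuous_const).inter (isOpen_lt continuous_norm continuous_const)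
    have hpos := ho.measure_pos volume ⟨x, by simp [hpx, hε], by simp⟩
    refine hpos.ne' (measure_mono_null ?_ (ae_iff.1 hae))
    rintro y ⟨hy1, hy2⟩
    simp only [mem_ofPred_eq] at hy1 hy2 ⊢
    intro hc
    linarith [hc hy2.le]
  constructor
  · intro heq
    have hae := (integral_eq_iff_of_ae_le IA IB (Eventually.of_forall hle)).1 heq
    have hdiv : ∀ x, HasFDerivAt (fun x => g x / f x)
        ((f x ^ 2)⁻¹ • (f x • fderiv ℝ g x - g x • fderiv ℝ f x)) x := by
      intro x
      have hx := (fpos x).ne'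
      have h1 := (hg x).hasFDerivAt.mul
        ((hasDerivAt_inv hx).comp_hasFDerivAt x (hf x).hasFDerivAt)
      have h2 : HasFDerivAt (fun x => g x / f x) _ x := h1
      refine h2.congr_fderiv ?_
      ext v
      simp
      field_simp
      ring
    have hd : Differentiable ℝ (fun x => g x / f x) := fun x => (hdiv x).differentiableAt
    have hz : ∀ᵐ x : Euc d, fderiv ℝ (fun x => g x / f x) x = 0 := by
      filter_upwards [hae] with x hx
      rw [hid x] at hx
      have hN : 0 < α * f x ^ 2 + β * g x ^ 2 := by
        have := fpos x
        positivity
      have h1 : α * β * ‖f x • gradient g x - g x • gradient f x‖ ^ 2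
          / (α * f x ^ 2 + β * g x ^ 2) = 0 := by linarith
      have h2 : f x • gradient g x - g x • gradient f x = 0 := by
        simpa [hN.ne', hα.ne', hβ.ne'] using h1
      have h3 : f x • fderiv ℝ g x - g x • fderiv ℝ f x = 0 := by
        have := congrArg (InnerProductSpace.toDual ℝ (Euc d)) h2
        simpa [gradient] using this
      rw [(hdiv x).fderiv, h3]
      simp
    have hc := const_of_fderiv_ae_zero _ hd hz
    set c := g 0 / f 0 with hcdef
    have hgc : ∀ x, q x = c ^ 2 * p x := by
      intro x
      have h1 : g x / f x = c := hc x 0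
      have h2 : g x = c * f x := by rw [← h1]; field_simp [(fpos x).ne']
      rw [hqg, hpf, h2]
      ring
    have hc1 : c ^ 2 = 1 := by
      have : ∫ x, q x = c ^ 2 * ∫ x, p x := by
        rw [← integral_const_mul]
        exact integral_congr_ae (Eventually.of_forall hgc)
      rw [q1, p1] at this
      linarith
    exact Eventually.of_forall fun x => by rw [hgc x, hc1, one_mul]
  · intro hpq
    have hpq' : p = q := (Continuous.ae_eq_iff_eq volume hpc hqc).1 hpq
    have hfg : f = g := by
      show sqrtFn p = sqrtFn q
      rw [hpq']
    refine integral_congr_ae (Eventually.of_forall fun x => ?_)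
    show _ = _
    simp only
    rw [hid x, hfg]
    simp
end
end
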